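/- arXiv:1906.01151 — 6 statements merged into one kernel-verified Lean document; each statement's English description precedes it below -/
import Mathlib

section
/- Let (q_n)_{n≥1} be an increasing sequence of positive integers satisfying Property D. Then for every α ∈ (0,1), the sequence (q_n) is α-separated: there exists m₀ ∈ ℕ such that for all integers m, n with m₀ ≤ m < n, whenever s, t ≥ 1 are positive integers with 1 ≤ |s q_m − t q_n| < q_m^α, then s > m^{12}. -/
/-- The divided difference quotient of an entire function is entire. -/
theorem differentiable_dslope {f : ℂ → ℂ} (hf : Differentiable ℂ f) (a : ℂ) :
    Differentiable ℂ (dslope f a) := by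
  rw [← differentiableOn_univ] at hf ⊢
  exact (Complex.differentiableOn_dslope Filter.univ_mem).2 hf

theorem differentiable_iterate_dslope {f : ℂ → ℂ} (hf : Differentiable ℂ f) (a : ℂ) (k : ℕ) :
    Differentiable ℂ ((Function.swap dslope a)^[k] f) := by
  induction k with
  | zero => exact hf
  | succ k ih =>
    rw [Function.iterate_succ_apply']
    exact differentiable_dslope ih a

theorem dslope_sub_mul_add_const {F G : ℂ → ℂ} (hG : Differentiable ℂ G) (a c s : ℂ)
    (h : ∀ z, F z = (z - a) * G z + c) (z : ℂ) :
    dslope F s z = (z - a) * dslope G s z + G s := by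
  rcases eq_or_ne z s with rfl | hz
  · have hF : F = fun z => (z - a) * G z + c := funext h
    rw [dslope_same, dslope_same, hF]
    have h1 : HasDerivAt (fun z => (z - a) * G z + c) (1 * G z + (z - a) * deriv G z) z :=
      (((hasDerivAt_id z).sub_const a).mul (hG z).hasDerivAt).add_const c
    rw [h1.deriv]
    ring
  · have hz' : z - s ≠ 0 := sub_ne_zero.2 hz
    rw [dslope_of_ne _ hz, dslope_of_ne _ hz, slope_def_field, slope_def_field, h z, h s]
    field_simp
    ring

theorem iterate_dslope_succ_eq {f : ℂ → ℂ} (hf : Differentiable ℂ f) (a s : ℂ) (k : ℕ) (z : ℂ) :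
    (Function.swap dslope s)^[k + 1] f z =
      (z - a) * (Function.swap dslope s)^[k + 1] (dslope f a) z +
        (Function.swap dslope s)^[k] (dslope f a) s := by
  induction k generalizing z with
  | zero =>
    refine dslope_sub_mul_add_const (differentiable_dslope hf a) a (f a) s (fun w => ?_) z
    have := sub_smul_dslope f a w
    rw [smul_eq_mul] at this
    rw [this]
    ring
  | succ k ih =>
    rw [Function.iterate_succ_apply' _ (k + 1), Function.iterate_succ_apply' _ (k + 1)]
    exact dslope_sub_mul_add_const
      (differentiable_iterate_dslope (differentiable_dslope hf a) s (k + 1)) a _ s ih z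

/-- Taylor coefficients bounded by `μ` stay so after dividing out a point at distance at
least `2`. -/
theorem norm_iterate_dslope_dslope_le {f : ℂ → ℂ} (hf : Differentiable ℂ f) {a s : ℂ} {μ : ℝ}
    (has : 2 ≤ ‖s - a‖) (ha : ‖f a‖ ≤ μ) {K : ℕ}
    (hs : ∀ k < K, ‖(Function.swap dslope s)^[k] f s‖ ≤ μ) :
    ∀ k < K, ‖(Function.swap dslope s)^[k] (dslope f a) s‖ ≤ μ := by
  have key : ∀ x y w : ℂ, x = (s - a) * y + w → ‖x‖ ≤ μ → ‖w‖ ≤ μ → ‖y‖ ≤ μ := by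
    intro x y w h hx hw
    have h1 : ‖s - a‖ * ‖y‖ ≤ μ + μ := by
      rw [← norm_mul, show (s - a) * y = x - w by rw [h]; ring]
      exact (norm_sub_le _ _).trans (add_le_add hx hw)
    nlinarith [norm_nonneg y]
  intro k
  induction k with
  | zero =>
    intro hk
    refine key (f s) _ (f a) ?_ (hs 0 hk) ha
    have := sub_smul_dslope f a s
    rw [smul_eq_mul] at this
    simp only [Function.iterate_zero, id]
    rw [this]
    ring
  | succ k ih =>
    intro hk
    exact key _ _ _ (iterate_dslope_succ_eq hf a s k s) (hs _ hk) (ih (by omega))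

/-- Approximate division of an entire function by the polynomial vanishing at a list of nodes
which are pairwise equal or at distance at least `2`. -/
theorem exists_approx_division (l : List ℂ) :
    ∀ f : ℂ → ℂ, Differentiable ℂ f → ∀ μ : ℝ, 0 ≤ μ →
      (∀ a ∈ l, ∀ b ∈ l, a ≠ b → 2 ≤ ‖a - b‖) →
      (∀ s ∈ l, ∀ k < l.count s, ‖(Function.swap dslope s)^[k] f s‖ ≤ μ) →
      ∃ h : ℂ → ℂ, Differentiable ℂ h ∧ ∀ (z : ℂ) (ρ : ℝ), 1 ≤ ρ → (∀ a ∈ l, ‖z - a‖ ≤ ρ) →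
        ‖f z - h z * (l.map (fun a => z - a)).prod‖ ≤ μ * l.length * ρ ^ l.length := by
  induction l with
  | nil =>
    intro f hf μ _ _ _
    exact ⟨f, hf, fun z ρ _ _ => by simp⟩
  | cons a l ih =>
    intro f hf μ hμ hsep hbd
    have ha : ‖f a‖ ≤ μ := hbd a (by simp) 0 (by simp)
    obtain ⟨h, hh, hb⟩ := ih (dslope f a) (differentiable_dslope hf a) μ hμ
      (fun x hx y hy => hsep x (by simp [hx]) y (by simp [hy])) (by
        intro s hs k hk
        rcases eq_or_ne s a with rfl | hne
        · have := hbd s (by simp) (k + 1) (by simpa using hk)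
          rwa [Function.iterate_succ_apply] at this
        · refine norm_iterate_dslope_dslope_le hf (hsep s (by simp [hs]) a (by simp) hne) ha
            (K := l.count s) (fun k hk => hbd s (by simp [hs]) k ?_) k hk
          rwa [List.count_cons_of_ne (Ne.symm hne)])
    refine ⟨h, hh, fun z ρ hρ hz => ?_⟩
    have h1 := hb z ρ hρ (fun x hx => hz x (by simp [hx]))
    have h2 : f z = f a + (z - a) * dslope f a z := by
      have := sub_smul_dslope f a z
      rw [smul_eq_mul] at this
      rw [this]
      ring
    have h3 : f z - h z * ((a :: l).map (fun a => z - a)).prod =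
        f a + (z - a) * (dslope f a z - h z * (l.map (fun a => z - a)).prod) := by
      rw [h2, List.map_cons, List.prod_cons]
      ring
    rw [h3, List.length_cons]
    refine (norm_add_le _ _).trans ?_
    rw [norm_mul]
    have h4 : ‖z - a‖ * ‖dslope f a z - h z * (l.map (fun a => z - a)).prod‖ ≤
        ρ * (μ * l.length * ρ ^ l.length) :=
      mul_le_mul (hz a (by simp)) h1 (norm_nonneg _) (by linarith)
    have h5 : μ ≤ μ * ρ ^ (l.length + 1) := le_mul_of_one_le_right hμ (one_le_pow₀ hρ)
    push_cast
    calc _ ≤ μ * ρ ^ (l.length + 1) + ρ * (μ * l.length * ρ ^ l.length) :=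
          add_le_add (ha.trans h5) h4
      _ = _ := by ring

theorem list_prod_norm_le (l : List ℂ) (z : ℂ) (c : ℝ) (h : ∀ a ∈ l, ‖z - a‖ ≤ c) :
    ‖(l.map (fun a => z - a)).prod‖ ≤ c ^ l.length := by
  induction l with
  | nil => simp
  | cons a l ih =>
    have h0 := h a (by simp)
    rw [List.map_cons, List.prod_cons, norm_mul, List.length_cons, pow_succ']
    exact mul_le_mul h0 (ih fun x hx => h x (by simp [hx])) (norm_nonneg _)
      ((norm_nonneg _).trans h0)

theorem le_list_prod_norm (l : List ℂ) (z : ℂ) (c : ℝ) (hc : 0 ≤ c) (h : ∀ a ∈ l, c ≤ ‖z - a‖) :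
    c ^ l.length ≤ ‖(l.map (fun a => z - a)).prod‖ := by
  induction l with
  | nil => simp
  | cons a l ih =>
    have h0 := h a (by simp)
    rw [List.map_cons, List.prod_cons, norm_mul, List.length_cons, pow_succ']
    exact mul_le_mul h0 (ih fun x hx => h x (by simp [hx])) (by positivity) (norm_nonneg _)

/-- A Schwarz lemma for entire functions which almost vanish at the nodes. -/
theorem norm_le_of_small_taylor_coeffs {f : ℂ → ℂ} (hf : Differentiable ℂ f) (l : List ℂ)
    {μ M r : ℝ} (hμ : 0 ≤ μ) (hM : 0 ≤ M) (hr : 1 ≤ r)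
    (hsep : ∀ a ∈ l, ∀ b ∈ l, a ≠ b → 2 ≤ ‖a - b‖)
    (hl : ∀ a ∈ l, ‖a‖ ≤ r)
    (hbd : ∀ s ∈ l, ∀ k < l.count s, ‖(Function.swap dslope s)^[k] f s‖ ≤ μ)
    (hfM : ∀ z : ℂ, ‖z‖ = 9 * r → ‖f z‖ ≤ M) {z : ℂ} (hz : ‖z‖ ≤ r) :
    ‖f z‖ ≤ 2 * (μ * l.length * (10 * r) ^ l.length) + M * (1 / 4) ^ l.length := by
  obtain ⟨h, hh, hb⟩ := exists_approx_division l f hf μ hμ hsep hbd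
  set N := l.length
  set e := μ * N * (10 * r) ^ N with he
  have he0 : 0 ≤ e := by positivity
  have hbound : ∀ w : ℂ, ‖w‖ ≤ 9 * r → ‖f w - h w * (l.map (fun a => w - a)).prod‖ ≤ e := by
    intro w hw
    refine hb w (10 * r) (by linarith) fun a ha => (norm_sub_le _ _).trans ?_
    linarith [hl a ha]
  have hcirc : ∀ w ∈ frontier (Metric.ball (0 : ℂ) (9 * r)), ‖h w‖ ≤ (M + e) / (8 * r) ^ N := by
    intro w hw
    rw [frontier_ball _ (by linarith)] at hw
    have hw' : ‖w‖ = 9 * r := by simpa using hw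
    rw [le_div_iff₀ (by positivity)]
    have h1 : (8 * r) ^ N ≤ ‖(l.map (fun a => w - a)).prod‖ := by
      refine le_list_prod_norm l w _ (by linarith) fun a ha => ?_
      have := norm_sub_norm_le w a
      linarith [hl a ha]
    calc ‖h w‖ * (8 * r) ^ N ≤ ‖h w‖ * ‖(l.map (fun a => w - a)).prod‖ :=
          mul_le_mul_of_nonneg_left h1 (norm_nonneg _)
      _ = ‖f w - (f w - h w * (l.map (fun a => w - a)).prod)‖ := by
          rw [← norm_mul]
          congr 1
          ring
      _ ≤ M + e := (norm_sub_le _ _).trans (add_le_add (hfM w hw') (hbound w hw'.le))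
  have hhz : ‖h z‖ ≤ (M + e) / (8 * r) ^ N := by
    refine Complex.norm_le_of_forall_mem_frontier_norm_le Metric.isBounded_ball
      hh.diffContOnCl hcirc (subset_closure ?_)
    simp only [Metric.mem_ball, dist_zero_right]
    linarith
  have hp : ‖(l.map (fun a => z - a)).prod‖ ≤ (2 * r) ^ N := by
    refine list_prod_norm_le l z _ fun a ha => (norm_sub_le _ _).trans ?_
    linarith [hl a ha]
  have h2 : ‖h z * (l.map (fun a => z - a)).prod‖ ≤ (M + e) * (1 / 4) ^ N := by
    rw [norm_mul]
    calc _ ≤ (M + e) / (8 * r) ^ N * (2 * r) ^ N :=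
          mul_le_mul hhz hp (norm_nonneg _) (by positivity)
      _ = (M + e) * ((2 * r) / (8 * r)) ^ N := by rw [div_pow]; ring
      _ = _ := by
        congr 2
        field_simp
        norm_num
  have h3 := hbound z (by linarith)
  have h4 : (1 / 4 : ℝ) ^ N ≤ 1 := pow_le_one₀ (by norm_num) (by norm_num)
  calc ‖f z‖ = ‖(f z - h z * (l.map (fun a => z - a)).prod) + h z * (l.map (fun a => z - a)).prod‖ := by
        congr 1
        ring
    _ ≤ e + (M + e) * (1 / 4) ^ N := (norm_add_le _ _).trans (add_le_add h3 h2)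
    _ ≤ _ := by nlinarith

/-- The iterated divided differences at one point are the Taylor coefficients. -/
theorem iterate_dslope_eq_iteratedDeriv {f : ℂ → ℂ} (hf : Differentiable ℂ f) (s : ℂ) (k : ℕ) :
    (Function.swap dslope s)^[k] f s = iteratedDeriv k f s / k.factorial := by
  have hp := (hf.analyticAt s).hasFPowerSeriesAt
  have h := HasFPowerSeriesAt.has_fpower_series_iterate_dslope_fslope k hp
  rw [← h.coeff_zero 1, ← FormalMultilinearSeries.coeff,
    FormalMultilinearSeries.coeff_iterate_fslope, zero_add,
    FormalMultilinearSeries.coeff_ofScalars]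

theorem iterate_dslope_sum_exp {ι : Type*} (I : Finset ι) (c w : ι → ℂ) (s : ℂ) (k : ℕ) :
    (Function.swap dslope s)^[k] (fun z => ∑ i ∈ I, c i * Complex.exp (w i * z)) s =
      ∑ i ∈ I, c i * Complex.exp (w i * s) * (w i ^ k / k.factorial) := by
  rw [iterate_dslope_eq_iteratedDeriv (by fun_prop), iteratedDeriv_fun_sum (by fun_prop),
    Finset.sum_div]
  refine Finset.sum_congr rfl fun i _ => ?_
  rw [iteratedDeriv_const_mul_field, iteratedDeriv_cexp_const_mul]
  ring

/-- The field obtained from a subfield `K` of the reals by adjoining a square root. -/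
def adjoinSquareRoot (K : Subfield ℝ) (r : ℝ) (hr : r ^ 2 ∈ K) : Subfield ℝ where
  carrier := {x | ∃ y ∈ K, ∃ z ∈ K, x = y + r * z}
  mul_mem' := by
    rintro _ _ ⟨y, hy, z, hz, rfl⟩ ⟨y', hy', z', hz', rfl⟩
    exact ⟨y * y' + r ^ 2 * (z * z'),
      K.add_mem (K.mul_mem hy hy') (K.mul_mem hr (K.mul_mem hz hz')),
      y * z' + z * y', K.add_mem (K.mul_mem hy hz') (K.mul_mem hz hy'), by ring⟩
  one_mem' := ⟨1, K.one_mem, 0, K.zero_mem, by ring⟩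
  add_mem' := by
    rintro _ _ ⟨y, hy, z, hz, rfl⟩ ⟨y', hy', z', hz', rfl⟩
    exact ⟨y + y', K.add_mem hy hy', z + z', K.add_mem hz hz', by ring⟩
  zero_mem' := ⟨0, K.zero_mem, 0, K.zero_mem, by ring⟩
  neg_mem' := by
    rintro _ ⟨y, hy, z, hz, rfl⟩
    exact ⟨-y, K.neg_mem hy, -z, K.neg_mem hz, by ring⟩
  inv_mem' := by
    rintro _ ⟨y, hy, z, hz, rfl⟩
    by_cases h : y - r * z = 0
    · refine ⟨(y + y)⁻¹, K.inv_mem (K.add_mem hy hy), 0, K.zero_mem, ?_⟩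
      rw [← sub_eq_zero.1 h]
      ring
    by_cases h' : y + r * z = 0
    · exact ⟨0, K.zero_mem, 0, K.zero_mem, by rw [h']; simp⟩
    · have hd : y ^ 2 - r ^ 2 * z ^ 2 ∈ K :=
        K.sub_mem (pow_mem hy 2) (K.mul_mem hr (pow_mem hz 2))
      have hne : y ^ 2 - r ^ 2 * z ^ 2 ≠ 0 := by
        rw [show y ^ 2 - r ^ 2 * z ^ 2 = (y + r * z) * (y - r * z) by ring]
        exact mul_ne_zero h' h
      refine ⟨y * (y ^ 2 - r ^ 2 * z ^ 2)⁻¹, K.mul_mem hy (K.inv_mem hd),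
        -z * (y ^ 2 - r ^ 2 * z ^ 2)⁻¹, K.mul_mem (K.neg_mem hz) (K.inv_mem hd), ?_⟩
      field_simp
      ring

/-- The square roots of rationals in a multiquadratic field are the obvious ones. -/
theorem exists_multiquadratic_field (n : ℕ) : ∀ r : Fin n → ℝ, (∀ i, ∃ q : ℚ, r i ^ 2 = q) →
    ∃ K : Subfield ℝ, (∀ i, r i ∈ K) ∧ ∀ x ∈ K, (∃ q : ℚ, x ^ 2 = q) →
      ∃ (I : Finset (Fin n)) (q : ℚ), x * ∏ i ∈ I, r i = q := by
  induction n with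
  | zero =>
    intro r _
    refine ⟨(algebraMap ℚ ℝ).fieldRange, fun i => i.elim0, ?_⟩
    rintro x ⟨q, rfl⟩ _
    exact ⟨∅, q, by simp⟩
  | succ n ih =>
    intro r hr
    obtain ⟨K, hK, hsq⟩ := ih (fun i => r i.succ) fun i => hr i.succ
    have hlift : ∀ x ∈ K, (∃ q : ℚ, x ^ 2 = q) →
        ∃ (I : Finset (Fin n)) (q : ℚ), x * ∏ i ∈ I.map (Fin.succEmb n), r i = q := by
      intro x hx hq
      obtain ⟨I, q, h⟩ := hsq x hx hq
      exact ⟨I, q, by simpa using h⟩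
    by_cases h0 : r 0 ∈ K
    · refine ⟨K, Fin.cases h0 hK, fun x hx hq => ?_⟩
      obtain ⟨I, q, h⟩ := hlift x hx hq
      exact ⟨_, q, h⟩
    · obtain ⟨q0, hq0⟩ := hr 0
      have hr0 : r 0 ^ 2 ∈ K := by rw [hq0]; exact SubfieldClass.ratCast_mem K q0
      refine ⟨adjoinSquareRoot K (r 0) hr0, fun i => ?_, ?_⟩
      · refine Fin.cases ?_ (fun i => ?_) i
        · exact ⟨0, K.zero_mem, 1, K.one_mem, by ring⟩
        · exact ⟨r i.succ, hK i, 0, K.zero_mem, by ring⟩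
      · rintro x ⟨y, hy, z, hz, rfl⟩ ⟨q, hq⟩
        by_cases hz0 : z = 0
        · subst hz0
          rw [mul_zero, add_zero] at hq ⊢
          obtain ⟨I, q, h⟩ := hlift y hy ⟨q, hq⟩
          exact ⟨_, q, h⟩
        by_cases hy0 : y = 0
        · subst hy0
          rw [zero_add] at hq ⊢
          obtain ⟨I, q', h⟩ := hlift (r 0 * (r 0 * z))
            (by rw [← mul_assoc, ← pow_two]; exact K.mul_mem hr0 hz)
            ⟨q0 * q, by rw [mul_pow, hq, hq0]; push_cast; ring⟩
          refine ⟨insert 0 (I.map (Fin.succEmb n)), q', ?_⟩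
          rw [Finset.prod_insert (by simp), ← h]
          ring
        · exfalso
          apply h0
          have h1 : r 0 = (q - y ^ 2 - r 0 ^ 2 * z ^ 2) * (2 * y * z)⁻¹ := by
            rw [← hq]
            field_simp
            ring
          rw [h1]
          refine K.mul_mem (K.sub_mem (K.sub_mem (SubfieldClass.ratCast_mem K q) (pow_mem hy 2))
            (K.mul_mem hr0 (pow_mem hz 2))) (K.inv_mem (K.mul_mem (K.mul_mem ?_ hy) hz))
          exact_mod_cast SubfieldClass.ratCast_mem K 2

theorem sum_fin_two_succ {n : ℕ} (r : Fin (n + 1) → ℝ) (c : (Fin (n + 1) → Fin 2) → ℤ) :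
    ∑ e, (c e : ℝ) * ∏ i, r i ^ (e i : ℕ) =
      (∑ e : Fin n → Fin 2, (c (Fin.cons 0 e) : ℝ) * ∏ i, r i.succ ^ (e i : ℕ)) +
        r 0 * ∑ e : Fin n → Fin 2, (c (Fin.cons 1 e) : ℝ) * ∏ i, r i.succ ^ (e i : ℕ) := by
  rw [← (Fin.consEquiv fun _ => Fin 2).sum_comp, Fintype.sum_prod_type, Fin.sum_univ_two,
    Finset.mul_sum]
  congr 1
  · refine Finset.sum_congr rfl fun e _ => ?_
    simp [Fin.consEquiv, Fin.prod_univ_succ]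
  · refine Finset.sum_congr rfl fun e _ => ?_
    simp [Fin.consEquiv, Fin.prod_univ_succ]
    ring

/-- Square roots of integers that are independent modulo squares are linearly independent. -/
theorem multiquadratic_independent (n : ℕ) : ∀ (a : Fin n → ℕ) (r : Fin n → ℝ),
    (∀ i, r i ^ 2 = a i) → (∀ I : Finset (Fin n), I.Nonempty → ¬ IsSquare (∏ i ∈ I, a i)) →
    ∀ c : (Fin n → Fin 2) → ℤ, ∑ e, (c e : ℝ) * ∏ i, r i ^ (e i : ℕ) = 0 → ∀ e, c e = 0 := by
  induction n with
  | zero =>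
    intro a r _ _ c h e
    rw [Fintype.sum_subsingleton _ e, Fin.prod_univ_zero, mul_one] at h
    exact_mod_cast h
  | succ n ih =>
    intro a r hr hind c h
    obtain ⟨K, hK, hsq⟩ := exists_multiquadratic_field n (fun i => r i.succ)
      fun i => ⟨a i.succ, by rw [hr]; simp⟩
    have hmem : ∀ c : (Fin n → Fin 2) → ℤ,
        ∑ e : Fin n → Fin 2, (c e : ℝ) * ∏ i, r i.succ ^ (e i : ℕ) ∈ K := fun c =>
      K.sum_mem fun e _ => K.mul_mem (intCast_mem K _)
        (K.prod_mem fun i _ => pow_mem (hK i) _)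
    have h0 : r 0 ∉ K := by
      intro h0
      obtain ⟨I, q, hq⟩ := hsq (r 0) h0 ⟨a 0, by rw [hr]; simp⟩
      apply hind (insert 0 (I.map (Fin.succEmb n))) (by simp)
      rw [Finset.prod_insert (by simp)]
      rw [← Rat.isSquare_natCast_iff]
      refine ⟨q, ?_⟩
      have : ((a 0 * ∏ i ∈ I.map (Fin.succEmb n), a i : ℕ) : ℝ) = (q : ℝ) * q := by
        rw [← hq]
        push_cast
        simp only [Finset.prod_map, Fin.coe_succEmb, ← hr, Finset.prod_pow]
        ring
      exact_mod_cast this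
    have hind' : ∀ I : Finset (Fin n), I.Nonempty → ¬ IsSquare (∏ i ∈ I, a i.succ) := by
      intro I hI
      have := hind (I.map (Fin.succEmb n)) (by simpa using hI)
      simpa using this
    rw [sum_fin_two_succ] at h
    have hz : ∑ e : Fin n → Fin 2, (c (Fin.cons 1 e) : ℝ) * ∏ i, r i.succ ^ (e i : ℕ) = 0 := by
      by_contra hz
      apply h0
      rw [show r 0 = -(∑ e : Fin n → Fin 2, (c (Fin.cons 0 e) : ℝ) * ∏ i, r i.succ ^ (e i : ℕ)) *
        (∑ e : Fin n → Fin 2, (c (Fin.cons 1 e) : ℝ) * ∏ i, r i.succ ^ (e i : ℕ))⁻¹ by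
          rw [eq_mul_inv_iff_mul_eq₀ hz]; linarith]
      exact K.mul_mem (K.neg_mem (hmem _)) (K.inv_mem (hmem _))
    rw [hz, mul_zero, add_zero] at h
    intro e
    have hc0 := ih _ _ (fun i => hr i.succ) hind' _ h (Fin.tail e)
    have hc1 := ih _ _ (fun i => hr i.succ) hind' _ hz (Fin.tail e)
    rw [← Fin.cons_self_tail e]
    have : e 0 = 0 ∨ e 0 = 1 := by omega
    rcases this with h | h <;> rw [h] <;> assumption

/-- `IsMultiquadratic n r H x` says that `x` is a combination of the products of the `r i` with
integer coefficients of absolute value at most `H`. -/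
def IsMultiquadratic : (n : ℕ) → (Fin n → ℝ) → ℝ → ℝ → Prop
  | 0, _, H, x => ∃ c : ℤ, x = c ∧ |(c : ℝ)| ≤ H
  | n + 1, r, H, x => ∃ y z, IsMultiquadratic n (fun i => r i.succ) H y ∧
      IsMultiquadratic n (fun i => r i.succ) H z ∧ x = y + r 0 * z

namespace IsMultiquadratic

theorem mono {n : ℕ} : ∀ {r : Fin n → ℝ} {H H' x : ℝ}, H ≤ H' → IsMultiquadratic n r H x →
    IsMultiquadratic n r H' x := by
  induction n with
  | zero => rintro r H H' x h ⟨c, hx, hc⟩; exact ⟨c, hx, hc.trans h⟩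
  | succ n ih => rintro r H H' x h ⟨y, z, hy, hz, hx⟩; exact ⟨y, z, ih h hy, ih h hz, hx⟩

theorem add {n : ℕ} : ∀ {r : Fin n → ℝ} {H H' x x' : ℝ}, IsMultiquadratic n r H x →
    IsMultiquadratic n r H' x' → IsMultiquadratic n r (H + H') (x + x') := by
  induction n with
  | zero =>
    rintro r H H' _ _ ⟨c, rfl, hc⟩ ⟨c', rfl, hc'⟩
    refine ⟨c + c', by push_cast; rfl, ?_⟩
    push_cast
    exact (abs_add_le _ _).trans (add_le_add hc hc')
  | succ n ih =>
    rintro r H H' _ _ ⟨y, z, hy, hz, rfl⟩ ⟨y', z', hy', hz', rfl⟩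
    exact ⟨_, _, ih hy hy', ih hz hz', by ring⟩

theorem intCast_mul {n : ℕ} : ∀ {r : Fin n → ℝ} {H x : ℝ} (k : ℤ), IsMultiquadratic n r H x →
    IsMultiquadratic n r (|(k : ℝ)| * H) (k * x) := by
  induction n with
  | zero =>
    rintro r H _ k ⟨c, rfl, hc⟩
    refine ⟨k * c, by push_cast; rfl, ?_⟩
    push_cast
    rw [abs_mul]
    exact mul_le_mul_of_nonneg_left hc (abs_nonneg _)
  | succ n ih =>
    rintro r H _ k ⟨y, z, hy, hz, rfl⟩
    exact ⟨_, _, ih k hy, ih k hz, by ring⟩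

theorem nonneg {n : ℕ} : ∀ {r : Fin n → ℝ} {H x : ℝ}, IsMultiquadratic n r H x → 0 ≤ H := by
  induction n with
  | zero => rintro r H x ⟨c, -, hc⟩; exact (abs_nonneg _).trans hc
  | succ n ih => rintro r H x ⟨y, z, hy, -, -⟩; exact ih hy

theorem mul {n : ℕ} : ∀ {a : Fin n → ℕ} {r : Fin n → ℝ} {A H H' x x' : ℝ},
    (∀ i, r i ^ 2 = a i) → (∀ i, (a i : ℝ) ≤ A) → 0 ≤ A → IsMultiquadratic n r H x →
    IsMultiquadratic n r H' x' →
    IsMultiquadratic n r ((2 * (1 + A)) ^ n * (H * H')) (x * x') := by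
  induction n with
  | zero =>
    rintro a r A H H' _ _ - - - ⟨c, rfl, hc⟩ ⟨c', rfl, hc'⟩
    refine ⟨c * c', by push_cast; rfl, ?_⟩
    push_cast
    rw [abs_mul, pow_zero, one_mul]
    exact mul_le_mul hc hc' (abs_nonneg _) ((abs_nonneg _).trans hc)
  | succ n ih =>
    rintro a r A H H' _ _ hr ha hA ⟨y, z, hy, hz, rfl⟩ ⟨y', z', hy', hz', rfl⟩
    have hH := mul_nonneg hy.nonneg hy'.nonneg
    have hr' := fun i : Fin n => hr i.succ
    have ha' := fun i : Fin n => ha i.succ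
    have hC : 0 ≤ (2 * (1 + A)) ^ n * (H * H') := by positivity
    refine ⟨y * y' + ((a 0 : ℤ) : ℝ) * (z * z'), y * z' + z * y', ?_, ?_, ?_⟩
    · refine mono ?_ (add (ih hr' ha' hA hy hy') (intCast_mul (a 0 : ℤ) (ih hr' ha' hA hz hz')))
      have : |((a 0 : ℤ) : ℝ)| ≤ A := by simpa using ha 0
      rw [pow_succ]
      nlinarith [mul_le_mul_of_nonneg_right this hC, mul_nonneg hA hC]
    · refine mono ?_ (add (ih hr' ha' hA hy hz') (ih hr' ha' hA hz hy'))
      rw [pow_succ]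
      nlinarith [mul_nonneg hA hC]
    · have := hr 0
      push_cast
      rw [← this]
      ring

theorem abs_le {n : ℕ} : ∀ {r : Fin n → ℝ} {A H x : ℝ}, (∀ i, |r i| ≤ A) → 0 ≤ A →
    IsMultiquadratic n r H x → |x| ≤ (1 + A) ^ n * H := by
  induction n with
  | zero => rintro r A H _ - - ⟨c, rfl, hc⟩; simpa using hc
  | succ n ih =>
    rintro r A H _ hr hA ⟨y, z, hy, hz, rfl⟩
    have h1 := ih (fun i => hr i.succ) hA hy
    have h2 := ih (fun i => hr i.succ) hA hz
    have h3 : |r 0 * z| ≤ A * ((1 + A) ^ n * H) := by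
      rw [abs_mul]
      exact mul_le_mul (hr 0) h2 (abs_nonneg _) hA
    calc _ ≤ _ := abs_add_le _ _
      _ ≤ (1 + A) ^ n * H + A * ((1 + A) ^ n * H) := add_le_add h1 h3
      _ = _ := by ring

theorem of_sum {n : ℕ} : ∀ {r : Fin n → ℝ} {H : ℝ} (c : (Fin n → Fin 2) → ℤ),
    (∀ e, |(c e : ℝ)| ≤ H) →
    IsMultiquadratic n r H (∑ e, (c e : ℝ) * ∏ i, r i ^ (e i : ℕ)) := by
  induction n with
  | zero =>
    intro r H c hc
    refine ⟨c Fin.elim0, ?_, hc _⟩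
    rw [Fintype.sum_subsingleton _ Fin.elim0, Fin.prod_univ_zero, mul_one]
  | succ n ih =>
    intro r H c hc
    exact ⟨_, _, ih (fun e => c (Fin.cons 0 e)) fun e => hc _,
      ih (fun e => c (Fin.cons 1 e)) fun e => hc _, sum_fin_two_succ r c⟩

/-- Liouville's inequality in multiquadratic fields. -/
theorem one_le_abs_mul_pow (n : ℕ) : ∃ E : ℕ, ∀ (a : Fin n → ℕ) (r : Fin n → ℝ) (H x : ℝ),
    (∀ i, r i ^ 2 = a i) → (∀ i, (a i : ℝ) ≤ H) → 2 ≤ H → IsMultiquadratic n r H x → x ≠ 0 →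
    1 ≤ |x| * H ^ E := by
  induction n with
  | zero =>
    refine ⟨0, ?_⟩
    rintro a r H _ - - - ⟨c, rfl, -⟩ hx
    have : c ≠ 0 := by exact_mod_cast hx
    rw [pow_zero, mul_one]
    exact_mod_cast Int.one_le_abs this
  | succ n ih =>
    obtain ⟨E, hE⟩ := ih
    refine ⟨(2 * (n + 1) + 1) + (3 * n + 4) * E, ?_⟩
    rintro a r H _ hr ha hH ⟨y, z, hy, hz, rfl⟩ hx
    have hr' := fun i : Fin n => hr i.succ
    have ha' := fun i : Fin n => ha i.succ
    have hH0 : 0 ≤ H := by linarith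
    have hH1 : 1 ≤ H := by linarith
    have h3 : 2 * (1 + H) ≤ H ^ 3 := by nlinarith [sq_nonneg (H - 2)]
    have h2 : 1 + H ≤ H ^ 2 := by nlinarith
    by_cases hconj : y - r 0 * z = 0
    · have hy0 : y ≠ 0 := by
        rintro rfl
        apply hx
        linarith
      have h1 := hE _ _ H y hr' ha' hH hy hy0
      have hxy : |y + r 0 * z| = 2 * |y| := by
        rw [← sub_eq_zero.1 hconj, ← two_mul, abs_mul, abs_two]
      rw [hxy]
      have hEE : H ^ E ≤ H ^ ((2 * (n + 1) + 1) + (3 * n + 4) * E) :=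
        pow_le_pow_right₀ hH1 (by nlinarith)
      nlinarith [abs_nonneg y, mul_le_mul_of_nonneg_left hEE (abs_nonneg y)]
    · have hrep : IsMultiquadratic n (fun i => r i.succ) (H ^ (3 * n + 4))
          (y * y + ((-(a 0 : ℤ) : ℤ) : ℝ) * (z * z)) := by
        refine mono ?_ (add (mul hr' ha' hH0 hy hy) (intCast_mul _ (mul hr' ha' hH0 hz hz)))
        have h4 : |((-(a 0 : ℤ) : ℤ) : ℝ)| ≤ H := by
          push_cast
          rw [abs_neg, Nat.abs_cast]
          exact ha 0
        have h5 : (2 * (1 + H)) ^ n ≤ H ^ (3 * n) := by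
          rw [pow_mul]
          exact pow_le_pow_left₀ (by linarith) h3 n
        have h6 : 0 ≤ (2 * (1 + H)) ^ n * (H * H) := by positivity
        calc _ ≤ (2 * (1 + H)) ^ n * (H * H) + H * ((2 * (1 + H)) ^ n * (H * H)) := by
              linarith [mul_le_mul_of_nonneg_right h4 h6]
          _ = (2 * (1 + H)) ^ n * ((H * H) * (1 + H)) := by ring
          _ ≤ H ^ (3 * n) * ((H * H) * H ^ 2) := by gcongr
          _ = _ := by ring
      have heq : y * y + ((-(a 0 : ℤ) : ℤ) : ℝ) * (z * z) = (y + r 0 * z) * (y - r 0 * z) := by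
        push_cast
        rw [← hr 0]
        ring
      rw [heq] at hrep
      have h1 := hE _ _ (H ^ (3 * n + 4)) _ hr'
        (fun i => (ha' i).trans (le_self_pow₀ hH1 (by omega)))
        (hH.trans (le_self_pow₀ hH1 (by omega))) hrep (mul_ne_zero hx hconj)
      have habs : ∀ i, |r i| ≤ H := by
        intro i
        rw [← abs_of_nonneg hH0, ← sq_le_sq, hr i]
        nlinarith [ha i]
      have hc : |y - r 0 * z| ≤ H ^ (2 * (n + 1) + 1) := by
        have h7 : IsMultiquadratic (n + 1) r H (y - r 0 * z) := by
          refine ⟨y, -z, hy, ?_, by ring⟩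
          have := intCast_mul (-1) hz
          simpa using this
        refine (abs_le habs hH0 h7).trans ?_
        rw [pow_succ _ (2 * (n + 1)), pow_mul]
        gcongr
      rw [abs_mul, ← pow_mul] at h1
      rw [pow_add]
      calc 1 ≤ |y + r 0 * z| * |y - r 0 * z| * H ^ ((3 * n + 4) * E) := h1
        _ ≤ |y + r 0 * z| * H ^ (2 * (n + 1) + 1) * H ^ ((3 * n + 4) * E) := by gcongr
        _ = _ := by ring

end IsMultiquadratic

/-- The list of the first `S` odd positive integers, each repeated `T` times. -/
def oddNodes (T : ℕ) : ℕ → List ℂ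
  | 0 => []
  | S + 1 => List.replicate T ((2 * S + 1 : ℕ) : ℂ) ++ oddNodes T S

theorem length_oddNodes (T S : ℕ) : (oddNodes T S).length = S * T := by
  induction S with
  | zero => simp [oddNodes]
  | succ S ih => simp [oddNodes, ih]; ring

theorem exists_of_mem_oddNodes {T S : ℕ} {s : ℂ} (h : s ∈ oddNodes T S) :
    ∃ i < S, s = ((2 * i + 1 : ℕ) : ℂ) := by
  induction S with
  | zero => simp [oddNodes] at h
  | succ S ih =>
    rw [oddNodes, List.mem_append] at h
    rcases h with h | h
    · exact ⟨S, by omega, List.eq_of_mem_replicate h⟩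
    · obtain ⟨i, hi, hs⟩ := ih h
      exact ⟨i, by omega, hs⟩

theorem count_oddNodes_le (T S : ℕ) (s : ℂ) : (oddNodes T S).count s ≤ T := by
  induction S with
  | zero => simp [oddNodes]
  | succ S ih =>
    rw [oddNodes, List.count_append, List.count_replicate]
    split_ifs with h
    · have : (oddNodes T S).count s = 0 := by
        rw [List.count_eq_zero]
        intro hs
        obtain ⟨i, hi, rfl⟩ := exists_of_mem_oddNodes hs
        have h' : ((2 * S + 1 : ℕ) : ℂ) = ((2 * i + 1 : ℕ) : ℂ) := by simpa using h
        have := Nat.cast_injective h'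
        omega
      omega
    · omega

section Descent

variable {m : ℕ}

/-- The exponents `l` with `l i ≤ L i`. -/
def exponentBox (L : Fin (m + 1) → ℕ) : Finset (Fin (m + 1) → ℕ) :=
  Fintype.piFinset fun i => Finset.range (L i + 1)

theorem mem_exponentBox {L l : Fin (m + 1) → ℕ} : l ∈ exponentBox L ↔ ∀ i, l i ≤ L i := by
  simp [exponentBox]

/-- The linear forms in the exponents which are obtained by differentiating along the hyperplane
with normal vector `b`. -/
def crossForm (b : Fin (m + 1) → ℤ) (l : Fin (m + 1) → ℕ) (j : Fin m) : ℤ :=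
  b 0 * l j.succ - b j.succ * l 0

/-- The logarithm of the monomial with exponents `l`. -/
def logMonomial (θ : Fin (m + 1) → ℝ) (l : Fin (m + 1) → ℕ) : ℝ := ∑ i, l i * θ i

/-- The auxiliary exponential polynomial with coefficients `p`, weighted by the polynomial `P` in
the cross forms. -/
noncomputable def auxSum (θ : Fin (m + 1) → ℝ) (b : Fin (m + 1) → ℤ) (L : Fin (m + 1) → ℕ)
    (p : (Fin (m + 1) → ℕ) → ℤ) (P : MvPolynomial (Fin m) ℝ) (z : ℝ) : ℝ :=
  ∑ l ∈ exponentBox L, p l * MvPolynomial.eval (fun j => (crossForm b l j : ℝ)) P *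
    Real.exp (z * logMonomial θ l)

/-- Vanishing of order `T` at the first `S` odd integers. -/
def AuxVanishes (θ : Fin (m + 1) → ℝ) (b : Fin (m + 1) → ℤ) (L : Fin (m + 1) → ℕ)
    (p : (Fin (m + 1) → ℕ) → ℤ) (T S : ℕ) : Prop :=
  ∀ P : MvPolynomial (Fin m) ℝ, P.totalDegree < T → ∀ s : ℕ, Odd s → s < 2 * S →
    auxSum θ b L p P s = 0

theorem abs_logMonomial_le {θ : Fin (m + 1) → ℝ} {L l : Fin (m + 1) → ℕ} (hl : l ∈ exponentBox L) :
    |logMonomial θ l| ≤ ∑ i, L i * |θ i| := by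
  refine (Finset.abs_sum_le_sum_abs _ _).trans (Finset.sum_le_sum fun i _ => ?_)
  rw [abs_mul, Nat.abs_cast]
  have : (l i : ℝ) ≤ L i := by exact_mod_cast mem_exponentBox.1 hl i
  gcongr

/-- The linear polynomial whose value at the cross forms is almost `logMonomial`. -/
noncomputable def directionPoly (θ : Fin (m + 1) → ℝ) (b : Fin (m + 1) → ℤ) :
    MvPolynomial (Fin m) ℝ :=
  ∑ j : Fin m, MvPolynomial.C (θ j.succ / b 0) * MvPolynomial.X j

theorem totalDegree_directionPoly_le (θ : Fin (m + 1) → ℝ) (b : Fin (m + 1) → ℤ) :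
    (directionPoly θ b).totalDegree ≤ 1 := by
  refine MvPolynomial.totalDegree_finsetSum_le fun j _ => ?_
  refine (MvPolynomial.totalDegree_mul _ _).trans ?_
  simp

theorem logMonomial_sub_eval_directionPoly (θ : Fin (m + 1) → ℝ) {b : Fin (m + 1) → ℤ}
    (hb : b 0 ≠ 0) (l : Fin (m + 1) → ℕ) :
    logMonomial θ l - MvPolynomial.eval (fun j => (crossForm b l j : ℝ)) (directionPoly θ b) =
      l 0 * (∑ i, b i * θ i) / b 0 := by
  have hb' : (b 0 : ℝ) ≠ 0 := by exact_mod_cast hb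
  rw [eq_div_iff hb', sub_mul, logMonomial, directionPoly, map_sum, Finset.sum_mul,
    Finset.sum_mul, Fin.sum_univ_succ, Fin.sum_univ_succ, mul_add, Finset.mul_sum, add_sub_assoc,
    ← Finset.sum_sub_distrib]
  congr 1
  · ring
  · refine Finset.sum_congr rfl fun j _ => ?_
    simp only [crossForm, map_mul, MvPolynomial.eval_C, MvPolynomial.eval_X]
    push_cast
    field_simp
    ring

theorem abs_pow_sub_pow_div_factorial_le {x w d W : ℝ} (hx : |x| ≤ W) (hw : |w| ≤ W)
    (hd : |x - w| ≤ d) (k : ℕ) : |x ^ k - w ^ k| / k.factorial ≤ d * Real.exp W := by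
  have hW : 0 ≤ W := (abs_nonneg _).trans hx
  have hd0 : 0 ≤ d := (abs_nonneg _).trans hd
  rcases k with _ | k
  · simp only [pow_zero, sub_self, abs_zero, zero_div]
    positivity
  · rw [div_le_iff₀ (by positivity)]
    have h1 := Real.pow_div_factorial_le_exp W hW k
    rw [div_le_iff₀ (by positivity)] at h1
    calc |x ^ (k + 1) - w ^ (k + 1)| ≤ |x - w| * (k + 1 : ℕ) * max |x| |w| ^ (k + 1 - 1) :=
          abs_pow_sub_pow_le ..
      _ ≤ d * (k + 1 : ℕ) * W ^ k := by
          rw [Nat.add_sub_cancel]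
          have := max_le hx hw
          gcongr
      _ ≤ d * (k + 1 : ℕ) * (Real.exp W * k.factorial) := by gcongr
      _ = _ := by rw [Nat.factorial_succ]; push_cast; ring

/-- Vanishing at odd integers forces smallness nearby. -/
theorem abs_auxSum_le {θ : Fin (m + 1) → ℝ} {b : Fin (m + 1) → ℤ} (hb : b 0 ≠ 0)
    {L : Fin (m + 1) → ℕ} {p : (Fin (m + 1) → ℕ) → ℤ} {T S : ℕ} (hS : 1 ≤ S)
    (hv : AuxVanishes θ b L p (2 * T) S) {P : MvPolynomial (Fin m) ℝ} (hP : P.totalDegree < T)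
    {Q W d : ℝ} (hQ : 0 ≤ Q)
    (hpQ : ∑ l ∈ exponentBox L,
      |p l * MvPolynomial.eval (fun j => (crossForm b l j : ℝ)) P| ≤ Q)
    (hW : ∑ i, L i * |θ i| ≤ W) (hd : L 0 * |∑ i, b i * θ i| ≤ d)
    {z : ℝ} (hz : |z| ≤ 2 * S) :
    |auxSum θ b L p P z| ≤
      2 * (Q * Real.exp (2 * S * W) * (d * Real.exp (W + d)) * (S * T : ℕ) *
        (20 * S) ^ (S * T)) + Q * Real.exp (18 * S * W) * (1 / 4) ^ (S * T) := by
  set c : (Fin (m + 1) → ℕ) → ℝ := fun l =>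
    p l * MvPolynomial.eval (fun j => (crossForm b l j : ℝ)) P with hc
  set f : ℂ → ℂ := fun z => ∑ l ∈ exponentBox L, (c l : ℂ) *
    Complex.exp ((logMonomial θ l : ℂ) * z) with hf
  have hd0 : 0 ≤ d := le_trans (by positivity) hd
  have hW0 : 0 ≤ W := le_trans (by positivity) hW
  have hSr : (1 : ℝ) ≤ S := by exact_mod_cast hS
  have hlW : ∀ l ∈ exponentBox L, |logMonomial θ l| ≤ W := fun l hl =>
    (abs_logMonomial_le hl).trans hW
  have hfz : f z = (auxSum θ b L p P z : ℂ) := by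
    simp only [hf, auxSum, hc]
    push_cast
    refine Finset.sum_congr rfl fun l _ => ?_
    rw [mul_comm (z : ℂ)]
  have hcoef : ∀ s ∈ oddNodes T S, ∀ k < (oddNodes T S).count s,
      ‖(Function.swap dslope s)^[k] f s‖ ≤
        Q * Real.exp (2 * S * W) * (d * Real.exp (W + d)) := by
    intro s hs k hk
    have hkT : k < T := hk.trans_le (count_oddNodes_le T S s)
    obtain ⟨i, hi, rfl⟩ := exists_of_mem_oddNodes hs
    set ω : (Fin (m + 1) → ℕ) → ℝ := fun l =>
      MvPolynomial.eval (fun j => (crossForm b l j : ℝ)) (directionPoly θ b) with hω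
    have hzero : ∑ l ∈ exponentBox L, c l * Real.exp ((2 * i + 1 : ℕ) * logMonomial θ l) *
        ω l ^ k = 0 := by
      have h1 := hv (P * directionPoly θ b ^ k) (by
        have h2 := MvPolynomial.totalDegree_mul P (directionPoly θ b ^ k)
        have h3 := MvPolynomial.totalDegree_pow (directionPoly θ b) k
        have h4 := totalDegree_directionPoly_le θ b
        nlinarith) (2 * i + 1) ⟨i, rfl⟩ (by omega)
      rw [← h1, auxSum]
      refine Finset.sum_congr rfl fun l _ => ?_
      simp only [hc, hω, map_mul, map_pow]
      ring
    have hdiff : ∀ l ∈ exponentBox L, |logMonomial θ l - ω l| ≤ d := by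
      intro l hl
      rw [hω, logMonomial_sub_eval_directionPoly θ hb, abs_div, abs_mul, Nat.abs_cast]
      have h1 : (1 : ℝ) ≤ |(b 0 : ℝ)| := by exact_mod_cast Int.one_le_abs hb
      refine (div_le_self (by positivity) h1).trans (le_trans ?_ hd)
      have : (l 0 : ℝ) ≤ L 0 := by exact_mod_cast mem_exponentBox.1 hl 0
      gcongr
    have heq : (Function.swap dslope ((2 * i + 1 : ℕ) : ℂ))^[k] f ((2 * i + 1 : ℕ) : ℂ) =
        ((∑ l ∈ exponentBox L, c l * (Real.exp ((2 * i + 1 : ℕ) * logMonomial θ l) *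
          ((logMonomial θ l ^ k - ω l ^ k) / k.factorial)) : ℝ) : ℂ) := by
      have h1 : ∑ l ∈ exponentBox L, c l * (Real.exp ((2 * i + 1 : ℕ) * logMonomial θ l) *
          ((logMonomial θ l ^ k - ω l ^ k) / k.factorial)) =
          ∑ l ∈ exponentBox L, c l * Real.exp ((2 * i + 1 : ℕ) * logMonomial θ l) *
            (logMonomial θ l ^ k / k.factorial) := by
        rw [← sub_zero (∑ l ∈ exponentBox L, c l * Real.exp _ * _), ← zero_div (k.factorial : ℝ),
          ← hzero, Finset.sum_div, ← Finset.sum_sub_distrib]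
        exact Finset.sum_congr rfl fun l _ => by ring
      rw [h1, hf, iterate_dslope_sum_exp]
      push_cast
      refine Finset.sum_congr rfl fun l _ => ?_
      rw [mul_comm (logMonomial θ l : ℂ) (2 * (i : ℂ) + 1)]
    rw [heq, Complex.norm_real, Real.norm_eq_abs]
    refine (Finset.abs_sum_le_sum_abs _ _).trans ?_
    rw [mul_assoc]
    refine le_trans ?_ (mul_le_mul_of_nonneg_right hpQ (by positivity))
    rw [Finset.sum_mul]
    refine Finset.sum_le_sum fun l hl => ?_
    rw [abs_mul (c l), abs_mul (Real.exp _), Real.abs_exp, abs_div, Nat.abs_cast]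
    refine mul_le_mul_of_nonneg_left (mul_le_mul ?_ ?_ (by positivity) (by positivity))
      (abs_nonneg _)
    · rw [Real.exp_le_exp]
      have h1 : ((2 * i + 1 : ℕ) : ℝ) ≤ 2 * S := by
        have : 2 * i + 1 ≤ 2 * S := by omega
        exact_mod_cast this
      calc _ ≤ ((2 * i + 1 : ℕ) : ℝ) * |logMonomial θ l| := by gcongr; exact le_abs_self _
        _ ≤ _ := by
          have := hlW l hl
          gcongr
    · have h2 := hlW l hl
      have h3 := hdiff l hl
      refine abs_pow_sub_pow_div_factorial_le (by linarith) ?_ h3 k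
      have h4 := abs_sub_abs_le_abs_sub (ω l) (logMonomial θ l)
      rw [abs_sub_comm] at h4
      linarith
  have hmain := norm_le_of_small_taylor_coeffs (f := f) (by rw [hf]; fun_prop) (oddNodes T S)
    (μ := Q * Real.exp (2 * S * W) * (d * Real.exp (W + d)))
    (M := Q * Real.exp (18 * S * W)) (r := 2 * S) (by positivity) (by positivity) (by linarith)
    (by
      intro x hx y hy hxy
      obtain ⟨i, -, rfl⟩ := exists_of_mem_oddNodes hx
      obtain ⟨j, -, rfl⟩ := exists_of_mem_oddNodes hy
      have hij : (i : ℤ) - j ≠ 0 := by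
        intro h
        apply hxy
        have : i = j := by omega
        rw [this]
      have h1 : (1 : ℝ) ≤ |((i : ℤ) - j : ℤ)| := by exact_mod_cast Int.one_le_abs hij
      rw [show (((2 * i + 1 : ℕ) : ℂ) - ((2 * j + 1 : ℕ) : ℂ)) =
        ((2 * ((i : ℤ) - j : ℤ) : ℝ) : ℂ) by push_cast; ring, Complex.norm_real, Real.norm_eq_abs,
        abs_mul, abs_two]
      push_cast at h1 ⊢
      linarith)
    (by
      intro x hx
      obtain ⟨i, hi, rfl⟩ := exists_of_mem_oddNodes hx
      rw [Complex.norm_natCast]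
      have : 2 * i + 1 ≤ 2 * S := by omega
      exact_mod_cast this)
    hcoef
    (by
      intro w hw
      rw [hf]
      refine (norm_sum_le _ _).trans ?_
      refine le_trans ?_ (mul_le_mul_of_nonneg_right hpQ (by positivity))
      rw [Finset.sum_mul]
      refine Finset.sum_le_sum fun l hl => ?_
      rw [norm_mul, Complex.norm_real, Real.norm_eq_abs]
      refine mul_le_mul_of_nonneg_left ?_ (abs_nonneg _)
      refine (Complex.norm_exp_le_exp_norm _).trans ?_
      rw [Real.exp_le_exp, norm_mul, Complex.norm_real, Real.norm_eq_abs, hw]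
      nlinarith [hlW l hl])
    (z := (z : ℂ)) (by rwa [Complex.norm_real, Real.norm_eq_abs])
  rw [hfz, Complex.norm_real, Real.norm_eq_abs, length_oddNodes] at hmain
  refine hmain.trans (le_of_eq ?_)
  rw [show (10 : ℝ) * (2 * S) = 20 * S by ring]

end Descent

theorem totalDegree_bind₁_le {σ τ : Type*} {f : σ → MvPolynomial τ ℝ}
    (hf : ∀ i, (f i).totalDegree ≤ 1) (P : MvPolynomial σ ℝ) :
    (MvPolynomial.bind₁ f P).totalDegree ≤ P.totalDegree := by
  rw [MvPolynomial.bind₁, MvPolynomial.aeval_def, MvPolynomial.eval₂_eq]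
  refine MvPolynomial.totalDegree_finsetSum_le fun t ht => ?_
  refine (MvPolynomial.totalDegree_mul _ _).trans ?_
  rw [MvPolynomial.algebraMap_eq, MvPolynomial.totalDegree_C, zero_add]
  refine (MvPolynomial.totalDegree_finsetProd _ _).trans ?_
  refine le_trans (Finset.sum_le_sum fun i _ => ?_) (MvPolynomial.le_totalDegree ht)
  refine (MvPolynomial.totalDegree_pow _ _).trans ?_
  exact (Nat.mul_le_mul_left _ (hf i)).trans (mul_one _).le

theorem sum_mul_eval_eq_zero {m T : ℕ} {ι : Type*} {A : Finset ι} {c : ι → ℝ} {g : ι → Fin m → ℝ}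
    (h : ∀ t : Fin m →₀ ℕ, t.sum (fun _ e => e) < T → ∑ l ∈ A, c l * ∏ j, g l j ^ t j = 0)
    {P : MvPolynomial (Fin m) ℝ} (hP : P.totalDegree < T) :
    ∑ l ∈ A, c l * MvPolynomial.eval (g l) P = 0 := by
  simp only [MvPolynomial.eval_eq', Finset.mul_sum]
  rw [Finset.sum_comm]
  refine Finset.sum_eq_zero fun t ht => ?_
  rw [← mul_zero (P.coeff t), ← h t ((MvPolynomial.le_totalDegree ht).trans_lt hP), Finset.mul_sum]
  exact Finset.sum_congr rfl fun l _ => by ring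

section Descent

variable {m : ℕ}

/-- The residues modulo two of the exponents. -/
def parityVec (l : Fin (m + 1) → ℕ) (i : Fin (m + 1)) : Fin 2 := ⟨l i % 2, Nat.mod_lt _ two_pos⟩

/-- The integral part of `∏ i, v i ^ M i * (u i / v i) ^ (s * l i / 2)`. -/
def halfMonomial (u v M l : Fin (m + 1) → ℕ) (s : ℕ) : ℕ :=
  ∏ i, ((u i * v i) ^ (l i * s / 2) * v i ^ (M i - l i * s))

theorem exp_half_logMonomial {u v : Fin (m + 1) → ℕ} (hu : ∀ i, 0 < u i) (hv : ∀ i, 0 < v i)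
    {M l : Fin (m + 1) → ℕ} {s : ℕ} (hs : Odd s) (hM : ∀ i, l i * s ≤ M i) :
    (∏ i, (v i : ℝ) ^ M i) *
      Real.exp (s / 2 * logMonomial (fun i => Real.log (u i) - Real.log (v i)) l) =
      halfMonomial u v M l s * ∏ i, √((u i * v i : ℕ) : ℝ) ^ (parityVec l i : ℕ) := by
  rw [logMonomial, Finset.mul_sum, Real.exp_sum, ← Finset.prod_mul_distrib, halfMonomial,
    Nat.cast_prod, ← Finset.prod_mul_distrib]
  refine Finset.prod_congr rfl fun i _ => ?_
  have hui : (0 : ℝ) < u i := by exact_mod_cast hu i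
  have hvi : (0 : ℝ) < v i := by exact_mod_cast hv i
  have hsq : √((u i * v i : ℕ) : ℝ) = Real.exp ((Real.log (u i) + Real.log (v i)) / 2) := by
    rw [← Real.log_mul hui.ne' hvi.ne', Nat.cast_mul]
    rw [Real.exp_half, Real.exp_log (by positivity)]
  have hpar : (parityVec l i : ℕ) = (l i * s) % 2 := by
    change l i % 2 = _
    rw [Nat.mul_mod, Nat.odd_iff.1 hs, mul_one, Nat.mod_mod]
  rw [hpar, hsq]
  push_cast
  have key : ∀ a b : ℝ, Real.exp b ^ M i * Real.exp (s / 2 * (l i * (a - b))) =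
      (Real.exp a * Real.exp b) ^ (l i * s / 2) * Real.exp b ^ (M i - l i * s) *
        Real.exp ((a + b) / 2) ^ (l i * s % 2) := by
    intro a b
    rw [← Real.exp_add a b]
    simp only [← Real.exp_nat_mul, ← Real.exp_add]
    rw [Nat.cast_sub (hM i)]
    have h1 : ((l i * s : ℕ) : ℝ) = 2 * ((l i * s / 2 : ℕ) : ℝ) + ((l i * s % 2 : ℕ) : ℝ) := by
      exact_mod_cast (Nat.div_add_mod _ 2).symm
    congr 1
    rw [show (s : ℝ) / 2 * (l i * (a - b)) = ((l i * s : ℕ) : ℝ) / 2 * (a - b) by push_cast; ring,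
      h1]
    ring
  have := key (Real.log (u i)) (Real.log (v i))
  rwa [Real.exp_log hui, Real.exp_log hvi] at this

theorem halfMonomial_le {u v : Fin (m + 1) → ℕ} (hu : ∀ i, 0 < u i) (hv : ∀ i, 0 < v i)
    {h : Fin (m + 1) → ℝ} (hh : ∀ i, 0 ≤ h i)
    (huh : ∀ i, Real.log (u i) ≤ h i) (hvh : ∀ i, Real.log (v i) ≤ h i)
    {M l : Fin (m + 1) → ℕ} {s : ℕ} (hM : ∀ i, l i * s ≤ M i) :
    (halfMonomial u v M l s : ℝ) ≤ Real.exp (∑ i, M i * h i) := by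
  rw [halfMonomial, Nat.cast_prod, Real.exp_sum]
  refine Finset.prod_le_prod (fun _ _ => by positivity) fun i _ => ?_
  have hui : (u i : ℝ) ≤ Real.exp (h i) := by
    rw [← Real.log_le_iff_le_exp (by exact_mod_cast hu i)]; exact huh i
  have hvi : (v i : ℝ) ≤ Real.exp (h i) := by
    rw [← Real.log_le_iff_le_exp (by exact_mod_cast hv i)]; exact hvh i
  push_cast
  calc ((u i : ℝ) * v i) ^ (l i * s / 2) * (v i : ℝ) ^ (M i - l i * s)
      ≤ (Real.exp (h i) * Real.exp (h i)) ^ (l i * s / 2) * Real.exp (h i) ^ (M i - l i * s) := by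
        gcongr
    _ = Real.exp (h i) ^ (2 * (l i * s / 2) + (M i - l i * s)) := by
        rw [pow_add, pow_mul, sq]
    _ ≤ Real.exp (h i) ^ M i := by
        refine pow_le_pow_right₀ (Real.one_le_exp (hh i)) ?_
        have := hM i
        omega
    _ = _ := by rw [← Real.exp_nat_mul]

theorem class_sum_eq_zero {E : ℕ}
    (hE : ∀ (a : Fin (m + 1) → ℕ) (r : Fin (m + 1) → ℝ) (H x : ℝ), (∀ i, r i ^ 2 = a i) →
      (∀ i, (a i : ℝ) ≤ H) → 2 ≤ H → IsMultiquadratic (m + 1) r H x → x ≠ 0 → 1 ≤ |x| * H ^ E)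
    {u v : Fin (m + 1) → ℕ} (hu : ∀ i, 0 < u i) (hv : ∀ i, 0 < v i)
    {h : Fin (m + 1) → ℝ} (hh : ∀ i, 0 ≤ h i)
    (huh : ∀ i, Real.log (u i) ≤ h i) (hvh : ∀ i, Real.log (v i) ≤ h i)
    (hind : ∀ I : Finset (Fin (m + 1)), I.Nonempty → ¬ IsSquare (∏ i ∈ I, u i * v i))
    {b : Fin (m + 1) → ℤ} (hb : b 0 ≠ 0) {L : Fin (m + 1) → ℕ} {p : (Fin (m + 1) → ℕ) → ℤ}
    {T S : ℕ} (hS : 1 ≤ S)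
    (hvan : AuxVanishes (fun i => Real.log (u i) - Real.log (v i)) b L p (2 * T) S)
    {X G Q W d H : ℝ} (hX : ∀ l, |(p l : ℝ)| ≤ X) (hG1 : 1 ≤ G)
    (hG : ∀ l ∈ exponentBox L, ∀ j, |(crossForm b l j : ℝ)| ≤ G)
    (hQ : (exponentBox L).card * (X * G ^ T) ≤ Q)
    (hW : ∑ i, L i * h i ≤ W)
    (hd : L 0 * |∑ i, b i * (Real.log (u i) - Real.log (v i))| ≤ d)
    (hQH : Q * Real.exp (4 * S * W) ≤ H) (haH : ∀ i, ((u i * v i : ℕ) : ℝ) ≤ H) (hH2 : 2 ≤ H)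
    (hnum : Real.exp (4 * S * W) *
      (2 * (Q * Real.exp (2 * S * W) * (d * Real.exp (W + d)) * (S * T : ℕ) *
        (20 * S) ^ (S * T)) + Q * Real.exp (18 * S * W) * (1 / 4) ^ (S * T)) * H ^ E < 1)
    {P : MvPolynomial (Fin m) ℝ} (hP : P.totalDegree < T) {s : ℕ} (hs : Odd s) (hs4 : s < 4 * S)
    (e : Fin (m + 1) → Fin 2) :
    ∑ l ∈ exponentBox L with parityVec l = e,
      p l * Real.exp (s / 2 * logMonomial (fun i => Real.log (u i) - Real.log (v i)) l) *
        MvPolynomial.eval (fun j => (crossForm b l j : ℝ)) P = 0 := by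
  set θ : Fin (m + 1) → ℝ := fun i => Real.log (u i) - Real.log (v i) with hθ
  set M : Fin (m + 1) → ℕ := fun i => 4 * S * L i with hMdef
  have hM : ∀ l ∈ exponentBox L, ∀ i, l i * s ≤ M i := by
    intro l hl i
    rw [hMdef, mul_comm]
    exact Nat.mul_le_mul hs4.le (mem_exponentBox.1 hl i)
  have hlu : ∀ i, 0 ≤ Real.log (u i) := fun i => Real.log_natCast_nonneg _
  have hlv : ∀ i, 0 ≤ Real.log (v i) := fun i => Real.log_natCast_nonneg _
  have hθh : ∀ i, |θ i| ≤ h i := fun i => by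
    rw [abs_le]
    constructor <;> linarith [hlu i, hlv i, huh i, hvh i]
  have hMW : ∑ i, (M i : ℝ) * h i ≤ 4 * S * W := by
    calc ∑ i, (M i : ℝ) * h i = 4 * S * ∑ i, L i * h i := by
          rw [Finset.mul_sum]
          refine Finset.sum_congr rfl fun i _ => ?_
          rw [hMdef]; push_cast; ring
      _ ≤ _ := by gcongr
  have hV : ∏ i, (v i : ℝ) ^ M i ≤ Real.exp (4 * S * W) := by
    refine le_trans ?_ (Real.exp_le_exp.2 hMW)
    rw [Real.exp_sum]
    refine Finset.prod_le_prod (fun _ _ => by positivity) fun i _ => ?_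
    rw [Real.exp_nat_mul]
    gcongr
    rw [← Real.log_le_iff_le_exp (by exact_mod_cast hv i)]
    exact hvh i
  have hVpos : 0 < ∏ i, (v i : ℝ) ^ M i :=
    Finset.prod_pos fun i _ => pow_pos (by exact_mod_cast hv i) _
  have hX0 : 0 ≤ X := (abs_nonneg _).trans (hX 0)
  have hG0 : 0 ≤ G := by linarith
  have hQ0 : 0 ≤ Q := le_trans (by positivity) hQ
  refine sum_mul_eval_eq_zero (T := T) (fun t ht => ?_) hP
  -- the coefficients with respect to the multiquadratic basis
  set g : (Fin (m + 1) → ℕ) → ℤ := fun l => ∏ j, crossForm b l j ^ t j with hg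
  have hgG : ∀ l ∈ exponentBox L, |(g l : ℝ)| ≤ G ^ T := by
    intro l hl
    rw [hg]
    push_cast
    rw [Finset.abs_prod]
    calc ∏ j, |(crossForm b l j : ℝ) ^ t j| ≤ ∏ j, G ^ t j := by
          refine Finset.prod_le_prod (fun _ _ => abs_nonneg _) fun j _ => ?_
          rw [abs_pow]
          have := hG l hl j
          gcongr
      _ = G ^ ∑ j, t j := Finset.prod_pow_eq_pow_sum _ _ _
      _ ≤ G ^ T := by
          refine pow_le_pow_right₀ hG1 ?_
          rw [Finsupp.sum_fintype _ _ (by simp)] at ht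
          exact ht.le
  set c : (Fin (m + 1) → Fin 2) → ℤ := fun e =>
    ∑ l ∈ exponentBox L with parityVec l = e, p l * g l * halfMonomial u v M l s with hc
  set w : Fin (m + 1) → ℝ := fun i => √((u i * v i : ℕ) : ℝ) with hw
  have hw2 : ∀ i, w i ^ 2 = ((u i * v i : ℕ) : ℝ) := fun i => Real.sq_sqrt (Nat.cast_nonneg _)
  have hclass : ∀ e, (∏ i, (v i : ℝ) ^ M i) * ∑ l ∈ exponentBox L with parityVec l = e,
      p l * Real.exp (s / 2 * logMonomial θ l) * ∏ j, (crossForm b l j : ℝ) ^ t j =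
      c e * ∏ i, w i ^ (e i : ℕ) := by
    intro e
    rw [hc]
    push_cast
    rw [Finset.mul_sum, Finset.sum_mul]
    refine Finset.sum_congr rfl fun l hl => ?_
    rw [Finset.mem_filter] at hl
    have := exp_half_logMonomial hu hv hs (hM l hl.1)
    rw [hl.2] at this
    rw [hg]
    push_cast
    linear_combination (p l * ∏ j, (crossForm b l j : ℝ) ^ t j) * this
  have hcH : ∀ e, |(c e : ℝ)| ≤ H := by
    intro e
    refine le_trans ?_ hQH
    rw [hc]
    push_cast
    refine (Finset.abs_sum_le_sum_abs _ _).trans ?_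
    calc ∑ l ∈ exponentBox L with parityVec l = e,
          |(p l : ℝ) * g l * halfMonomial u v M l s|
        ≤ ∑ l ∈ exponentBox L with parityVec l = e, X * G ^ T * Real.exp (4 * S * W) := by
          refine Finset.sum_le_sum fun l hl => ?_
          rw [Finset.mem_filter] at hl
          rw [abs_mul, abs_mul, Nat.abs_cast]
          have h1 := hX l
          have h2 := hgG l hl.1
          have h3 := (halfMonomial_le hu hv hh huh hvh (hM l hl.1)).trans (Real.exp_le_exp.2 hMW)
          gcongr
      _ ≤ ∑ l ∈ exponentBox L, X * G ^ T * Real.exp (4 * S * W) :=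
          Finset.sum_le_sum_of_subset_of_nonneg (Finset.filter_subset _ _)
            fun _ _ _ => by positivity
      _ = (exponentBox L).card * (X * G ^ T) * Real.exp (4 * S * W) := by
          rw [Finset.sum_const, nsmul_eq_mul]; ring
      _ ≤ _ := by gcongr
  set R : MvPolynomial (Fin m) ℝ := MvPolynomial.monomial t 1 with hR
  have hReval : ∀ l, MvPolynomial.eval (fun j => (crossForm b l j : ℝ)) R = g l := by
    intro l
    rw [hR, MvPolynomial.eval_monomial, one_mul, Finsupp.prod_fintype _ _ (by simp), hg]
    push_cast
    rfl
  have hRdeg : R.totalDegree < T := by rwa [hR, MvPolynomial.totalDegree_monomial _ one_ne_zero]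
  have htotal : (∏ i, (v i : ℝ) ^ M i) * auxSum θ b L p R (s / 2) =
      ∑ e, (c e : ℝ) * ∏ i, w i ^ (e i : ℕ) := by
    simp only [← hclass]
    rw [← Finset.mul_sum, Finset.sum_fiberwise, auxSum]
    congr 1
    refine Finset.sum_congr rfl fun l _ => ?_
    rw [hReval, hg]
    push_cast
    ring
  have hsmall := abs_auxSum_le hb hS hvan hRdeg (Q := Q) (W := W) (d := d) hQ0 (by
      refine le_trans ?_ hQ
      rw [← nsmul_eq_mul]
      refine Finset.sum_le_card_nsmul _ _ _ fun l hl => ?_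
      rw [hReval, abs_mul]
      have h1 := hX l
      have h2 := hgG l hl
      gcongr)
    (le_trans (Finset.sum_le_sum fun i _ => mul_le_mul_of_nonneg_left (hθh i) (Nat.cast_nonneg _))
      hW) hd (z := s / 2) (by
      rw [abs_of_nonneg (by positivity), div_le_iff₀ two_pos]
      have : (s : ℝ) ≤ ((4 * S : ℕ) : ℝ) := by exact_mod_cast hs4.le
      push_cast at this
      linarith)
  have hzero : (∏ i, (v i : ℝ) ^ M i) * auxSum θ b L p R (s / 2) = 0 := by
    by_contra hne
    have h1 := hE (fun i => u i * v i) w H _ hw2 haH hH2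
      (by rw [htotal]; exact IsMultiquadratic.of_sum c hcH) hne
    rw [abs_mul, abs_of_pos hVpos] at h1
    refine absurd (h1.trans ?_) (not_le.2 hnum)
    gcongr
  have hc0 := multiquadratic_independent (m + 1) (fun i => u i * v i) w hw2 hind c
    (by rw [← htotal, hzero])
  have := hclass e
  rw [hc0 e, Int.cast_zero, zero_mul] at this
  exact (mul_eq_zero.1 this).resolve_left hVpos.ne'

end Descent

section Descent

variable {m : ℕ}

/-- Passing to one parity class of exponents halves the box and doubles the set of nodes. -/
theorem exists_auxVanishes_half {E : ℕ}
    (hE : ∀ (a : Fin (m + 1) → ℕ) (r : Fin (m + 1) → ℝ) (H x : ℝ), (∀ i, r i ^ 2 = a i) →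
      (∀ i, (a i : ℝ) ≤ H) → 2 ≤ H → IsMultiquadratic (m + 1) r H x → x ≠ 0 → 1 ≤ |x| * H ^ E)
    {u v : Fin (m + 1) → ℕ} (hu : ∀ i, 0 < u i) (hv : ∀ i, 0 < v i)
    {h : Fin (m + 1) → ℝ} (hh : ∀ i, 0 ≤ h i)
    (huh : ∀ i, Real.log (u i) ≤ h i) (hvh : ∀ i, Real.log (v i) ≤ h i)
    (hind : ∀ I : Finset (Fin (m + 1)), I.Nonempty → ¬ IsSquare (∏ i ∈ I, u i * v i))
    {b : Fin (m + 1) → ℤ} (hb : b 0 ≠ 0) {L : Fin (m + 1) → ℕ} {p : (Fin (m + 1) → ℕ) → ℤ}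
    {T S : ℕ} (hS : 1 ≤ S)
    (hvan : AuxVanishes (fun i => Real.log (u i) - Real.log (v i)) b L p (2 * T) S)
    {X G Q W d H : ℝ} (hX : ∀ l, |(p l : ℝ)| ≤ X) (hp : ∃ l ∈ exponentBox L, p l ≠ 0)
    (hG1 : 1 ≤ G) (hG : ∀ l ∈ exponentBox L, ∀ j, |(crossForm b l j : ℝ)| ≤ G)
    (hQ : (exponentBox L).card * (X * G ^ T) ≤ Q)
    (hW : ∑ i, L i * h i ≤ W)
    (hd : L 0 * |∑ i, b i * (Real.log (u i) - Real.log (v i))| ≤ d)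
    (hQH : Q * Real.exp (4 * S * W) ≤ H) (haH : ∀ i, ((u i * v i : ℕ) : ℝ) ≤ H) (hH2 : 2 ≤ H)
    (hnum : Real.exp (4 * S * W) *
      (2 * (Q * Real.exp (2 * S * W) * (d * Real.exp (W + d)) * (S * T : ℕ) *
        (20 * S) ^ (S * T)) + Q * Real.exp (18 * S * W) * (1 / 4) ^ (S * T)) * H ^ E < 1) :
    ∃ p' : (Fin (m + 1) → ℕ) → ℤ,
      AuxVanishes (fun i => Real.log (u i) - Real.log (v i)) b (fun i => L i / 2) p' T (2 * S) ∧
      (∀ l, |(p' l : ℝ)| ≤ X) ∧ ∃ l ∈ exponentBox fun i => L i / 2, p' l ≠ 0 := by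
  classical
  obtain ⟨l₀, hl₀, hpl₀⟩ := hp
  set e := parityVec l₀ with he
  set lift : (Fin (m + 1) → ℕ) → Fin (m + 1) → ℕ := fun l i => e i + 2 * l i with hlift
  have hX0 : 0 ≤ X := (abs_nonneg _).trans (hX 0)
  have hlift_half : ∀ l, parityVec l = e → lift (fun i => l i / 2) = l := by
    intro l hl
    funext i
    have h1 : (e i : ℕ) = l i % 2 := by rw [← hl]; rfl
    rw [hlift]
    dsimp only
    omega
  refine ⟨fun l => if lift l ∈ exponentBox L then p (lift l) else 0, ?_, ?_, ?_⟩
  · intro P hP s hs hs4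
    set θ : Fin (m + 1) → ℝ := fun i => Real.log (u i) - Real.log (v i) with hθ
    set e' : Fin (m + 1) → ℕ := fun i => e i with he'
    set f : Fin m → MvPolynomial (Fin m) ℝ := fun j =>
      MvPolynomial.C (1 / 2) * MvPolynomial.X j - MvPolynomial.C ((crossForm b e' j : ℝ) / 2)
      with hf
    have hfdeg : ∀ j, (f j).totalDegree ≤ 1 := by
      intro j
      refine (MvPolynomial.totalDegree_sub_C_le _ _).trans ?_
      refine (MvPolynomial.totalDegree_mul _ _).trans ?_
      simp
    have h0 := class_sum_eq_zero hE hu hv hh huh hvh hind hb hS hvan hX hG1 hG hQ hW hd hQH haH hH2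
      hnum ((totalDegree_bind₁_le hfdeg P).trans_lt hP) hs (by omega) e
    have hcross : ∀ l j, (crossForm b (lift l) j : ℝ) = crossForm b e' j + 2 * crossForm b l j := by
      intro l j
      simp only [crossForm, hlift, he']
      push_cast
      ring
    have hlog : ∀ l, logMonomial θ (lift l) = logMonomial θ e' + 2 * logMonomial θ l := by
      intro l
      simp only [logMonomial, hlift, he', Finset.mul_sum, ← Finset.sum_add_distrib]
      refine Finset.sum_congr rfl fun i _ => ?_
      push_cast
      ring
    have heval : ∀ l, MvPolynomial.eval (fun j => (crossForm b (lift l) j : ℝ))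
        (MvPolynomial.bind₁ f P) = MvPolynomial.eval (fun j => (crossForm b l j : ℝ)) P := by
      intro l
      rw [MvPolynomial.eval, MvPolynomial.eval₂Hom_bind₁]
      congr 2
      funext j
      simp only [hf, map_sub, map_mul, MvPolynomial.eval₂Hom_C, MvPolynomial.eval₂Hom_X',
        RingHom.id_apply, hcross]
      ring
    have hsum : ∑ l ∈ exponentBox L with parityVec l = e,
        p l * Real.exp (s / 2 * logMonomial θ l) *
          MvPolynomial.eval (fun j => (crossForm b l j : ℝ)) (MvPolynomial.bind₁ f P) =
        Real.exp (s / 2 * logMonomial θ e') * auxSum θ b (fun i => L i / 2)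
          (fun l => if lift l ∈ exponentBox L then p (lift l) else 0) P s := by
      rw [auxSum, Finset.mul_sum, ← Finset.sum_filter_add_sum_filter_not
        (exponentBox fun i => L i / 2) (fun l => lift l ∈ exponentBox L),
        Finset.sum_eq_zero (s := Finset.filter (fun l => ¬ lift l ∈ exponentBox L) _), add_zero]
      · refine Finset.sum_nbij' (fun l i => l i / 2) lift ?_ ?_ ?_ ?_ ?_
        · intro l hl
          rw [Finset.mem_filter] at hl ⊢
          refine ⟨mem_exponentBox.2 fun i => Nat.div_le_div_right (mem_exponentBox.1 hl.1 i), ?_⟩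
          rw [hlift_half l hl.2]
          exact hl.1
        · intro l hl
          rw [Finset.mem_filter] at hl ⊢
          refine ⟨hl.2, ?_⟩
          funext i
          apply Fin.ext
          change (e i + 2 * l i) % 2 = e i
          have := (e i).2
          omega
        · intro l hl
          exact hlift_half l (Finset.mem_filter.1 hl).2
        · intro l _
          funext i
          change (e i + 2 * l i) / 2 = l i
          have := (e i).2
          omega
        · intro l hl
          rw [Finset.mem_filter] at hl
          set k : Fin (m + 1) → ℕ := fun i => l i / 2 with hk
          have hkl : lift k = l := hlift_half l hl.2
          rw [← hkl, heval, hlog]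
          rw [hkl, if_pos hl.1, show (s : ℝ) / 2 * (logMonomial θ e' + 2 * logMonomial θ k) =
            s / 2 * logMonomial θ e' + s * logMonomial θ k by ring, Real.exp_add]
          ring
      · intro l hl
        rw [if_neg (Finset.mem_filter.1 hl).2]
        simp
    rw [hsum] at h0
    exact (mul_eq_zero.1 h0).resolve_left (Real.exp_ne_zero _)
  · intro l
    dsimp only
    split_ifs
    · exact hX _
    · simpa using hX0
  · refine ⟨fun i => l₀ i / 2,
      mem_exponentBox.2 fun i => Nat.div_le_div_right (mem_exponentBox.1 hl₀ i), ?_⟩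
    dsimp only
    rw [hlift_half l₀ rfl, if_pos hl₀]
    exact hpl₀

end Descent

section Siegel

attribute [local instance] Matrix.seminormedAddCommGroup

theorem exists_int_vec_of_two_mul_card_le {α β : Type*} [Fintype α] [Fintype β]
    (A : Matrix α β ℤ) (hα : 0 < Fintype.card α) (hβ : 2 * Fintype.card α ≤ Fintype.card β)
    {R : ℝ} (hR : 1 ≤ R) (hA : ∀ i j, |(A i j : ℝ)| ≤ R) :
    ∃ t : β → ℤ, t ≠ 0 ∧ A.mulVec t = 0 ∧ ∀ j, |(t j : ℝ)| ≤ Fintype.card β * R := by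
  obtain ⟨t, ht, hAt, hnorm⟩ := Int.Matrix.exists_ne_zero_int_vec_norm_le A (by omega) hα
  refine ⟨t, ht, hAt, fun j => ?_⟩
  have h1 : |(t j : ℝ)| ≤ ‖t‖ := by
    have := norm_le_pi_norm t j
    rwa [Int.norm_eq_abs] at this
  refine h1.trans (hnorm.trans ?_)
  have hAR : ‖A‖ ≤ R := (Matrix.norm_le_iff (by linarith)).2 fun i j => by
    rw [Int.norm_eq_abs]; exact hA i j
  have hα' : (1 : ℝ) ≤ Fintype.card α := by exact_mod_cast hα
  have hβ' : 2 * (Fintype.card α : ℝ) ≤ Fintype.card β := by exact_mod_cast hβ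
  have hbase : 1 ≤ (Fintype.card β : ℝ) * max 1 ‖A‖ :=
    one_le_mul_of_one_le_of_one_le (by linarith) (le_max_left _ _)
  calc _ ≤ ((Fintype.card β : ℝ) * max 1 ‖A‖) ^ (1 : ℝ) := by
        refine Real.rpow_le_rpow_of_exponent_le hbase ?_
        rw [div_le_one (by linarith)]
        linarith
    _ = (Fintype.card β : ℝ) * max 1 ‖A‖ := Real.rpow_one _
    _ ≤ _ := by
        have := max_le hR hAR
        gcongr

end Siegel

section Start

variable {m : ℕ}

/-- The integer `∏ i, v i ^ M i * (u i / v i) ^ (s * l i)`. -/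
def clearedMonomial (u v M l : Fin (m + 1) → ℕ) (s : ℕ) : ℕ :=
  ∏ i, (u i ^ (l i * s) * v i ^ (M i - l i * s))

theorem exp_logMonomial {u v : Fin (m + 1) → ℕ} (hu : ∀ i, 0 < u i) (hv : ∀ i, 0 < v i)
    {M l : Fin (m + 1) → ℕ} {s : ℕ} (hM : ∀ i, l i * s ≤ M i) :
    (∏ i, (v i : ℝ) ^ M i) *
      Real.exp (s * logMonomial (fun i => Real.log (u i) - Real.log (v i)) l) =
      clearedMonomial u v M l s := by
  rw [logMonomial, Finset.mul_sum, Real.exp_sum, ← Finset.prod_mul_distrib, clearedMonomial,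
    Nat.cast_prod]
  refine Finset.prod_congr rfl fun i _ => ?_
  have hui : (0 : ℝ) < u i := by exact_mod_cast hu i
  have hvi : (0 : ℝ) < v i := by exact_mod_cast hv i
  push_cast
  have key : ∀ a b : ℝ, Real.exp b ^ M i * Real.exp (s * (l i * (a - b))) =
      Real.exp a ^ (l i * s) * Real.exp b ^ (M i - l i * s) := by
    intro a b
    simp only [← Real.exp_nat_mul, ← Real.exp_add]
    rw [Nat.cast_sub (hM i)]
    congr 1
    push_cast
    ring
  have := key (Real.log (u i)) (Real.log (v i))
  rwa [Real.exp_log hui, Real.exp_log hvi] at this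

theorem clearedMonomial_le {u v : Fin (m + 1) → ℕ} (hu : ∀ i, 0 < u i) (hv : ∀ i, 0 < v i)
    {h : Fin (m + 1) → ℝ}
    (huh : ∀ i, Real.log (u i) ≤ h i) (hvh : ∀ i, Real.log (v i) ≤ h i)
    {M l : Fin (m + 1) → ℕ} {s : ℕ} (hM : ∀ i, l i * s ≤ M i) :
    (clearedMonomial u v M l s : ℝ) ≤ Real.exp (∑ i, M i * h i) := by
  rw [clearedMonomial, Nat.cast_prod, Real.exp_sum]
  refine Finset.prod_le_prod (fun _ _ => by positivity) fun i _ => ?_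
  have hui : (u i : ℝ) ≤ Real.exp (h i) := by
    rw [← Real.log_le_iff_le_exp (by exact_mod_cast hu i)]; exact huh i
  have hvi : (v i : ℝ) ≤ Real.exp (h i) := by
    rw [← Real.log_le_iff_le_exp (by exact_mod_cast hv i)]; exact hvh i
  push_cast
  calc (u i : ℝ) ^ (l i * s) * (v i : ℝ) ^ (M i - l i * s)
      ≤ Real.exp (h i) ^ (l i * s) * Real.exp (h i) ^ (M i - l i * s) := by gcongr
    _ = Real.exp (h i) ^ M i := by
        rw [← pow_add, Nat.add_sub_cancel' (hM i)]
    _ = _ := by rw [← Real.exp_nat_mul]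

/-- An auxiliary function with many zeros, given by the pigeonhole principle. -/
theorem exists_auxVanishes {u v : Fin (m + 1) → ℕ} (hu : ∀ i, 0 < u i) (hv : ∀ i, 0 < v i)
    {h : Fin (m + 1) → ℝ}
    (huh : ∀ i, Real.log (u i) ≤ h i) (hvh : ∀ i, Real.log (v i) ≤ h i)
    {b : Fin (m + 1) → ℤ} {L : Fin (m + 1) → ℕ} {T S : ℕ} (hT : 1 ≤ T) (hS : 1 ≤ S)
    (hcard : 2 * (S * T ^ m) ≤ (exponentBox L).card) {G W : ℝ} (hG1 : 1 ≤ G)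
    (hG : ∀ l ∈ exponentBox L, ∀ j, |(crossForm b l j : ℝ)| ≤ G) (hW0 : 0 ≤ W)
    (hW : ∑ i, L i * h i ≤ W) :
    ∃ p : (Fin (m + 1) → ℕ) → ℤ,
      AuxVanishes (fun i => Real.log (u i) - Real.log (v i)) b L p T S ∧
      (∀ l, |(p l : ℝ)| ≤ (exponentBox L).card * (G ^ (m * T) * Real.exp (2 * S * W))) ∧
      ∃ l ∈ exponentBox L, p l ≠ 0 := by
  classical
  set M : Fin (m + 1) → ℕ := fun i => 2 * S * L i with hMdef
  have hM : ∀ l ∈ exponentBox L, ∀ s < 2 * S, ∀ i, l i * s ≤ M i := by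
    intro l hl s hs i
    rw [hMdef, mul_comm]
    exact Nat.mul_le_mul hs.le (mem_exponentBox.1 hl i)
  have hMW : ∑ i, (M i : ℝ) * h i ≤ 2 * S * W := by
    calc ∑ i, (M i : ℝ) * h i = 2 * S * ∑ i, L i * h i := by
          rw [Finset.mul_sum]
          refine Finset.sum_congr rfl fun i _ => ?_
          rw [hMdef]; push_cast; ring
      _ ≤ _ := by gcongr
  have hVpos : 0 < ∏ i, (v i : ℝ) ^ M i :=
    Finset.prod_pos fun i _ => pow_pos (by exact_mod_cast hv i) _
  set A : Matrix (Fin S × (Fin m → Fin T)) (exponentBox L) ℤ := fun a l =>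
    (∏ j, crossForm b l j ^ (a.2 j : ℕ)) * clearedMonomial u v M l (2 * a.1 + 1) with hA
  have hcardα : Fintype.card (Fin S × (Fin m → Fin T)) = S * T ^ m := by simp
  have hcardβ : Fintype.card (exponentBox L) = (exponentBox L).card := Fintype.card_coe _
  have hR : 1 ≤ G ^ (m * T) * Real.exp (2 * S * W) :=
    one_le_mul_of_one_le_of_one_le (one_le_pow₀ hG1) (Real.one_le_exp (by positivity))
  obtain ⟨t, ht, hAt, htle⟩ := exists_int_vec_of_two_mul_card_le A
    (by rw [hcardα]; positivity) (by rw [hcardα, hcardβ]; exact hcard) hR (by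
      intro a l
      rw [hA]
      push_cast
      rw [abs_mul, Nat.abs_cast]
      have h1 := (clearedMonomial_le hu hv huh hvh
        (hM l l.2 (2 * a.1 + 1) (by omega))).trans (Real.exp_le_exp.2 hMW)
      refine mul_le_mul ?_ h1 (Nat.cast_nonneg _) (by positivity)
      rw [Finset.abs_prod]
      calc ∏ j, |(crossForm b l j : ℝ) ^ (a.2 j : ℕ)| ≤ ∏ _j : Fin m, G ^ T := by
            refine Finset.prod_le_prod (fun _ _ => abs_nonneg _) fun j _ => ?_
            rw [abs_pow]
            have := hG l l.2 j
            calc |(crossForm b l j : ℝ)| ^ (a.2 j : ℕ) ≤ G ^ (a.2 j : ℕ) := by gcongr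
              _ ≤ G ^ T := pow_le_pow_right₀ hG1 (a.2 j).2.le
        _ = G ^ (m * T) := by
            rw [Finset.prod_const, Finset.card_univ, Fintype.card_fin, ← pow_mul, mul_comm])
  rw [hcardβ] at htle
  have hpval : ∀ l : exponentBox L, (fun l => if hl : l ∈ exponentBox L then t ⟨l, hl⟩ else 0)
      (l : Fin (m + 1) → ℕ) = t l := fun l => by
    dsimp only
    rw [dif_pos l.2]
  refine ⟨fun l => if hl : l ∈ exponentBox L then t ⟨l, hl⟩ else 0, ?_, ?_, ?_⟩
  · intro P hP s hs hsS
    set θ : Fin (m + 1) → ℝ := fun i => Real.log (u i) - Real.log (v i) with hθ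
    set p : (Fin (m + 1) → ℕ) → ℤ := fun l => if hl : l ∈ exponentBox L then t ⟨l, hl⟩ else 0
      with hp
    have : auxSum θ b L p P s = ∑ l ∈ exponentBox L, p l * Real.exp (s * logMonomial θ l) *
        MvPolynomial.eval (fun j => (crossForm b l j : ℝ)) P :=
      Finset.sum_congr rfl fun l _ => by ring
    rw [this]
    refine sum_mul_eval_eq_zero (T := T) (fun d hd => ?_) hP
    obtain ⟨i, rfl⟩ := hs
    rw [Finsupp.sum_fintype _ _ (by simp)] at hd
    have hdT : ∀ j, d j < T := fun j =>
      (Finset.single_le_sum (fun _ _ => Nat.zero_le _) (Finset.mem_univ j)).trans_lt hd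
    have heq := congrFun hAt (⟨i, by omega⟩, fun j => ⟨d j, hdT j⟩)
    rw [Matrix.mulVec, dotProduct, Pi.zero_apply] at heq
    refine (mul_eq_zero.1 (?_ : (∏ i, (v i : ℝ) ^ M i) * _ = 0)).resolve_left hVpos.ne'
    rw [← Int.cast_zero (R := ℝ), ← heq, Finset.mul_sum, ← Finset.sum_coe_sort]
    push_cast
    refine Finset.sum_congr rfl fun l _ => ?_
    have h1 := exp_logMonomial hu hv (hM l l.2 (2 * i + 1) hsS)
    rw [← hpval l, hA]
    push_cast at h1 ⊢
    rw [← h1]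
    ring
  · intro l
    dsimp only
    split_ifs with hl
    · exact htle _
    · simp only [Int.cast_zero, abs_zero]
      positivity
  · obtain ⟨l, hl⟩ := Function.ne_iff.1 ht
    refine ⟨l, l.2, ?_⟩
    rw [hpval l]
    exact hl

end Start

theorem descent_numerics {n E K N : ℕ} {S W d y ℓ : ℝ} (hn : 1 ≤ n)
    (hK : 2 * ((38 + 20 * E) * n + 2) ≤ K) (hy : 1 ≤ y) (hℓ : 1 ≤ ℓ) (hSW : S * W = n * y)
    (hS : 1 ≤ S) (hW : 0 ≤ W) (_hd : 0 ≤ d) (hN : 2 * (N : ℝ) = K * y)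
    (hS20 : 20 * S ≤ Real.exp (3 * ℓ)) (hdle : d ≤ Real.exp (2 * ℓ - 8 * K * ℓ * y)) :
    Real.exp (4 * S * W) *
      (2 * (Real.exp (16 * n * y) * Real.exp (2 * S * W) * (d * Real.exp (W + d)) * N *
        (20 * S) ^ N) + Real.exp (16 * n * y) * Real.exp (18 * S * W) * (1 / 4) ^ N) *
      Real.exp (20 * n * y) ^ E < 1 := by
  have hn' : (1 : ℝ) ≤ n := by exact_mod_cast hn
  have hK' : 2 * ((38 + 20 * (E : ℝ)) * n + 2) ≤ K := by exact_mod_cast hK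
  have hE : (0 : ℝ) ≤ E := Nat.cast_nonneg _
  have hEn : (0 : ℝ) ≤ E * n := by positivity
  have hEny : (0 : ℝ) ≤ E * n * y := by positivity
  have hny : 1 ≤ n * y := one_le_mul_of_one_le_of_one_le hn' hy
  have hK0 : (80 : ℝ) ≤ K := by nlinarith
  have hKy : 2 * ((38 + 20 * (E : ℝ)) * n + 2) * y ≤ K * y := by gcongr
  have hKyℓ : (K : ℝ) * y ≤ K * ℓ * y := by
    have : (K : ℝ) * 1 * y ≤ K * ℓ * y := by gcongr
    linarith
  have hKℓ : (K : ℝ) * ℓ ≤ K * ℓ * y := le_mul_of_one_le_right (by positivity) hy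
  have h80 : 80 * ℓ ≤ (K : ℝ) * ℓ := by gcongr
  have hWny : W ≤ n * y := by rw [← hSW]; exact le_mul_of_one_le_left hW hS
  have hd1 : d ≤ 1 := hdle.trans (Real.exp_le_one_iff.2 (by linarith))
  have hNexp : (N : ℝ) ≤ Real.exp (K * y) := by
    have := Real.add_one_le_exp (K * y : ℝ)
    nlinarith
  have hSN : (20 * S) ^ N ≤ Real.exp (3 * K * ℓ * y) := by
    calc (20 * S) ^ N ≤ Real.exp (3 * ℓ) ^ N := by gcongr
      _ = Real.exp (N * (3 * ℓ)) := (Real.exp_nat_mul _ _).symm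
      _ ≤ _ := by
        rw [Real.exp_le_exp, show (N : ℝ) = K * y / 2 by linarith]
        nlinarith
  have hquarter : ((1 : ℝ) / 4) ^ N ≤ Real.exp (-(K * y / 2)) := by
    have h1 : (1 : ℝ) / 4 ≤ Real.exp (-1) := by
      rw [Real.exp_neg, one_div]
      gcongr
      linarith [Real.exp_one_lt_d9]
    calc ((1 : ℝ) / 4) ^ N ≤ Real.exp (-1) ^ N := by gcongr
      _ = Real.exp (N * (-1)) := (Real.exp_nat_mul _ _).symm
      _ = _ := by rw [show (N : ℝ) = K * y / 2 by linarith]; ring_nf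
  have hexp2 : Real.exp (-2) ≤ 1 / 4 := by
    rw [show (-2 : ℝ) = -1 + -1 by norm_num, Real.exp_add, Real.exp_neg]
    have h1 : (2 : ℝ) ≤ Real.exp 1 := by linarith [Real.exp_one_gt_d9]
    have h2 : (Real.exp 1)⁻¹ ≤ 2⁻¹ := by gcongr
    have h3 : 0 < (Real.exp 1)⁻¹ := by positivity
    nlinarith
  have hS4 : ∀ c : ℝ, c * S * W = c * (n * y) := fun c => by rw [← hSW]; ring
  have hfirst : Real.exp (4 * S * W) * (Real.exp (16 * n * y) * Real.exp (2 * S * W) *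
      (d * Real.exp (W + d)) * N * (20 * S) ^ N) * Real.exp (20 * n * y) ^ E ≤ Real.exp (-2) := by
    calc _ ≤ Real.exp (4 * (n * y)) * (Real.exp (16 * n * y) * Real.exp (2 * (n * y)) *
        (Real.exp (2 * ℓ - 8 * K * ℓ * y) * Real.exp (n * y + 1)) * Real.exp (K * y) *
          Real.exp (3 * K * ℓ * y)) * Real.exp (20 * n * y) ^ E := by
          rw [hS4, hS4]
          gcongr
      _ = Real.exp (4 * (n * y) + (16 * n * y + 2 * (n * y) +
          (2 * ℓ - 8 * K * ℓ * y + (n * y + 1)) + K * y + 3 * K * ℓ * y) +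
            E * (20 * n * y)) := by
          simp only [Real.exp_add, Real.exp_nat_mul]
      _ ≤ _ := by
          rw [Real.exp_le_exp]
          nlinarith
  have hsecond : Real.exp (4 * S * W) * (Real.exp (16 * n * y) * Real.exp (18 * S * W) *
      (1 / 4) ^ N) * Real.exp (20 * n * y) ^ E ≤ Real.exp (-2) := by
    calc _ ≤ Real.exp (4 * (n * y)) * (Real.exp (16 * n * y) * Real.exp (18 * (n * y)) *
        Real.exp (-(K * y / 2))) * Real.exp (20 * n * y) ^ E := by
          rw [hS4, hS4]
          gcongr
      _ = Real.exp (4 * (n * y) + (16 * n * y + 18 * (n * y) + -(K * y / 2)) +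
            E * (20 * n * y)) := by
          simp only [Real.exp_add, Real.exp_nat_mul]
      _ ≤ _ := by
          rw [Real.exp_le_exp]
          nlinarith
  have hsplit : Real.exp (4 * S * W) *
      (2 * (Real.exp (16 * n * y) * Real.exp (2 * S * W) * (d * Real.exp (W + d)) * N *
        (20 * S) ^ N) + Real.exp (16 * n * y) * Real.exp (18 * S * W) * (1 / 4) ^ N) *
      Real.exp (20 * n * y) ^ E = 2 * (Real.exp (4 * S * W) * (Real.exp (16 * n * y) *
        Real.exp (2 * S * W) * (d * Real.exp (W + d)) * N * (20 * S) ^ N) *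
        Real.exp (20 * n * y) ^ E) + Real.exp (4 * S * W) * (Real.exp (16 * n * y) *
        Real.exp (18 * S * W) * (1 / 4) ^ N) * Real.exp (20 * n * y) ^ E := by ring
  rw [hsplit]
  linarith

section Main

variable {m : ℕ}

theorem card_exponentBox (L : Fin (m + 1) → ℕ) : (exponentBox L).card = ∏ i, (L i + 1) := by
  simp [exponentBox]

theorem abs_crossForm_le {b : Fin (m + 1) → ℤ} {L l : Fin (m + 1) → ℕ} {B R : ℝ}
    (hb : ∀ i, |(b i : ℝ)| ≤ B) (hL : ∀ i, (L i : ℝ) ≤ R) (hl : l ∈ exponentBox L) (j : Fin m) :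
    |(crossForm b l j : ℝ)| ≤ 2 * (B * R) := by
  have hl' : ∀ i, (l i : ℝ) ≤ R := fun i =>
    le_trans (by exact_mod_cast mem_exponentBox.1 hl i) (hL i)
  have hB : 0 ≤ B := (abs_nonneg _).trans (hb 0)
  have h1 : ∀ i k, |(b i : ℝ) * l k| ≤ B * R := fun i k => by
    rw [abs_mul, Nat.abs_cast]
    have := hb i
    have := hl' k
    gcongr
  rw [crossForm]
  push_cast
  refine (abs_sub _ _).trans ?_
  linarith [h1 0 j.succ, h1 j.succ 0]

set_option maxHeartbeats 2000000 in
/-- The descent, for given parameters. -/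
theorem linear_form_lower_bound_of_parameters {E K J ℓ : ℕ}
    (hE : ∀ (a : Fin (m + 1) → ℕ) (r : Fin (m + 1) → ℝ) (H x : ℝ), (∀ i, r i ^ 2 = a i) →
      (∀ i, (a i : ℝ) ≤ H) → 2 ≤ H → IsMultiquadratic (m + 1) r H x → x ≠ 0 → 1 ≤ |x| * H ^ E)
    (hK : 2 * ((38 + 20 * E) * (m + 1) + 2) ≤ K)
    {u v : Fin (m + 1) → ℕ} (hu : ∀ i, 0 < u i) (hv : ∀ i, 0 < v i)
    {h : Fin (m + 1) → ℝ} (hh : ∀ i, 1 ≤ h i)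
    (huh : ∀ i, Real.log (u i) ≤ h i) (hvh : ∀ i, Real.log (v i) ≤ h i)
    (hind : ∀ I : Finset (Fin (m + 1)), I.Nonempty → ¬ IsSquare (∏ i ∈ I, u i * v i))
    {b : Fin (m + 1) → ℤ} (hb : b 0 ≠ 0) (hbℓ : ∀ i, |(b i : ℝ)| ≤ Real.exp ℓ) (hℓ : 1 ≤ ℓ)
    (hT : 2 * (K : ℝ) ^ (m + 2) * ℓ * ∏ i, h i ≤ 2 ^ J)
    (hTℓ : (2 : ℝ) ^ J ≤ Real.exp (2 * ℓ)) (hSℓ : 20 * (K : ℝ) * ℓ ≤ Real.exp ℓ) :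
    Real.exp (-(8 * K * ℓ ^ 2 * 2 ^ J)) < |∑ i, b i * (Real.log (u i) - Real.log (v i))| := by
  by_contra! hΛ
  set θ : Fin (m + 1) → ℝ := fun i => Real.log (u i) - Real.log (v i) with hθ
  have hK80 : 80 ≤ K := by nlinarith
  have hK0 : (0 : ℝ) < K := by
    have : 0 < K := by omega
    exact_mod_cast this
  have hh0 : ∀ i, 0 < h i := fun i => by linarith [hh i]
  have hℓ1 : (1 : ℝ) ≤ ℓ := by exact_mod_cast hℓ
  set y : ℝ := ℓ * 2 ^ J with hy
  have hT1 : (1 : ℝ) ≤ 2 ^ J := one_le_pow₀ one_le_two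
  have hy1 : 1 ≤ y := one_le_mul_of_one_le_of_one_le hℓ1 hT1
  have hℓy : (ℓ : ℝ) ≤ y := le_mul_of_one_le_right (by positivity) hT1
  have hTy : (2 : ℝ) ^ J ≤ y := le_mul_of_one_le_left (by positivity) hℓ1
  set L : Fin (m + 1) → ℕ := fun i => ⌊(2 : ℝ) ^ J / (K * h i)⌋₊ with hL
  have hLh : ∀ i, (L i : ℝ) * h i ≤ 2 ^ J / K := by
    intro i
    have h1 : (L i : ℝ) ≤ 2 ^ J / (K * h i) := Nat.floor_le (by have := hh0 i; positivity)
    calc (L i : ℝ) * h i ≤ 2 ^ J / (K * h i) * h i := by have := hh0 i; gcongr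
      _ = _ := by have := (hh0 i).ne'; field_simp
  have hLK : ∀ i, (L i : ℝ) ≤ 2 ^ J / K := fun i =>
    (le_mul_of_one_le_right (Nat.cast_nonneg _) (hh i)).trans (hLh i)
  have hK1 : (80 : ℝ) ≤ K := by exact_mod_cast hK80
  have hLT : ∀ i, (L i : ℝ) ≤ 2 ^ J := fun i =>
    (hLK i).trans (div_le_self (by positivity) (by linarith))
  have hLlt : ∀ i, L i < 2 ^ J := by
    intro i
    have h1 : (L i : ℝ) < 2 ^ J := (hLK i).trans_lt (div_lt_self (by positivity) (by linarith))
    exact_mod_cast h1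
  have h2ℓ : (2 : ℝ) ≤ Real.exp ℓ := by
    have := Real.add_one_le_exp (ℓ : ℝ)
    linarith
  -- the successive boxes
  have hLk : ∀ k i, ((L i / 2 ^ k : ℕ) : ℝ) ≤ L i := fun k i => by
    exact_mod_cast Nat.div_le_self _ _
  have hGk : ∀ k, ∀ l ∈ exponentBox (fun i => L i / 2 ^ k), ∀ j,
      |(crossForm b l j : ℝ)| ≤ Real.exp (4 * ℓ) := by
    intro k l hl j
    refine (abs_crossForm_le hbℓ (fun i => (hLk k i).trans (hLT i)) hl j).trans ?_
    calc 2 * (Real.exp ℓ * 2 ^ J) ≤ Real.exp ℓ * (Real.exp ℓ * Real.exp (2 * ℓ)) := by gcongr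
      _ = _ := by rw [← Real.exp_add, ← Real.exp_add]; ring_nf
  obtain ⟨n, hn⟩ : ∃ n : ℕ, n = m + 1 := ⟨_, rfl⟩
  have hcardk : ∀ k, ((exponentBox fun i => L i / 2 ^ k).card : ℝ) ≤
      Real.exp (3 * n * y) := by
    intro k
    rw [card_exponentBox, Nat.cast_prod]
    calc ∏ i, ((L i / 2 ^ k + 1 : ℕ) : ℝ) ≤ ∏ _i : Fin (m + 1), Real.exp (3 * y) := by
          refine Finset.prod_le_prod (fun _ _ => by positivity) fun i _ => ?_
          push_cast
          calc ((L i / 2 ^ k : ℕ) : ℝ) + 1 ≤ 2 ^ J + 2 ^ J := by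
                linarith [(hLk k i).trans (hLT i)]
            _ = 2 * 2 ^ J := by ring
            _ ≤ Real.exp ℓ * Real.exp (2 * ℓ) := by gcongr
            _ = Real.exp (3 * ℓ) := by rw [← Real.exp_add]; ring_nf
            _ ≤ _ := by gcongr
      _ = _ := by
          rw [Finset.prod_const, Finset.card_univ, Fintype.card_fin, ← Real.exp_nat_mul, hn]
          ring_nf
  have hn1 : (1 : ℝ) ≤ n := by rw [hn]; exact_mod_cast Nat.le_add_left 1 m
  have hny : (0 : ℝ) ≤ n * y := by positivity
  have hyny : y ≤ n * y := le_mul_of_one_le_left (by positivity) hn1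
  have hWk : ∀ k, ∑ i, ((L i / 2 ^ k : ℕ) : ℝ) * h i ≤ n * (2 ^ J / 2 ^ k / K) := by
    intro k
    calc ∑ i, ((L i / 2 ^ k : ℕ) : ℝ) * h i ≤ ∑ _i : Fin (m + 1), (2 : ℝ) ^ J / 2 ^ k / K := by
          refine Finset.sum_le_sum fun i _ => ?_
          have h1 : ((L i / 2 ^ k : ℕ) : ℝ) ≤ L i / 2 ^ k := by
            have := @Nat.cast_div_le ℝ _ _ _ (L i) (2 ^ k)
            exact_mod_cast this
          calc ((L i / 2 ^ k : ℕ) : ℝ) * h i ≤ L i / 2 ^ k * h i := by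
                have := hh0 i; gcongr
            _ = L i * h i / 2 ^ k := by ring
            _ ≤ 2 ^ J / K / 2 ^ k := by have := hLh i; gcongr
            _ = _ := by ring
      _ = _ := by rw [Finset.sum_const, Finset.card_univ, Fintype.card_fin, nsmul_eq_mul, hn]
  have hcard : 2 * (K * ℓ * (2 ^ J) ^ m) ≤ (exponentBox L).card := by
    have h1 : (2 * (K * ℓ * (2 ^ J) ^ m) : ℝ) ≤ ((exponentBox L).card : ℝ) := by
      rw [card_exponentBox, Nat.cast_prod]
      have h2 : ∏ i, (2 : ℝ) ^ J / (K * h i) ≤ ∏ i, ((L i + 1 : ℕ) : ℝ) := by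
        refine Finset.prod_le_prod (fun i _ => by have := hh0 i; positivity) fun i _ => ?_
        push_cast
        exact (Nat.lt_floor_add_one _).le
      refine le_trans ?_ h2
      rw [Finset.prod_div_distrib, Finset.prod_mul_distrib, Finset.prod_const, Finset.prod_const,
        Finset.card_univ, Fintype.card_fin]
      have hΩ : 0 < ∏ i, h i := Finset.prod_pos fun i _ => hh0 i
      rw [le_div_iff₀ (by positivity), pow_succ ((2 : ℝ) ^ J) m]
      calc 2 * (K * ℓ * (2 ^ J) ^ m) * ((K : ℝ) ^ (m + 1) * ∏ i, h i)
          = (2 ^ J) ^ m * (2 * (K : ℝ) ^ (m + 2) * ℓ * ∏ i, h i) := by ring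
        _ ≤ _ := by gcongr
    exact_mod_cast h1
  obtain ⟨X, hX⟩ : ∃ X : ℝ, X = Real.exp (9 * n * y) := ⟨_, rfl⟩
  have hX0 : 0 ≤ X := by rw [hX]; positivity
  have hdescent : ∀ k ≤ J, ∃ p : (Fin (m + 1) → ℕ) → ℤ,
      AuxVanishes θ b (fun i => L i / 2 ^ k) p (2 ^ (J - k)) (2 ^ k * (K * ℓ)) ∧
      (∀ l, |(p l : ℝ)| ≤ X) ∧ ∃ l ∈ exponentBox (fun i => L i / 2 ^ k), p l ≠ 0 := by
    intro k
    induction k with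
    | zero =>
      intro _
      have h0 : (fun i => L i / 2 ^ 0) = L := by simp
      have hG0 := hGk 0
      have hW0 := hWk 0
      have hc0 := hcardk 0
      rw [h0] at hG0 hc0 ⊢
      simp only [pow_zero, Nat.div_one, div_one] at hW0
      obtain ⟨p, hp1, hp2, hp3⟩ := exists_auxVanishes hu hv huh hvh (b := b) (L := L) (T := 2 ^ J)
        (S := K * ℓ) Nat.one_le_two_pow (Nat.mul_pos (by omega) hℓ) hcard
        (G := Real.exp (4 * ℓ)) (W := n * (2 ^ J / K)) (Real.one_le_exp (by positivity)) hG0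
        (by positivity) hW0
      refine ⟨p, by simpa using hp1, fun l => (hp2 l).trans ?_, hp3⟩
      calc _ ≤ Real.exp (3 * n * y) * (Real.exp (4 * m * y) * Real.exp (2 * n * y)) := by
            refine mul_le_mul hc0 (mul_le_mul (le_of_eq ?_) (le_of_eq ?_) (by positivity)
              (by positivity)) (by positivity) (by positivity)
            · rw [← Real.exp_nat_mul, hy]
              push_cast
              ring_nf
            · rw [hy]
              push_cast
              congr 1
              field_simp
        _ = Real.exp (3 * n * y + (4 * m * y + 2 * n * y)) := by
            rw [Real.exp_add, Real.exp_add]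
        _ ≤ X := by
            rw [hX, Real.exp_le_exp, hn]
            push_cast
            nlinarith
    | succ k ih =>
      intro hkJ
      obtain ⟨p, hp1, hp2, hp3⟩ := ih (by omega)
      have hpow : 2 ^ (J - k) = 2 * 2 ^ (J - (k + 1)) := by
        rw [← pow_succ']; congr 1; omega
      rw [hpow] at hp1
      have hhalf : (fun i => L i / 2 ^ (k + 1)) = fun i => (L i / 2 ^ k) / 2 := by
        funext i
        rw [Nat.div_div_eq_div_mul, pow_succ]
      have hpowJ : 2 ^ k * (2 * 2 ^ (J - (k + 1))) = 2 ^ J := by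
        rw [← hpow, ← pow_add]; congr 1; omega
      have hpowJ' : (2 : ℝ) ^ k * (2 * 2 ^ (J - (k + 1))) = 2 ^ J := by exact_mod_cast hpowJ
      have h2k : (1 : ℝ) ≤ 2 ^ k := one_le_pow₀ one_le_two
      have h2kJ : (2 : ℝ) ^ k ≤ 2 ^ J := pow_le_pow_right₀ one_le_two (by omega)
      have hTk : (2 : ℝ) ^ (J - (k + 1)) ≤ 2 ^ J := pow_le_pow_right₀ one_le_two (by omega)
      have hKℓ1 : (1 : ℝ) ≤ K * ℓ := one_le_mul_of_one_le_of_one_le (by linarith) hℓ1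
      have hSW : ((2 ^ k * (K * ℓ) : ℕ) : ℝ) * (n * (2 ^ J / 2 ^ k / K)) = n * y := by
        rw [hy]; push_cast; field_simp
      have hΩ : ∀ i, h i ≤ y := by
        intro i
        have h1 : h i ≤ ∏ i, h i := by
          rw [← Finset.mul_prod_erase _ _ (Finset.mem_univ i)]
          exact le_mul_of_one_le_right (hh0 i).le
            (Finset.prod_induction _ (1 ≤ ·) (fun _ _ => one_le_mul_of_one_le_of_one_le) le_rfl
              fun j _ => hh j)
        have h2 : ∏ i, h i ≤ 2 * (K : ℝ) ^ (m + 2) * ℓ * ∏ i, h i := by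
          refine le_mul_of_one_le_left (h1.trans' (hh0 i).le) ?_
          have : (1 : ℝ) ≤ (K : ℝ) ^ (m + 2) := one_le_pow₀ (by linarith)
          nlinarith
        linarith
      obtain ⟨p', hp1', hp2', hp3'⟩ := exists_auxVanishes_half hE hu hv (fun i => (hh0 i).le) huh hvh
        hind hb (Nat.mul_pos (by positivity) (Nat.mul_pos (by omega) hℓ)) hp1 hp2 hp3
        (G := Real.exp (4 * ℓ)) (Q := Real.exp (16 * n * y)) (W := n * (2 ^ J / 2 ^ k / K))
        (d := 2 ^ J * |∑ i, b i * θ i|)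
        (H := Real.exp (20 * n * y)) (Real.one_le_exp (by positivity)) (hGk k)
        (by
          calc _ ≤ Real.exp (3 * n * y) * (X * Real.exp (4 * y)) := by
                refine mul_le_mul (hcardk k) (mul_le_mul_of_nonneg_left ?_ hX0)
                  (by positivity) (by positivity)
                rw [← Real.exp_nat_mul, Real.exp_le_exp, hy]
                push_cast
                nlinarith
            _ = Real.exp (3 * n * y + (9 * n * y + 4 * y)) := by
                rw [hX, Real.exp_add, Real.exp_add]
            _ ≤ _ := by rw [Real.exp_le_exp]; nlinarith)
        (hWk k)
        (by have := (hLk k 0).trans (hLT 0); gcongr)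
        (by
          rw [mul_assoc 4, hSW, ← Real.exp_add]
          exact (Real.exp_le_exp.2 (by nlinarith)))
        (by
          intro i
          have hui : (u i : ℝ) ≤ Real.exp y := by
            rw [← Real.log_le_iff_le_exp (by exact_mod_cast hu i)]; exact (huh i).trans (hΩ i)
          have hvi : (v i : ℝ) ≤ Real.exp y := by
            rw [← Real.log_le_iff_le_exp (by exact_mod_cast hv i)]; exact (hvh i).trans (hΩ i)
          push_cast
          calc (u i : ℝ) * v i ≤ Real.exp y * Real.exp y := by gcongr
            _ = Real.exp (y + y) := (Real.exp_add _ _).symm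
            _ ≤ _ := by rw [Real.exp_le_exp]; nlinarith)
        (by have := Real.add_one_le_exp (20 * n * y); nlinarith)
        (descent_numerics (K := K) (ℓ := ℓ) (by omega) (by rw [hn]; exact hK) hy1 hℓ1 hSW
          (by push_cast; nlinarith) (by positivity) (by positivity)
          (by
            push_cast
            rw [hy, ← hpowJ']
            ring)
          (by
            push_cast
            calc 20 * ((2 : ℝ) ^ k * (K * ℓ)) = 2 ^ k * (20 * K * ℓ) := by ring
              _ ≤ Real.exp (2 * ℓ) * Real.exp ℓ := by
                have := h2kJ.trans hTℓ
                gcongr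
              _ = _ := by rw [← Real.exp_add]; ring_nf)
          (by
            calc (2 : ℝ) ^ J * |∑ i, b i * θ i|
                ≤ Real.exp (2 * ℓ) * Real.exp (-(8 * K * ℓ ^ 2 * 2 ^ J)) := by gcongr
              _ = _ := by rw [← Real.exp_add, hy]; ring_nf))
      refine ⟨p', ?_, hp2', by rwa [hhalf]⟩
      rw [hhalf, pow_succ', mul_assoc]
      exact hp1'
  obtain ⟨p, hp1, -, l, hl, hpl⟩ := hdescent J le_rfl
  have hL0 : (fun i => L i / 2 ^ J) = 0 := by
    funext i
    exact Nat.div_eq_of_lt (hLlt i)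
  rw [hL0] at hp1 hl
  have hbox : exponentBox (0 : Fin (m + 1) → ℕ) = {0} := by
    ext l
    rw [mem_exponentBox, Finset.mem_singleton, funext_iff]
    simp
  rw [hbox, Finset.mem_singleton] at hl
  have h1 := hp1 1 (by simp) 1 odd_one (by
    have : 1 ≤ 2 ^ J * (K * ℓ) := Nat.mul_pos (by positivity) (Nat.mul_pos (by omega) hℓ)
    omega)
  rw [auxSum, hbox, Finset.sum_singleton] at h1
  simp [logMonomial] at h1
  exact hpl (by rw [hl, h1])

end Main

theorem eventually_mul_le_exp (c : ℝ) : ∀ᶠ ℓ : ℕ in Filter.atTop, c * ℓ ≤ Real.exp ℓ := by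
  have h1 := (Real.tendsto_exp_div_pow_atTop 1).comp (tendsto_natCast_atTop_atTop (R := ℝ))
  filter_upwards [h1.eventually_ge_atTop c, Filter.eventually_gt_atTop 0] with ℓ h2 h3
  have h4 : (0 : ℝ) < ℓ := by exact_mod_cast h3
  simp only [Function.comp_apply, pow_one] at h2
  exact (le_div_iff₀ h4).1 h2

theorem exists_linear_form_lower_bound (m : ℕ) : ∃ C : ℝ, 0 < C ∧ ∃ ℓ₀ : ℕ, ∀ ℓ : ℕ, ℓ₀ ≤ ℓ →
    ∀ (u v : Fin (m + 1) → ℕ), (∀ i, 0 < u i) → (∀ i, 0 < v i) →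
    ∀ h : Fin (m + 1) → ℝ, (∀ i, 1 ≤ h i) →
    (∀ i, Real.log (u i) ≤ h i) → (∀ i, Real.log (v i) ≤ h i) → ∏ i, h i ≤ Real.exp ℓ →
    (∀ I : Finset (Fin (m + 1)), I.Nonempty → ¬ IsSquare (∏ i ∈ I, u i * v i)) →
    ∀ b : Fin (m + 1) → ℤ, b 0 ≠ 0 → (∀ i, |(b i : ℝ)| ≤ Real.exp ℓ) →
    Real.exp (-(C * ℓ ^ 3 * ∏ i, h i)) ≤ |∑ i, b i * (Real.log (u i) - Real.log (v i))| := by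
  obtain ⟨E, hE⟩ := IsMultiquadratic.one_le_abs_mul_pow (m + 1)
  obtain ⟨K, hK⟩ : ∃ K, K = 2 * ((38 + 20 * E) * (m + 1) + 2) := ⟨_, rfl⟩
  have hK1 : (1 : ℝ) ≤ K := by
    have : 1 ≤ K := by omega
    exact_mod_cast this
  obtain ⟨ℓ₀, hℓ₀⟩ := Filter.eventually_atTop.1 ((eventually_mul_le_exp (4 * (K : ℝ) ^ (m + 2))).and
    ((eventually_mul_le_exp (20 * (K : ℝ))).and (Filter.eventually_ge_atTop 1)))
  refine ⟨32 * (K : ℝ) ^ (m + 3), by positivity, ℓ₀, ?_⟩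
  intro ℓ hℓ u v hu hv h hh huh hvh hΩ hind b hb hbℓ
  obtain ⟨h4, h20, h1⟩ := hℓ₀ ℓ hℓ
  have hℓ1 : (1 : ℝ) ≤ ℓ := by exact_mod_cast h1
  have hΩ1 : 1 ≤ ∏ i, h i :=
    Finset.prod_induction _ (1 ≤ ·) (fun _ _ => one_le_mul_of_one_le_of_one_le) le_rfl
      fun j _ => hh j
  have hKm : (1 : ℝ) ≤ (K : ℝ) ^ (m + 2) := one_le_pow₀ hK1
  have hx : 1 ≤ 2 * (K : ℝ) ^ (m + 2) * ℓ * ∏ i, h i :=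
    one_le_mul_of_one_le_of_one_le (one_le_mul_of_one_le_of_one_le (by linarith) hℓ1) hΩ1
  obtain ⟨J, hJ1, hJ2⟩ := exists_nat_pow_near hx (one_lt_two (α := ℝ))
  have hJ3 : (2 : ℝ) ^ (J + 1) ≤ 4 * (K : ℝ) ^ (m + 2) * ℓ * ∏ i, h i := by
    rw [pow_succ]
    linarith
  refine le_trans ?_ (linear_form_lower_bound_of_parameters hE hK.ge hu hv hh huh hvh hind hb hbℓ h1
    hJ2.le ?_ h20).le
  · rw [Real.exp_le_exp, neg_le_neg_iff]
    calc 8 * K * (ℓ : ℝ) ^ 2 * 2 ^ (J + 1)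
        ≤ 8 * K * (ℓ : ℝ) ^ 2 * (4 * (K : ℝ) ^ (m + 2) * ℓ * ∏ i, h i) := by gcongr
      _ = _ := by ring
  · calc (2 : ℝ) ^ (J + 1) ≤ 4 * (K : ℝ) ^ (m + 2) * ℓ * ∏ i, h i := hJ3
      _ ≤ Real.exp ℓ * Real.exp ℓ := by gcongr
      _ = _ := by rw [← Real.exp_add]; ring_nf

/-- A lower bound for linear forms in logarithms of rational numbers whose square classes are
independent. -/
theorem exists_linear_form_lower_bound_of_card_le (N : ℕ) :
    ∃ C : ℝ, 0 < C ∧ ∃ ℓ₀ : ℕ, ∀ ℓ : ℕ, ℓ₀ ≤ ℓ →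
    ∀ (ι : Type) [Fintype ι], Fintype.card ι ≤ N →
    ∀ (u v : ι → ℕ), (∀ i, 0 < u i) → (∀ i, 0 < v i) →
    ∀ h : ι → ℝ, (∀ i, 1 ≤ h i) →
    (∀ i, Real.log (u i) ≤ h i) → (∀ i, Real.log (v i) ≤ h i) → ∏ i, h i ≤ Real.exp ℓ →
    (∀ I : Finset ι, I.Nonempty → ¬ IsSquare (∏ i ∈ I, u i * v i)) →
    ∀ b : ι → ℤ, (∀ i, |(b i : ℝ)| ≤ Real.exp ℓ) →
    ∑ i, b i * (Real.log (u i) - Real.log (v i)) ≠ 0 →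
    Real.exp (-(C * ℓ ^ 3 * ∏ i, h i)) ≤ |∑ i, b i * (Real.log (u i) - Real.log (v i))| := by
  classical
  choose C hC ℓ₀ hbound using exists_linear_form_lower_bound
  refine ⟨1 + ∑ m ∈ Finset.range N, C m, ?_, ∑ m ∈ Finset.range N, ℓ₀ m, ?_⟩
  · have := Finset.sum_nonneg fun m (_ : m ∈ Finset.range N) => (hC m).le
    linarith
  intro ℓ hℓ ι _ hcard u v hu hv h hh huh hvh hΩ hind b hbℓ hne
  obtain ⟨i₀, -, hi₀⟩ := Finset.exists_ne_zero_of_sum_ne_zero hne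
  have hb : b i₀ ≠ 0 := fun h0 => hi₀ (by rw [h0]; simp)
  obtain ⟨m, hm⟩ : ∃ m, Fintype.card ι = m + 1 :=
    ⟨Fintype.card ι - 1, by have := Fintype.card_pos_iff.2 ⟨i₀⟩; omega⟩
  have hmN : m ∈ Finset.range N := Finset.mem_range.2 (by omega)
  have hΩ0 : 0 ≤ ∏ i, h i := Finset.prod_nonneg fun i _ => by linarith [hh i]
  let e : Fin (m + 1) ≃ ι := (Fintype.equivFinOfCardEq hm).symm.setValue 0 i₀
  have he : e 0 = i₀ := Equiv.setValue_eq _ _ _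
  have hprod : ∏ i, h (e i) = ∏ i, h i := e.prod_comp h
  have hsum : ∑ i, b (e i) * (Real.log (u (e i)) - Real.log (v (e i))) =
      ∑ i, b i * (Real.log (u i) - Real.log (v i)) :=
    e.sum_comp fun i => b i * (Real.log (u i) - Real.log (v i))
  have key := hbound m ℓ ((Finset.single_le_sum (fun _ _ => Nat.zero_le _) hmN).trans hℓ)
    (fun i => u (e i)) (fun i => v (e i)) (fun i => hu _) (fun i => hv _) (fun i => h (e i))
    (fun i => hh _) (fun i => huh _) (fun i => hvh _) (hprod.trans_le hΩ)
    (fun I hI => by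
      have := hind (I.map e.toEmbedding) (by simpa using hI)
      rwa [Finset.prod_map] at this)
    (fun i => b (e i)) (by rwa [he]) (fun i => hbℓ _)
  rw [hprod, hsum] at key
  refine le_trans ?_ key
  rw [Real.exp_le_exp, neg_le_neg_iff]
  have : C m ≤ 1 + ∑ m ∈ Finset.range N, C m := by
    have := Finset.single_le_sum (fun m _ => (hC m).le) hmN
    linarith
  gcongr

theorem not_isSquare_prod_of_prime {ι : Type*} [DecidableEq ι] {I : Finset ι} {f : ι → ℕ} {i : ι}
    (hi : i ∈ I) (hp : (f i).Prime) (hne : ∀ j ∈ I, j ≠ i → ¬ f i ∣ f j) :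
    ¬ IsSquare (∏ j ∈ I, f j) := by
  rintro ⟨r, hr⟩
  have h1 := Finset.mul_prod_erase I f hi
  have h2 : f i ∣ r := by
    have h3 : f i ∣ r * r := by rw [← hr, ← h1]; exact dvd_mul_right _ _
    exact (hp.dvd_mul.1 h3).elim id id
  obtain ⟨r', rfl⟩ := h2
  have h3 : ∏ j ∈ I.erase i, f j = f i * (r' * r') := by
    refine Nat.eq_of_mul_eq_mul_left hp.pos ?_
    rw [h1, hr]
    ring
  obtain ⟨j, hj, hdvd⟩ := hp.prime.exists_mem_finset_dvd (h3 ▸ dvd_mul_right (f i) (r' * r'))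
  exact hne j (Finset.mem_of_mem_erase hj) (Finset.ne_of_mem_erase hj) hdvd

theorem exists_eq_pow_two_pow_of_coprime {U V : ℕ} (hU : 0 < U) (hV : 0 < V)
    (hUV : U.Coprime V) (h1 : U * V ≠ 1) :
    ∃ k U' V' : ℕ, U = U' ^ 2 ^ k ∧ V = V' ^ 2 ^ k ∧ ¬ IsSquare (U' * V') := by
  induction hN : U * V using Nat.strong_induction_on generalizing U V with
  | _ N ih =>
    by_cases hsq : IsSquare (U * V)
    · obtain ⟨r, hr⟩ := hsq
      rw [← sq] at hr
      obtain ⟨a, ha⟩ := exists_eq_pow_of_mul_eq_pow (Nat.isUnit_iff.2 hUV) hr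
      obtain ⟨b, hb⟩ := exists_eq_pow_of_mul_eq_pow (Nat.isUnit_iff.2 hUV.symm)
        ((mul_comm _ _).trans hr)
      have ha0 : 0 < a := Nat.pos_of_ne_zero (by rintro rfl; simp at ha; omega)
      have hb0 : 0 < b := Nat.pos_of_ne_zero (by rintro rfl; simp at hb; omega)
      have hab : a * b ≠ 1 := fun h => h1 (by rw [ha, hb, ← mul_pow, h, one_pow])
      have hlt : a * b < N := by
        have : 0 < a * b := Nat.mul_pos ha0 hb0
        rw [← hN, ha, hb, ← mul_pow]
        nlinarith [(by omega : 2 ≤ a * b)]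
      have hcop : a.Coprime b := by
        rw [ha, hb] at hUV
        exact Nat.Coprime.coprime_dvd_left (dvd_pow_self a two_ne_zero)
          (Nat.Coprime.coprime_dvd_right (dvd_pow_self b two_ne_zero) hUV)
      obtain ⟨k, U', V', h2, h3, h4⟩ := ih _ hlt ha0 hb0 hcop hab rfl
      refine ⟨k + 1, U', V', ?_, ?_, h4⟩
      · rw [ha, h2, ← pow_mul, pow_succ]
      · rw [hb, h3, ← pow_mul, pow_succ]
    · exact ⟨0, U, V, by simp, by simp, hsq⟩

theorem exists_eq_prod_pow_factorization_mul {x : ℕ} (hx : x ≠ 0) {P : Finset ℕ}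
    (hP : ∀ p ∈ P, p.Prime) :
    ∃ U, x = (∏ p ∈ P, p ^ x.factorization p) * U ∧ ∀ p ∈ P, ¬ p ∣ U := by
  classical
  refine ⟨∏ p ∈ x.primeFactors \ P, p ^ x.factorization p, ?_, ?_⟩
  · conv_lhs => rw [← Nat.prod_factorization_pow_eq_self hx]
    rw [Finsupp.prod_of_support_subset (s := P ∪ x.primeFactors) _
      Finset.subset_union_right _ (by simp), ← Finset.union_sdiff_self_eq_union,
      Finset.prod_union Finset.disjoint_sdiff]
  · intro p hp hdvd
    obtain ⟨r, hr, hpr⟩ := (hP p hp).prime.exists_mem_finset_dvd hdvd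
    rw [Finset.mem_sdiff] at hr
    have h1 := (Nat.prime_dvd_prime_iff_eq (hP p hp) (Nat.prime_of_mem_primeFactors hr.1)).1
      ((hP p hp).dvd_of_dvd_pow hpr)
    exact hr.2 (h1 ▸ hp)

theorem factorization_le_two_mul_log {x : ℕ} (hx : 0 < x) {p : ℕ} (hp : p.Prime) :
    (x.factorization p : ℝ) ≤ 2 * Real.log x := by
  have h1 : 2 ^ x.factorization p ≤ x :=
    (Nat.pow_le_pow_left hp.two_le _).trans (Nat.le_of_dvd hx (Nat.ordProj_dvd x p))
  have h2 : (2 : ℝ) ^ x.factorization p ≤ x := by exact_mod_cast h1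
  have h3 := Real.log_le_log (by positivity) h2
  rw [Real.log_pow] at h3
  have h4 := Real.log_two_gt_d9
  have h5 : (0 : ℝ) ≤ x.factorization p := Nat.cast_nonneg _
  nlinarith

theorem exists_prime_form_lower_bound (N : ℕ) :
    ∃ C : ℝ, 0 < C ∧ ∃ ℓ₀ : ℕ, ∀ ℓ : ℕ, ℓ₀ ≤ ℓ →
    ∀ P : Finset ℕ, (∀ p ∈ P, p.Prime) → P.card ≤ N →
    ∀ U V : ℕ, 0 < U → 0 < V → U.Coprime V → (∀ p ∈ P, ¬ p ∣ U) → (∀ p ∈ P, ¬ p ∣ V) →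
    ∀ h : ℝ, 1 ≤ h → (∀ p ∈ P, Real.log p ≤ h) →
    ∀ H : ℝ, 1 ≤ H → Real.log U ≤ H → Real.log V ≤ H → h ^ N * H ≤ Real.exp ℓ →
    (U : ℝ) ≤ Real.exp ℓ → (V : ℝ) ≤ Real.exp ℓ →
    ∀ c : ℕ → ℤ, (∀ p ∈ P, |(c p : ℝ)| ≤ Real.exp ℓ) →
    ∑ p ∈ P, c p * Real.log p + (Real.log U - Real.log V) ≠ 0 →
    Real.exp (-(C * ℓ ^ 3 * (h ^ N * H))) ≤
      |∑ p ∈ P, c p * Real.log p + (Real.log U - Real.log V)| := by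
  classical
  obtain ⟨C, hC, ℓ₀, hbound⟩ := exists_linear_form_lower_bound_of_card_le (N + 1)
  refine ⟨C, hC, ℓ₀, ?_⟩
  intro ℓ hℓ P hP hcard U V hU hV hUV hPU hPV h hh hPh H hH hUH hVH hΩ hUℓ hVℓ c hc hne
  have hpow : h ^ P.card ≤ h ^ N := pow_le_pow_right₀ hh hcard
  by_cases h1 : U * V = 1
  · obtain ⟨rfl, rfl⟩ : U = 1 ∧ V = 1 := by simpa using h1
    have hsum : ∑ p ∈ P, c p * Real.log p + (Real.log (1 : ℕ) - Real.log (1 : ℕ)) =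
        ∑ i : P, c i * (Real.log ((i : ℕ) : ℝ) - Real.log (1 : ℕ)) := by
      rw [Finset.sum_coe_sort P fun p => (c p : ℝ) * (Real.log p - Real.log (1 : ℕ))]
      simp
    rw [hsum] at hne ⊢
    have hprod : ∏ _i : P, h ≤ h ^ N * H := by
      rw [Finset.prod_const, Finset.card_univ, Fintype.card_coe]
      exact hpow.trans (le_mul_of_one_le_right (by positivity) hH)
    refine le_trans ?_ (hbound ℓ hℓ P (by rw [Fintype.card_coe]; omega) (fun i => i) (fun _ => 1)
      (fun i => (hP i i.2).pos) (fun _ => one_pos) (fun _ => h) (fun _ => hh)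
      (fun i => hPh i i.2) (fun i => by simp; linarith) (hprod.trans hΩ) ?_ (fun i => c i)
      (fun i => hc i i.2) hne)
    · rw [Real.exp_le_exp, neg_le_neg_iff]
      gcongr
    · rintro I ⟨i, hi⟩
      simp only [mul_one]
      refine not_isSquare_prod_of_prime (f := fun i : P => (i : ℕ)) hi (hP i i.2)
        fun j _ hji hdvd => hji ?_
      exact Subtype.ext ((Nat.prime_dvd_prime_iff_eq (hP i i.2) (hP j j.2)).1 hdvd).symm
  · obtain ⟨k, U', V', rfl, rfl, hsq⟩ := exists_eq_pow_two_pow_of_coprime hU hV hUV h1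
    have h2k : 2 ^ k ≠ 0 := by positivity
    have hU' : 0 < U' := Nat.pos_of_ne_zero fun h0 => by simp [h0] at hU
    have hV' : 0 < V' := Nat.pos_of_ne_zero fun h0 => by simp [h0] at hV
    have hlogU : Real.log U' ≤ H := le_trans (Real.log_le_log (by exact_mod_cast hU')
      (by exact_mod_cast Nat.le_self_pow h2k U')) hUH
    have hlogV : Real.log V' ≤ H := le_trans (Real.log_le_log (by exact_mod_cast hV')
      (by exact_mod_cast Nat.le_self_pow h2k V')) hVH
    have h2kℓ : (2 : ℝ) ^ k ≤ Real.exp ℓ := by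
      have h2 : 2 ≤ U' ∨ 2 ≤ V' := by
        by_contra! h3
        obtain rfl : U' = 1 := by omega
        obtain rfl : V' = 1 := by omega
        simp at h1
      rcases h2 with h2 | h2
      · refine le_trans ?_ hUℓ
        exact_mod_cast Nat.lt_two_pow_self.le.trans (Nat.pow_le_pow_left h2 (2 ^ k))
      · refine le_trans ?_ hVℓ
        exact_mod_cast Nat.lt_two_pow_self.le.trans (Nat.pow_le_pow_left h2 (2 ^ k))
    let u : Option P → ℕ := fun i => i.elim U' fun p => p
    let v : Option P → ℕ := fun i => i.elim V' fun _ => 1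
    let b : Option P → ℤ := fun i => i.elim (2 ^ k) fun p => c p
    let g : Option P → ℝ := fun i => i.elim H fun _ => h
    have hsum : ∑ p ∈ P, c p * Real.log p +
        (Real.log (U' ^ 2 ^ k : ℕ) - Real.log (V' ^ 2 ^ k : ℕ)) =
        ∑ i, b i * (Real.log (u i) - Real.log (v i)) := by
      rw [Fintype.sum_option, add_comm]
      congr 1
      · simp [b, u, v]
        ring
      · simp only [b, u, v, Option.elim_some]
        rw [Finset.sum_coe_sort P fun p => (c p : ℝ) * (Real.log p - Real.log (1 : ℕ))]
        simp
    rw [hsum] at hne ⊢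
    have hprod : ∏ i, g i ≤ h ^ N * H := by
      rw [Fintype.prod_option, mul_comm]
      simp only [g, Option.elim_some, Option.elim_none]
      rw [Finset.prod_const, Finset.card_univ, Fintype.card_coe]
      gcongr
    refine le_trans ?_ (hbound ℓ hℓ (Option P)
      (by rw [Fintype.card_option, Fintype.card_coe]; omega) u v
      (fun i => by cases i; exacts [hU', (hP _ (Subtype.prop _)).pos])
      (fun i => by cases i; exacts [hV', one_pos]) g
      (fun i => by cases i; exacts [hH, hh])
      (fun i => by cases i; exacts [hlogU, hPh _ (Subtype.prop _)])
      (fun i => by cases i; exacts [hlogV, by simp [v, g]; linarith]) (hprod.trans hΩ) ?_ b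
      (fun i => by
        cases i with
        | none => simpa [b] using h2kℓ
        | some p => exact hc p p.2) hne)
    · rw [Real.exp_le_exp, neg_le_neg_iff]
      gcongr
    · intro I hI
      by_cases hex : ∃ p, some p ∈ I
      · obtain ⟨p, hp⟩ := hex
        refine not_isSquare_prod_of_prime (f := fun i => u i * v i) hp
          (by simpa [u, v] using hP p p.2) fun j _ hjp hdvd => ?_
        simp only [u, v, Option.elim_some, mul_one] at hdvd
        cases j with
        | none =>
          rcases (hP p p.2).dvd_mul.1 hdvd with h2 | h2
          · exact hPU p p.2 (h2.trans (dvd_pow_self _ h2k))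
          · exact hPV p p.2 (h2.trans (dvd_pow_self _ h2k))
        | some r =>
          refine hjp (congrArg some (Subtype.ext ?_))
          simp only [Option.elim_some, mul_one] at hdvd
          exact ((Nat.prime_dvd_prime_iff_eq (hP p p.2) (hP r r.2)).1 hdvd).symm
      · obtain rfl : I = {none} := by
          refine Finset.eq_singleton_iff_nonempty_unique_mem.2 ⟨hI, fun i hi => ?_⟩
          cases i with
          | none => rfl
          | some p => exact absurd ⟨p, hi⟩ hex
        simpa [u, v] using hsq

theorem exists_log_sub_log_lower_bound (N : ℕ) :
    ∃ C : ℝ, 0 < C ∧ ∃ ℓ₀ : ℕ, ∀ ℓ : ℕ, ℓ₀ ≤ ℓ →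
    ∀ P : Finset ℕ, (∀ p ∈ P, p.Prime) → P.card ≤ N →
    ∀ s t a b : ℕ, 0 < s → 0 < t → 0 < a → 0 < b → s.Coprime t →
    a.primeFactors ⊆ P → b.primeFactors ⊆ P → s * a ≠ t * b →
    ∀ h : ℝ, 1 ≤ h → (∀ p ∈ P, Real.log p ≤ h) →
    ∀ H : ℝ, 1 ≤ H → Real.log s ≤ H → Real.log t ≤ H → h ^ N * H ≤ Real.exp ℓ →
    (s : ℝ) ≤ Real.exp ℓ → (t : ℝ) ≤ Real.exp ℓ →
    2 * Real.log (s * a : ℕ) ≤ Real.exp ℓ → 2 * Real.log (t * b : ℕ) ≤ Real.exp ℓ →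
    Real.exp (-(C * ℓ ^ 3 * (h ^ N * H))) ≤
      |Real.log (s * a : ℕ) - Real.log (t * b : ℕ)| := by
  obtain ⟨C, hC, ℓ₀, hbound⟩ := exists_prime_form_lower_bound N
  refine ⟨C, hC, ℓ₀, ?_⟩
  intro ℓ hℓ P hP hcard s t a b hs ht ha hb hst haP hbP hne h hh hPh H hH hsH htH hΩ hsℓ htℓ
    hsaℓ htbℓ
  have hdecomp : ∀ s a : ℕ, 0 < s → 0 < a → a.primeFactors ⊆ P → ∃ U, 0 < U ∧ U ∣ s ∧
      (∀ p ∈ P, ¬ p ∣ U) ∧ Real.log (s * a : ℕ) =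
        ∑ p ∈ P, ((s * a).factorization p : ℝ) * Real.log p + Real.log U := by
    intro s a hs ha haP
    obtain ⟨U, hU, hPU⟩ := exists_eq_prod_pow_factorization_mul (Nat.mul_pos hs ha).ne' hP
    have hU0 : 0 < U := Nat.pos_of_ne_zero fun h0 => by
      rw [h0, mul_zero] at hU
      exact (Nat.mul_pos hs ha).ne' hU
    refine ⟨U, hU0, ?_, hPU, ?_⟩
    · have hcop : U.Coprime a := Nat.coprime_of_dvd fun p hp hpU hpa =>
        hPU p (haP (Nat.mem_primeFactors.2 ⟨hp, hpa, ha.ne'⟩)) hpU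
      exact hcop.dvd_of_dvd_mul_right (hU ▸ dvd_mul_left _ _)
    · have hpos : ∀ p ∈ P, ((p : ℝ) ^ (s * a).factorization p) ≠ 0 := fun p hp =>
        pow_ne_zero _ (by exact_mod_cast (hP p hp).ne_zero)
      conv_lhs => rw [hU]
      rw [Nat.cast_mul, Real.log_mul (by
        rw [Nat.cast_prod]
        exact Finset.prod_ne_zero_iff.2 fun p hp => by exact_mod_cast hpos p hp)
        (by exact_mod_cast hU0.ne'), Nat.cast_prod, Real.log_prod
          fun p hp => by exact_mod_cast hpos p hp]
      simp
  obtain ⟨U, hU0, hUs, hPU, hU⟩ := hdecomp s a hs ha haP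
  obtain ⟨V, hV0, hVt, hPV, hV⟩ := hdecomp t b ht hb hbP
  have hUs' : (U : ℝ) ≤ s := by exact_mod_cast Nat.le_of_dvd hs hUs
  have hVt' : (V : ℝ) ≤ t := by exact_mod_cast Nat.le_of_dvd ht hVt
  have hU0' : (0 : ℝ) < U := by exact_mod_cast hU0
  have hV0' : (0 : ℝ) < V := by exact_mod_cast hV0
  let c : ℕ → ℤ := fun p => (s * a).factorization p - (t * b).factorization p
  have hform : Real.log (s * a : ℕ) - Real.log (t * b : ℕ) =
      ∑ p ∈ P, c p * Real.log p + (Real.log U - Real.log V) := by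
    simp only [hU, hV, c]
    push_cast
    simp only [sub_mul, Finset.sum_sub_distrib]
    ring
  have hlogne : Real.log (s * a : ℕ) - Real.log (t * b : ℕ) ≠ 0 := by
    rw [sub_ne_zero]
    intro heq
    refine hne ?_
    have := Real.log_injOn_pos (Set.mem_Ioi.2 (by exact_mod_cast Nat.mul_pos hs ha))
      (Set.mem_Ioi.2 (by exact_mod_cast Nat.mul_pos ht hb)) heq
    exact_mod_cast this
  rw [hform] at hlogne ⊢
  refine hbound ℓ hℓ P hP hcard U V hU0 hV0
    ((hst.coprime_dvd_left hUs).coprime_dvd_right hVt) hPU hPV h hh hPh H hH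
    ((Real.log_le_log hU0' hUs').trans hsH) ((Real.log_le_log hV0' hVt').trans htH) hΩ
    (hUs'.trans hsℓ) (hVt'.trans htℓ) c (fun p hp => ?_) hlogne
  have h1 := factorization_le_two_mul_log (Nat.mul_pos hs ha) (hP p hp)
  have h2 := factorization_le_two_mul_log (Nat.mul_pos ht hb) (hP p hp)
  have h3 : (0 : ℝ) ≤ (s * a).factorization p := Nat.cast_nonneg _
  have h4 : (0 : ℝ) ≤ (t * b).factorization p := Nat.cast_nonneg _
  simp only [c]
  push_cast
  rw [abs_le]
  push_cast at h1 h2 hsaℓ htbℓ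
  constructor <;> linarith

theorem eventually_log_pow_mul_rpow_lt {K δ c : ℝ} (hK : 0 < K) (hδ : 0 < δ)
    (hc : 0 < c) :
    ∀ᶠ y : ℝ in Filter.atTop, K * Real.log y ^ 4 * y ^ (1 - δ) < c * y := by
  have h1 := (isLittleO_log_rpow_rpow_atTop 4 hδ).bound (show 0 < c / (2 * K) by positivity)
  filter_upwards [h1, Filter.eventually_gt_atTop 0] with y h2 hy
  have h3 : Real.log y ^ 4 ≤ c / (2 * K) * y ^ δ := by
    have h4 := (le_abs_self _).trans h2
    rw [Real.norm_of_nonneg (by positivity)] at h4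
    exact_mod_cast h4
  have h5 : y ^ δ * y ^ (1 - δ) = y := by
    rw [← Real.rpow_add hy]
    simp
  calc K * Real.log y ^ 4 * y ^ (1 - δ) ≤ K * (c / (2 * K) * y ^ δ) * y ^ (1 - δ) := by gcongr
    _ = c / 2 * (y ^ δ * y ^ (1 - δ)) := by field_simp
    _ < c * y := by rw [h5]; nlinarith

set_option maxHeartbeats 1000000 in
/-- Two integers with few and small prime factors, one of them multiplied by an integer of
polylogarithmic size, are far apart. -/
theorem exists_log_bound_of_close {D : ℕ} (hD : 1 ≤ D) {ε lam α : ℝ} (hε : 0 < ε)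
    (hlam : 1 ≤ lam) (hα1 : α < 1) :
    ∃ Y : ℝ, ∀ a b s t : ℕ, 0 < a → a < b → 0 < s → 0 < t → s.Coprime t →
      a.primeFactors.card ≤ D → b.primeFactors.card ≤ D →
      (∀ p ∈ a.primeFactors, Real.log p ≤ Real.log a ^ ((1 - ε) / (2 * (D : ℝ)))) →
      (∀ p ∈ b.primeFactors, Real.log p ≤ Real.log b ^ ((1 - ε) / (2 * (D : ℝ)))) →
      Real.log s ≤ lam * Real.log (Real.log a) → s * a ≠ t * b →
      |(s : ℝ) * a - t * b| < (a : ℝ) ^ α → Real.log a < Y := by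
  classical
  obtain ⟨C, hC, ℓ₀, hbound⟩ := exists_log_sub_log_lower_bound (2 * D)
  obtain ⟨δ, hδ0, hδε, hδ1⟩ : ∃ δ : ℝ, 0 < δ ∧ δ ≤ ε ∧ δ < 1 :=
    ⟨min ε (1 / 2), by positivity, min_le_left _ _, (min_le_right _ _).trans_lt (by norm_num)⟩
  have hα : 0 < 1 - α := by linarith
  obtain ⟨κ, hκ⟩ : ∃ κ, κ = lam + 4 := ⟨_, rfl⟩
  have hκ0 : 0 < κ := by linarith
  have hlam0 : 0 < lam := by linarith
  have hev : ∀ᶠ y : ℝ in Filter.atTop, 4 ≤ y ∧ 1 ≤ Real.log y ∧ ℓ₀ ≤ κ * Real.log y ∧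
      1 + lam * Real.log y ≤ y ∧
      (C * (2 * κ) ^ 3 * 2 * lam) * Real.log y ^ 4 * y ^ (1 - δ) < (1 - α) * y := by
    have h1 := Real.tendsto_log_atTop
    have h2 := Real.isLittleO_log_id_atTop.bound (show 0 < 1 / (2 * lam) by positivity)
    filter_upwards [Filter.eventually_ge_atTop 4, h1.eventually_ge_atTop 1,
      (h1.const_mul_atTop hκ0).eventually_ge_atTop (ℓ₀ : ℝ), h2,
      eventually_log_pow_mul_rpow_lt (show 0 < C * (2 * κ) ^ 3 * 2 * lam by positivity) hδ0 hα] with y h3 h4 h5 h6 h7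
    refine ⟨h3, h4, h5, ?_, h7⟩
    have h8 := (le_abs_self _).trans h6
    rw [id, Real.norm_of_nonneg (by linarith)] at h8
    have h9 : lam * Real.log y ≤ lam * (1 / (2 * lam) * y) := by gcongr
    have h10 : lam * (1 / (2 * lam) * y) = y / 2 := by field_simp
    linarith
  obtain ⟨Y, hY⟩ := Filter.eventually_atTop.1 hev
  refine ⟨Y, ?_⟩
  intro a b s t ha hab hs ht hst hcarda hcardb hpa hpb hlogs hne hclose
  by_contra! hYy
  obtain ⟨y, hy⟩ : ∃ y, y = Real.log a := ⟨_, rfl⟩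
  rw [← hy] at hYy hpa hlogs
  obtain ⟨hy4, hlog1, hℓ₀, hylog, hfinal⟩ := hY y hYy
  have ha0 : (0 : ℝ) < a := by exact_mod_cast ha
  have hb0 : (0 : ℝ) < b := by exact_mod_cast ha.trans hab
  have hs0 : (0 : ℝ) < s := by exact_mod_cast hs
  have ht0 : (0 : ℝ) < t := by exact_mod_cast ht
  have hs1 : (1 : ℝ) ≤ s := by exact_mod_cast hs
  have ht1 : (1 : ℝ) ≤ t := by exact_mod_cast ht
  have habR : (a : ℝ) < b := by exact_mod_cast hab
  have ha1 : (1 : ℝ) ≤ a := by exact_mod_cast ha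
  have hpowle : (a : ℝ) ^ α ≤ a := by
    simpa using Real.rpow_le_rpow_of_exponent_le ha1 hα1.le
  obtain ⟨hlow, hup⟩ := abs_lt.1 hclose
  have htb : (t : ℝ) * b < (s + 1) * a := by linarith
  have hts : t ≤ s := by
    have h1 : (t : ℝ) * a < (s + 1) * a := lt_of_le_of_lt (by gcongr) htb
    have h2 : (t : ℝ) < s + 1 := lt_of_mul_lt_mul_right h1 ha0.le
    have h3 : t < s + 1 := by exact_mod_cast h2
    omega
  have htsR : (t : ℝ) ≤ s := by exact_mod_cast hts
  have hy0 : 0 < y := by linarith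
  have hlogy : 0 < Real.log y := by linarith
  have hlogt : Real.log t ≤ lam * Real.log y := (Real.log_le_log ht0 htsR).trans hlogs
  have hlogsa : Real.log (s * a : ℕ) ≤ 2 * y := by
    push_cast
    rw [Real.log_mul hs0.ne' ha0.ne', ← hy]
    linarith
  have hlogtb : Real.log (t * b : ℕ) ≤ 2 * y := by
    have h1 : (t : ℝ) * b ≤ 2 * (s * a) := by nlinarith
    push_cast
    refine (Real.log_le_log (by positivity) h1).trans ?_
    rw [Real.log_mul two_ne_zero (by positivity), Real.log_mul hs0.ne' ha0.ne', ← hy]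
    linarith [Real.log_two_lt_d9]
  have hlogb : Real.log b ≤ 2 * y := by
    refine (Real.log_le_log hb0 ?_).trans hlogtb
    push_cast
    exact le_mul_of_one_le_left hb0.le ht1
  have hylogb : y ≤ Real.log b := by rw [hy]; exact Real.log_le_log ha0 habR.le
  -- a common bound for the logarithms of the primes involved
  have hD0 : (0 : ℝ) < 2 * (D : ℝ) := by
    have : (1 : ℝ) ≤ D := by exact_mod_cast hD
    linarith
  obtain ⟨h, hh⟩ : ∃ h : ℝ, h = (2 * y) ^ ((1 - δ) / (2 * (D : ℝ))) := ⟨_, rfl⟩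
  have hexp0 : 0 ≤ (1 - δ) / (2 * (D : ℝ)) := div_nonneg (by linarith) hD0.le
  have hh1 : 1 ≤ h := by rw [hh]; exact Real.one_le_rpow (by linarith) hexp0
  have hhle : ∀ x : ℝ, 1 ≤ x → x ≤ 2 * y → x ^ ((1 - ε) / (2 * (D : ℝ))) ≤ h := by
    intro x hx1 hx2
    calc x ^ ((1 - ε) / (2 * (D : ℝ))) ≤ x ^ ((1 - δ) / (2 * (D : ℝ))) :=
          Real.rpow_le_rpow_of_exponent_le hx1 (by gcongr)
      _ ≤ h := by rw [hh]; exact Real.rpow_le_rpow (by linarith) hx2 hexp0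
  have hhpow : h ^ (2 * D) = (2 * y) ^ (1 - δ) := by
    rw [hh, ← Real.rpow_natCast, ← Real.rpow_mul (by linarith)]
    congr 1
    push_cast
    field_simp
  have hhpow_le : h ^ (2 * D) ≤ 2 * y ^ (1 - δ) := by
    rw [hhpow, Real.mul_rpow two_pos.le hy0.le]
    gcongr
    simpa using Real.rpow_le_rpow_of_exponent_le one_le_two (by linarith : 1 - δ ≤ 1)
  have hhpow_le' : h ^ (2 * D) ≤ 2 * y := by
    rw [hhpow]
    simpa using Real.rpow_le_rpow_of_exponent_le (by linarith : 1 ≤ 2 * y)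
      (by linarith : 1 - δ ≤ 1)
  obtain ⟨ℓ, hℓ⟩ : ∃ ℓ, ℓ = ⌈κ * Real.log y⌉₊ := ⟨_, rfl⟩
  have hκlog : 0 ≤ κ * Real.log y := by positivity
  have hℓ1 : κ * Real.log y ≤ ℓ := hℓ ▸ Nat.le_ceil _
  have hℓ2 : (ℓ : ℝ) ≤ 2 * κ * Real.log y := by
    have h1 := Nat.ceil_lt_add_one hκlog
    rw [← hℓ] at h1
    nlinarith
  have hexplog : Real.exp (Real.log y) = y := Real.exp_log hy0
  have hexp4 : y ^ 4 ≤ Real.exp (4 * Real.log y) := by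
    rw [show (4 : ℝ) * Real.log y = (4 : ℕ) * Real.log y by norm_num, Real.exp_nat_mul, hexplog]
  have hexpℓ : y ^ 4 ≤ Real.exp ℓ := hexp4.trans (Real.exp_le_exp.2 (by nlinarith))
  have hy_sq : 16 ≤ y ^ 2 := by nlinarith
  have hsℓ : (s : ℝ) ≤ Real.exp ℓ := by
    rw [← Real.log_le_iff_le_exp hs0]
    nlinarith
  have h4y : 4 * y ≤ Real.exp ℓ := by nlinarith
  have key := hbound ℓ (by exact_mod_cast hℓ₀.trans hℓ1) (a.primeFactors ∪ b.primeFactors)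
    (fun p hp => (Finset.mem_union.1 hp).elim Nat.prime_of_mem_primeFactors
      Nat.prime_of_mem_primeFactors)
    ((Finset.card_union_le _ _).trans (by omega)) s t a b hs ht ha (ha.trans hab) hst
    Finset.subset_union_left Finset.subset_union_right hne h hh1
    (fun p hp => (Finset.mem_union.1 hp).elim
      (fun hp => (hpa p hp).trans (hhle y (by linarith) (by linarith)))
      (fun hp => (hpb p hp).trans (hhle _ (by linarith) hlogb)))
    (lam * Real.log y) (by nlinarith) hlogs hlogt
    (by
      calc h ^ (2 * D) * (lam * Real.log y) ≤ 2 * y * y :=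
            mul_le_mul hhpow_le' (by linarith) (by positivity) (by positivity)
        _ ≤ y ^ 4 := by nlinarith
        _ ≤ _ := hexpℓ)
    hsℓ (htsR.trans hsℓ) (by linarith) (by linarith)
  have hlogdiff : ∀ x z : ℝ, a ≤ x → a ≤ z → Real.log x - Real.log z ≤ |x - z| / a := by
    intro x z hx hz
    have hx0 : 0 < x := ha0.trans_le hx
    have hz0 : 0 < z := ha0.trans_le hz
    rw [← Real.log_div hx0.ne' hz0.ne']
    calc Real.log (x / z) ≤ x / z - 1 := Real.log_le_sub_one_of_pos (by positivity)
      _ = (x - z) / z := by field_simp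
      _ ≤ |x - z| / z := by gcongr; exact le_abs_self _
      _ ≤ |x - z| / a := by gcongr
  have hsa : (a : ℝ) ≤ s * a := le_mul_of_one_le_left ha0.le hs1
  have htb' : (a : ℝ) ≤ t * b := habR.le.trans (le_mul_of_one_le_left hb0.le ht1)
  have hupper : |Real.log (s * a : ℕ) - Real.log (t * b : ℕ)| < Real.exp (-((1 - α) * y)) := by
    have h1 : |Real.log (s * a : ℕ) - Real.log (t * b : ℕ)| ≤ |(s : ℝ) * a - t * b| / a := by
      push_cast
      refine abs_le'.2 ⟨hlogdiff _ _ hsa htb', ?_⟩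
      rw [neg_sub, abs_sub_comm]
      exact hlogdiff _ _ htb' hsa
    refine h1.trans_lt ?_
    rw [div_lt_iff₀ ha0]
    refine hclose.trans_le (le_of_eq ?_)
    conv_rhs => rw [← Real.exp_log ha0]
    rw [← hy, ← Real.exp_add, Real.rpow_def_of_pos ha0, ← hy]
    ring_nf
  have hexps := Real.exp_lt_exp.1 (key.trans_lt hupper)
  have hcontra : C * ℓ ^ 3 * (h ^ (2 * D) * (lam * Real.log y)) ≤
      (C * (2 * κ) ^ 3 * 2 * lam) * Real.log y ^ 4 * y ^ (1 - δ) := by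
    calc C * (ℓ : ℝ) ^ 3 * (h ^ (2 * D) * (lam * Real.log y))
        ≤ C * (2 * κ * Real.log y) ^ 3 * (2 * y ^ (1 - δ) * (lam * Real.log y)) := by gcongr
      _ = _ := by ring
  linarith

theorem statement12
    (q : ℕ → ℕ) (hqpos : ∀ n, 1 ≤ n → 0 < q n)
    (hqmono : ∀ n, 1 ≤ n → q n < q (n + 1))
    (hgrowth : ∃ B : ℝ, 1 ≤ B ∧ ∃ C₀ : ℝ, 0 < C₀ ∧
      ∀ n : ℕ, 2 ≤ n → C₀ * (n : ℝ) ^ ((1 : ℝ) / B) < Real.log (q n))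
    (hdiv : ∃ n₀ D : ℕ, 1 ≤ n₀ ∧ 1 ≤ D ∧ ∃ ε : ℝ, 0 < ε ∧ ∀ n, n₀ ≤ n →
      (q n).primeFactors.card ≤ D ∧
      ∀ p : ℕ, p.Prime → p ∣ q n →
        Real.log p ≤ Real.log (q n) ^ ((1 - ε) / (2 * (D : ℝ))))
    (α : ℝ) (hα : 0 < α) (hα1 : α < 1) :
    ∃ m₀ : ℕ, 1 ≤ m₀ ∧ ∀ m n : ℕ, m₀ ≤ m → m < n →
      ∀ s t : ℕ, 1 ≤ s → 1 ≤ t →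
        1 ≤ |(s : ℝ) * (q m : ℝ) - (t : ℝ) * (q n : ℝ)| →
        |(s : ℝ) * (q m : ℝ) - (t : ℝ) * (q n : ℝ)| < (q m : ℝ) ^ α →
        m ^ 12 < s := by
  obtain ⟨B, hB, C₀, hC₀, hgrow⟩ := hgrowth
  obtain ⟨n₀, D, hn₀, hD, ε, hε, hprimes⟩ := hdiv
  obtain ⟨Y, hY⟩ := exists_log_bound_of_close hD hε (show 1 ≤ 24 * B by linarith) hα1
  have hB0 : 0 < B := by linarith
  have htend : Filter.Tendsto (fun n : ℕ => C₀ * (n : ℝ) ^ ((1 : ℝ) / B)) Filter.atTop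
      Filter.atTop :=
    ((tendsto_rpow_atTop (by positivity)).comp tendsto_natCast_atTop_atTop).const_mul_atTop hC₀
  obtain ⟨m₁, hm₁⟩ := Filter.eventually_atTop.1 (htend.eventually_ge_atTop (max (max Y C₀⁻¹) 1))
  refine ⟨max (max m₁ n₀) 2, by omega, ?_⟩
  intro m n hm hmn s t hs ht hone hclose
  by_contra! hsm
  have hmono : q m < q n := by
    have hle : ∀ k, q m < q (m + 1 + k) := by
      intro k
      induction k with
      | zero => exact hqmono m (by omega)
      | succ k ih => exact ih.trans (hqmono _ (by omega))
    have := hle (n - (m + 1))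
    rwa [show m + 1 + (n - (m + 1)) = n by omega] at this
  have hqm : 0 < q m := hqpos m (by omega)
  have hlow := hgrow m (by omega)
  have hmax := hm₁ m (by omega)
  obtain ⟨y, hy⟩ : ∃ y, y = Real.log (q m) := ⟨_, rfl⟩
  rw [← hy] at hlow
  have hyY : Y ≤ y := ((le_max_left _ _).trans (le_max_left _ _)).trans (hmax.trans hlow.le)
  have hyC : C₀⁻¹ ≤ y := ((le_max_right _ _).trans (le_max_left _ _)).trans (hmax.trans hlow.le)
  have hy1 : 1 ≤ y := (le_max_right _ _).trans (hmax.trans hlow.le)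
  have hm0 : (0 : ℝ) < m := by
    have : 0 < m := by omega
    exact_mod_cast this
  have hlogm : Real.log m ≤ 2 * B * Real.log y := by
    have h1 : (m : ℝ) ^ ((1 : ℝ) / B) ≤ y ^ 2 := by
      calc (m : ℝ) ^ ((1 : ℝ) / B) = C₀⁻¹ * (C₀ * (m : ℝ) ^ ((1 : ℝ) / B)) := by field_simp
        _ ≤ y * y := by gcongr
        _ = y ^ 2 := by ring
    have h2 := Real.log_le_log (by positivity) h1
    rw [Real.log_rpow hm0, Real.log_pow, one_div, inv_mul_le_iff₀ hB0] at h2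
    push_cast at h2
    linarith
  obtain ⟨g, hg, s', t', hcop, hs', ht'⟩ : ∃ g, 0 < g ∧ ∃ s' t' : ℕ, s'.Coprime t' ∧
      s = s' * g ∧ t = t' * g :=
    ⟨_, Nat.gcd_pos_of_pos_left _ hs, Nat.exists_coprime s t⟩
  have hs'0 : 0 < s' := Nat.pos_of_ne_zero fun h0 => by simp [h0] at hs'; omega
  have ht'0 : 0 < t' := Nat.pos_of_ne_zero fun h0 => by simp [h0] at ht'; omega
  have hfactor : |(s : ℝ) * q m - t * q n| = g * |(s' : ℝ) * q m - t' * q n| := by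
    rw [← abs_of_nonneg (Nat.cast_nonneg (α := ℝ) g), ← abs_mul, hs', ht']
    push_cast
    ring_nf
  have hlt := hY (q m) (q n) s' t' hqm hmono hs'0 ht'0 hcop (hprimes m (by omega)).1
    (hprimes n (by omega)).1
    (fun p hp => (hprimes m (by omega)).2 p (Nat.prime_of_mem_primeFactors hp)
      (Nat.dvd_of_mem_primeFactors hp))
    (fun p hp => (hprimes n (by omega)).2 p (Nat.prime_of_mem_primeFactors hp)
      (Nat.dvd_of_mem_primeFactors hp))
    (by
      have h1 : s' ≤ m ^ 12 := (hs' ▸ Nat.le_mul_of_pos_right s' hg : s' ≤ s).trans hsm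
      have h2 : (s' : ℝ) ≤ (m : ℝ) ^ 12 := by exact_mod_cast h1
      have h3 := Real.log_le_log (by exact_mod_cast hs'0) h2
      rw [Real.log_pow] at h3
      push_cast at h3
      rw [← hy]
      linarith)
    (by
      intro heq
      have h1 : (s' : ℝ) * q m = t' * q n := by exact_mod_cast heq
      rw [hfactor, h1] at hone
      norm_num at hone)
    (lt_of_le_of_lt (by
      rw [hfactor]
      exact le_mul_of_one_le_left (abs_nonneg _) (by exact_mod_cast hg)) hclose)
  rw [← hy] at hlt
  linarith
end

section
/- Let S = {p_1, …, p_k} be a set of k distinct primes and let (q_n)_{n≥1} be an increasing sequence of positive integers each of which lies in A_S. Then there exists a constant C, depending only on k, such that for every integer n ≥ 2: ∑_{m=1}^{n−1} gcd(q_m, q_n)/q_n ≤ C. -/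
/-- The completely multiplicative function `n ↦ n ^ (-1/2)`. -/
noncomputable def invSqrtHom : ℕ →* ℝ where
  toFun n := (Real.sqrt n)⁻¹
  map_one' := by simp
  map_mul' a b := by simp [mul_comm]

lemma invSqrtHom_apply (n : ℕ) : invSqrtHom n = (Real.sqrt n)⁻¹ := rfl

lemma invSqrtHom_nonneg (n : ℕ) : 0 ≤ invSqrtHom n := by
  rw [invSqrtHom_apply]; positivity

lemma invSqrtHom_le_of_two_le {n : ℕ} (hn : 2 ≤ n) : invSqrtHom n ≤ (Real.sqrt 2)⁻¹ := by
  rw [invSqrtHom_apply]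
  have : (2 : ℝ) ≤ n := by exact_mod_cast hn
  gcongr

lemma inv_sqrt_two_lt_one : (Real.sqrt 2)⁻¹ < 1 :=
  inv_lt_one_of_one_lt₀ (Real.lt_sqrt_of_sq_lt (by norm_num))

/-- If `e ≤ d` then `1 / d ≤ d ^ (-1/2) * e ^ (-1/2)`. -/
lemma inv_le_invSqrtHom_mul {d e : ℕ} (he : 0 < e) (hed : e ≤ d) :
    (d : ℝ)⁻¹ ≤ invSqrtHom d * invSqrtHom e := by
  have he' : (0 : ℝ) < e := by exact_mod_cast he
  have hed' : (e : ℝ) ≤ d := by exact_mod_cast hed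
  have hd' : (0 : ℝ) < d := he'.trans_le hed'
  rw [invSqrtHom_apply, invSqrtHom_apply]
  calc (d : ℝ)⁻¹ = (√d)⁻¹ * (√d)⁻¹ := by
        rw [← mul_inv, Real.mul_self_sqrt hd'.le]
    _ ≤ (√d)⁻¹ * (√e)⁻¹ := by gcongr

/-- The series of `n ^ (-1/2)` over the integers with all prime factors in `S` converges, with a
sum bounded in terms of the number of elements of `S`. -/
lemma exists_hasSum_invSqrtHom_factoredNumbers {S : Finset ℕ} (hS : ∀ p ∈ S, p.Prime) :
    ∃ s : ℝ, HasSum (fun m : Nat.factoredNumbers S ↦ invSqrtHom m) s ∧ 0 ≤ s ∧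
      s ≤ ((1 - (Real.sqrt 2)⁻¹)⁻¹) ^ S.card := by
  have hlt {p : ℕ} (hp : p.Prime) : invSqrtHom p < 1 :=
    (invSqrtHom_le_of_two_le hp.two_le).trans_lt inv_sqrt_two_lt_one
  have h := (EulerProduct.summable_and_hasSum_factoredNumbers_prod_filter_prime_geometric
    (f := invSqrtHom)
    (fun {p} hp ↦ by rw [Real.norm_of_nonneg (invSqrtHom_nonneg p)]; exact hlt hp) S).2
  rw [Finset.filter_true_of_mem hS] at h
  have hnonneg : ∀ p ∈ S, 0 ≤ (1 - invSqrtHom p)⁻¹ := fun p hp ↦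
    inv_nonneg.2 (sub_nonneg.2 (hlt (hS p hp)).le)
  refine ⟨∏ p ∈ S, (1 - invSqrtHom p)⁻¹, h, Finset.prod_nonneg hnonneg, ?_⟩
  rw [← Finset.prod_const]
  refine Finset.prod_le_prod hnonneg fun p hp ↦ ?_
  exact inv_anti₀ (sub_pos.2 inv_sqrt_two_lt_one)
    (sub_le_sub_left (invSqrtHom_le_of_two_le (hS p hp).two_le) 1)

/-- The reduced numerator and denominator of `a / N` determine `a`. -/
lemma eq_of_div_gcd_eq {a b N : ℕ} (hN : 0 < N) (hd : N / a.gcd N = N / b.gcd N)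
    (he : a / a.gcd N = b / b.gcd N) : a = b := by
  have hg : a.gcd N = b.gcd N := by
    have h₁ := Nat.div_mul_cancel (Nat.gcd_dvd_right a N)
    have h₂ := Nat.div_mul_cancel (Nat.gcd_dvd_right b N)
    rw [← hd] at h₂
    refine Nat.eq_of_mul_eq_mul_left (Nat.div_pos (Nat.gcd_le_right a hN)
      (Nat.gcd_pos_of_pos_right a hN)) (h₁.trans h₂.symm)
  rw [← Nat.div_mul_cancel (Nat.gcd_dvd_left a N), he, hg,
    Nat.div_mul_cancel (Nat.gcd_dvd_left b N)]

/-- If `A` is a finite set of integers in `[1, N]` and all prime factors of `N` and of the elements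
of `A` lie in `S`, then `∑ a ∈ A, gcd(a, N) / N` is bounded in terms of `S.card`. -/
lemma sum_gcd_div_le {S : Finset ℕ} (hS : ∀ p ∈ S, p.Prime) {N : ℕ}
    (hN : N ∈ Nat.factoredNumbers S) {A : Finset ℕ}
    (hA : ∀ a ∈ A, a ∈ Nat.factoredNumbers S ∧ a ≤ N) :
    ∑ a ∈ A, (Nat.gcd a N : ℝ) / N ≤ (((1 - (Real.sqrt 2)⁻¹)⁻¹) ^ S.card) ^ 2 := by
  obtain ⟨s, hs, hs0, hsC⟩ := exists_hasSum_invSqrtHom_factoredNumbers hS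
  have hN0 : 0 < N := Nat.pos_of_ne_zero (Nat.ne_zero_of_mem_factoredNumbers hN)
  have hmem {x g : ℕ} (hx : x ∈ Nat.factoredNumbers S) (hg : g ∣ x) :
      x / g ∈ Nat.factoredNumbers S :=
    Nat.mem_factoredNumbers_of_dvd hx (Nat.div_dvd_of_dvd hg)
  let φ : A → Nat.factoredNumbers S × Nat.factoredNumbers S := fun a ↦
    (⟨N / Nat.gcd a N, hmem hN (Nat.gcd_dvd_right a N)⟩,
      ⟨a / Nat.gcd a N, hmem (hA a a.2).1 (Nat.gcd_dvd_left a N)⟩)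
  have hφ : Function.Injective φ := by
    intro a b hab
    simp only [φ, Prod.mk.injEq, Subtype.mk.injEq] at hab
    exact Subtype.ext (eq_of_div_gcd_eq hN0 hab.1 hab.2)
  have hprod := hs.mul hs (hs.summable.mul_of_nonneg hs.summable
    (fun m ↦ invSqrtHom_nonneg m) (fun m ↦ invSqrtHom_nonneg m))
  calc ∑ a ∈ A, (Nat.gcd a N : ℝ) / N
      = ∑ a : A, (Nat.gcd a N : ℝ) / N := (Finset.sum_coe_sort A _).symm
    _ ≤ ∑ a : A, invSqrtHom (φ a).1 * invSqrtHom (φ a).2 := by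
        refine Finset.sum_le_sum fun a _ ↦ ?_
        have ha0 := Nat.pos_of_ne_zero (Nat.ne_zero_of_mem_factoredNumbers (hA a a.2).1)
        have hg := Nat.gcd_pos_of_pos_right a.1 hN0
        rw [← inv_div, ← Nat.cast_div (Nat.gcd_dvd_right _ _) (by exact_mod_cast hg.ne')]
        exact inv_le_invSqrtHom_mul (Nat.div_pos (Nat.gcd_le_left N ha0) hg)
          (Nat.div_le_div_right (hA a a.2).2)
    _ = ∑ x ∈ Finset.univ.map ⟨φ, hφ⟩, invSqrtHom x.1 * invSqrtHom x.2 := by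
        rw [Finset.sum_map]; rfl
    _ ≤ s * s := sum_le_hasSum _
        (fun x _ ↦ mul_nonneg (invSqrtHom_nonneg _) (invSqrtHom_nonneg _)) hprod
    _ ≤ _ := by rw [← sq]; gcongr

theorem statement13 (k : ℕ) (hk : 1 ≤ k) :
    ∃ C : ℝ, ∀ (S : Finset ℕ), (∀ p ∈ S, p.Prime) → S.card = k →
      ∀ q : ℕ → ℕ, (∀ n, 1 ≤ n → 0 < q n) → (∀ n, 1 ≤ n → q n < q (n + 1)) →
        (∀ n, 1 ≤ n → ∀ p : ℕ, p.Prime → p ∣ q n → p ∈ S) →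
        ∀ n : ℕ, 2 ≤ n →
          ∑ m ∈ Finset.Ico 1 n, (Nat.gcd (q m) (q n) : ℝ) / (q n : ℝ) ≤ C := by
  refine ⟨(((1 - (Real.sqrt 2)⁻¹)⁻¹) ^ k) ^ 2, ?_⟩
  rintro S hS rfl q hpos hlt hfac n hn
  have hmono : StrictMonoOn q (Set.Ici 1) :=
    strictMonoOn_of_lt_add_one Set.ordConnected_Ici fun m _ hm _ ↦ hlt m hm
  have hmem (m : ℕ) (hm : 1 ≤ m) : q m ∈ Nat.factoredNumbers S :=
    Nat.mem_factoredNumbers'.2 fun p hp hpm ↦ hfac m hm p hp hpm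
  have hinj : Set.InjOn q (Finset.Ico 1 n) :=
    hmono.injOn.mono fun m hm ↦ (Finset.mem_Ico.1 hm).1
  rw [← Finset.sum_image (f := fun a : ℕ ↦ (Nat.gcd a (q n) : ℝ) / (q n : ℝ)) hinj]
  refine sum_gcd_div_le hS (hmem n (by omega)) fun a ha ↦ ?_
  obtain ⟨m, hm, rfl⟩ := Finset.mem_image.1 ha
  obtain ⟨hm1, hmn⟩ := Finset.mem_Ico.1 hm
  exact ⟨hmem m hm1, (hmono hm1 (hm1.trans hmn.le) hmn).le⟩
end

section
/- For every s ∈ ℝ there exists a constant C_s > 0 such that for every r ∈ ℕ and all pairwise distinct integers n_1, …, n_r with n_i ≥ 2 for each i: ∑_{t_1=1}^∞ ⋯ ∑_{t_r=1}^∞ (t_1 log₂ n_1 + ⋯ + t_r log₂ n_r)^s / (n_1^{t_1} ⋯ n_r^{t_r}) < C_s. -/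
/-- On `[1, ∞)` every real power is dominated by a multiple of `y ↦ exp (c * y)`. -/
theorem exists_rpow_le_mul_exp (s : ℝ) {c : ℝ} (hc : 0 < c) :
    ∃ K : ℝ, 0 < K ∧ ∀ y : ℝ, 1 ≤ y → y ^ s ≤ K * Real.exp (c * y) := by
  obtain ⟨m, hm⟩ := exists_nat_ge s
  refine ⟨(m.factorial : ℝ) / c ^ m, by positivity, fun y hy => ?_⟩
  have hexp := Real.pow_div_factorial_le_exp (c * y) (by positivity) m
  have hfact : (0 : ℝ) < m.factorial := by positivity
  rw [div_le_iff₀ hfact, mul_pow] at hexp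
  calc y ^ s ≤ y ^ (m : ℝ) := Real.rpow_le_rpow_of_exponent_le hy hm
    _ = y ^ m := Real.rpow_natCast y m
    _ ≤ (m.factorial : ℝ) / c ^ m * Real.exp (c * y) := by
        rw [div_mul_eq_mul_div, le_div_iff₀ (by positivity)]
        linarith

/-- A product of distinct factors `1 / (√k - 1)` with `k ≥ 2` is at most `6`, since only
`k = 2` and `k = 3` give factors exceeding `1`. -/
theorem prod_inv_sqrt_sub_one_le {ι : Type*} [Fintype ι] (n : ι → ℕ)
    (hinj : Function.Injective n) (hn : ∀ i, 2 ≤ n i) :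
    ∏ i, (1 / (√(n i : ℝ) - 1)) ≤ 6 := by
  classical
  let g : ℕ → ℕ := fun k => if k = 2 then 3 else if k = 3 then 2 else 1
  have hfactor : ∀ k : ℕ, 2 ≤ k → 0 < √(k : ℝ) - 1 ∧ 1 / (√(k : ℝ) - 1) ≤ g k := by
    intro k hk
    have hpos : 0 < √(k : ℝ) - 1 := by
      have : (1 : ℝ) < √(k : ℝ) := Real.lt_sqrt_of_sq_lt (by norm_num; omega)
      linarith
    refine ⟨hpos, ?_⟩
    rw [div_le_iff₀ hpos]
    rcases (by omega : k = 2 ∨ k = 3 ∨ 4 ≤ k) with rfl | rfl | h4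
    · have : (4 / 3 : ℝ) ≤ √((2 : ℕ) : ℝ) := Real.le_sqrt_of_sq_le (by norm_num)
      simp only [g, if_true]
      push_cast at this ⊢
      linarith
    · have : (3 / 2 : ℝ) ≤ √((3 : ℕ) : ℝ) := Real.le_sqrt_of_sq_le (by norm_num)
      norm_num [g] at this ⊢
      linarith
    · have h4' : (4 : ℝ) ≤ k := by exact_mod_cast h4
      have : (2 : ℝ) ≤ √(k : ℝ) := Real.le_sqrt_of_sq_le (by linarith)
      have hg : g k = 1 := by simp only [g]; rw [if_neg (by omega), if_neg (by omega)]
      rw [hg]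
      push_cast
      linarith
  have hnat : ∏ i, g (n i) ≤ 6 := by
    have himage : ∏ i, g (n i) = ∏ k ∈ Finset.univ.image n, g k :=
      (Finset.prod_image fun i _ j _ h => hinj h).symm
    have hdvd : ∏ k ∈ Finset.univ.image n, g k ∣ ∏ k ∈ Finset.univ.image n ∪ {2, 3}, g k :=
      Finset.prod_dvd_prod_of_subset _ _ _ Finset.subset_union_left
    have hsmall : ∏ k ∈ Finset.univ.image n ∪ {2, 3}, g k = 6 := by
      rw [← Finset.prod_subset (s₁ := {2, 3}) Finset.subset_union_right]
      · simp [g]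
      · intro k _ hk
        simp only [Finset.mem_insert, Finset.mem_singleton, not_or] at hk
        simp [g, hk.1, hk.2]
    rw [himage]
    exact Nat.le_of_dvd (by norm_num) (hsmall ▸ hdvd)
  calc ∏ i, (1 / (√(n i : ℝ) - 1)) ≤ ∏ i, (g (n i) : ℝ) :=
        Finset.prod_le_prod (fun i _ => (one_div_pos.2 (hfactor _ (hn i)).1).le)
          fun i _ => (hfactor _ (hn i)).2
    _ ≤ 6 := by exact_mod_cast hnat

/-- Partial sums of the geometric series `∑ x⁻ᵏ`, `k ≥ 1`, are at most its value. -/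
theorem sum_range_inv_pow_succ_le {x : ℝ} (hx : 1 < x) (N : ℕ) :
    ∑ k ∈ Finset.range N, (x ^ (k + 1))⁻¹ ≤ 1 / (x - 1) := by
  have hx0 : 0 < x := by linarith
  have hx1 : 0 < x - 1 := by linarith
  have hsum : ∑ k ∈ Finset.range N, (x ^ (k + 1))⁻¹ = (1 - (x ^ N)⁻¹) / (x - 1) := by
    induction N with
    | zero => simp
    | succ N ih =>
      rw [Finset.sum_range_succ, ih]
      field_simp
      ring
  rw [hsum]
  gcongr
  have : 0 < (x ^ N)⁻¹ := by positivity
  linarith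

/-- A finite sum over functions of products of nonnegative terms is at most the product of
bounds for the partial sums. -/
theorem sum_prod_le_prod_of_sum_range_le {ι : Type*} [Fintype ι] (f : ι → ℕ → ℝ) (B : ι → ℝ)
    (hf : ∀ i k, 0 ≤ f i k) (hB : ∀ i N, ∑ k ∈ Finset.range N, f i k ≤ B i)
    (u : Finset (ι → ℕ)) : ∑ t ∈ u, ∏ i, f i (t i) ≤ ∏ i, B i := by
  classical
  let N := (u.sup fun t => Finset.univ.sup t) + 1
  have hu : u ⊆ Fintype.piFinset fun _ : ι => Finset.range N := by
    intro t ht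
    rw [Fintype.mem_piFinset]
    intro i
    have hi : t i ≤ Finset.univ.sup t := Finset.le_sup (Finset.mem_univ i)
    have ht' : Finset.univ.sup t ≤ u.sup fun t => Finset.univ.sup t :=
      Finset.le_sup (f := fun t : ι → ℕ => Finset.univ.sup t) ht
    rw [Finset.mem_range]
    omega
  calc ∑ t ∈ u, ∏ i, f i (t i)
      ≤ ∑ t ∈ Fintype.piFinset fun _ : ι => Finset.range N, ∏ i, f i (t i) :=
        Finset.sum_le_sum_of_subset_of_nonneg hu fun t _ _ =>
          Finset.prod_nonneg fun i _ => hf i (t i)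
    _ = ∏ i, ∑ k ∈ Finset.range N, f i k := (Finset.prod_univ_sum _ _).symm
    _ ≤ ∏ i, B i := Finset.prod_le_prod
        (fun i _ => Finset.sum_nonneg fun k _ => hf i k) fun i _ => hB i N

theorem statement14 (s : ℝ) :
    ∃ C : ℝ, 0 < C ∧ ∀ r : ℕ, 1 ≤ r → ∀ n : Fin r → ℕ,
      Function.Injective n → (∀ i, 2 ≤ n i) →
      Summable (fun t : Fin r → ℕ =>
        (∑ i, ((t i : ℝ) + 1) * Real.logb 2 (n i)) ^ s /
          ∏ i, (n i : ℝ) ^ (t i + 1)) ∧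
      ∑' t : Fin r → ℕ,
          (∑ i, ((t i : ℝ) + 1) * Real.logb 2 (n i)) ^ s /
            ∏ i, (n i : ℝ) ^ (t i + 1) < C := by
  have hlog2 : 0 < Real.log 2 := Real.log_pos (by norm_num)
  obtain ⟨K, hK, hbound⟩ := exists_rpow_le_mul_exp s (half_pos hlog2)
  refine ⟨K * 6 + 1, by positivity, fun r hr n hinj hn => ?_⟩
  have hn' : ∀ i, (2 : ℝ) ≤ n i := fun i => by exact_mod_cast hn i
  have hn0 : ∀ i, (0 : ℝ) < n i := fun i => by linarith [hn' i]
  have hlogb : ∀ i, 1 ≤ Real.logb 2 (n i) := fun i => by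
    rw [Real.le_logb_iff_rpow_le (by norm_num) (hn0 i), Real.rpow_one]
    exact hn' i
  have hterm : ∀ (t : Fin r → ℕ) i, 1 ≤ ((t i : ℝ) + 1) * Real.logb 2 (n i) := fun t i =>
    one_le_mul_of_one_le_of_one_le (by linarith [(t i).cast_nonneg (α := ℝ)]) (hlogb i)
  have hweight : ∀ t : Fin r → ℕ, 1 ≤ ∑ i, ((t i : ℝ) + 1) * Real.logb 2 (n i) := fun t =>
    (hterm t ⟨0, hr⟩).trans <| Finset.single_le_sum
      (f := fun i => ((t i : ℝ) + 1) * Real.logb 2 (n i))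
      (fun i _ => zero_le_one.trans (hterm t i)) (Finset.mem_univ _)
  have hexp : ∀ t : Fin r → ℕ,
      Real.exp (Real.log 2 / 2 * ∑ i, ((t i : ℝ) + 1) * Real.logb 2 (n i)) =
        ∏ i, √(n i : ℝ) ^ (t i + 1) := fun t => by
    rw [Finset.mul_sum, Real.exp_sum]
    refine Finset.prod_congr rfl fun i _ => ?_
    have hsqrt : √(n i : ℝ) = Real.exp (Real.log (n i) / 2) := by
      rw [← Real.log_sqrt (hn0 i).le, Real.exp_log (Real.sqrt_pos.2 (hn0 i))]
    rw [hsqrt, ← Real.exp_nat_mul, Real.logb]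
    congr 1
    push_cast
    field_simp
  have hnonneg : ∀ t : Fin r → ℕ, 0 ≤ (∑ i, ((t i : ℝ) + 1) * Real.logb 2 (n i)) ^ s /
      ∏ i, (n i : ℝ) ^ (t i + 1) := fun t =>
    div_nonneg (Real.rpow_nonneg (zero_le_one.trans (hweight t)) s)
      (Finset.prod_nonneg fun i _ => by positivity)
  have hle : ∀ t : Fin r → ℕ, (∑ i, ((t i : ℝ) + 1) * Real.logb 2 (n i)) ^ s /
      ∏ i, (n i : ℝ) ^ (t i + 1) ≤ K * ∏ i, (√(n i : ℝ) ^ (t i + 1))⁻¹ := fun t => by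
    have hP : 0 < ∏ i, √(n i : ℝ) ^ (t i + 1) :=
      Finset.prod_pos fun i _ => pow_pos (Real.sqrt_pos.2 (hn0 i)) _
    have hsq : ∏ i, (n i : ℝ) ^ (t i + 1) =
        (∏ i, √(n i : ℝ) ^ (t i + 1)) * ∏ i, √(n i : ℝ) ^ (t i + 1) := by
      rw [← Finset.prod_mul_distrib]
      refine Finset.prod_congr rfl fun i _ => ?_
      rw [← mul_pow, Real.mul_self_sqrt (hn0 i).le]
    have hs := hbound _ (hweight t)
    rw [hexp t] at hs
    rw [hsq, Finset.prod_inv_distrib, div_le_iff₀ (mul_pos hP hP)]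
    refine hs.trans_eq ?_
    field_simp
  have hpartial : ∀ u : Finset (Fin r → ℕ),
      ∑ t ∈ u, (∑ i, ((t i : ℝ) + 1) * Real.logb 2 (n i)) ^ s /
        ∏ i, (n i : ℝ) ^ (t i + 1) ≤ K * 6 := fun u => by
    refine (Finset.sum_le_sum fun t _ => hle t).trans ?_
    rw [← Finset.mul_sum]
    refine mul_le_mul_of_nonneg_left ?_ hK.le
    refine (sum_prod_le_prod_of_sum_range_le (fun i k => (√(n i : ℝ) ^ (k + 1))⁻¹)
      (fun i => 1 / (√(n i : ℝ) - 1)) (fun i k => by positivity) (fun i N => ?_) u).trans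
      (prod_inv_sqrt_sub_one_le n hinj hn)
    exact sum_range_inv_pow_succ_le (Real.lt_sqrt_of_sq_lt (by linarith [hn' i])) N
  exact ⟨summable_of_sum_le hnonneg hpartial,
    (Real.tsum_le_of_sum_le hnonneg hpartial).trans_lt (lt_add_one _)⟩
end

section
/- Let S = {p_1, …, p_k} be a set of k distinct primes, let q ∈ A_S, and let K ≥ 1 be a real number. Then ∑_{d} d/q ≤ ((log₂ K + 2)^{k−1}/K) · ∏_{i=1}^k p_i/(p_i − 1), where the sum is over all positive divisors d of q with d·K < q. -/
/-- The sum of the reciprocals of the divisors of `m` that exceed `K`. -/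
noncomputable def recipDivisorTail (m : ℕ) (K : ℝ) : ℝ :=
  ∑ e ∈ m.divisors, if K < (e : ℝ) then (e : ℝ)⁻¹ else 0

lemma recipDivisorTail_le_sum (m : ℕ) (K : ℝ) :
    recipDivisorTail m K ≤ ∑ e ∈ m.divisors, (e : ℝ)⁻¹ := by
  refine Finset.sum_le_sum fun e _ => ?_
  split_ifs
  · exact le_rfl
  · positivity

lemma sum_divisors_prime_pow_mul {p m : ℕ} (n : ℕ) (hp : p.Prime) (hpm : ¬ p ∣ m) (f : ℕ → ℝ) :
    ∑ e ∈ (p ^ n * m).divisors, f e =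
      ∑ a ∈ Finset.range (n + 1), ∑ e ∈ m.divisors, f (p ^ a * e) := by
  have hc : (p ^ n).Coprime m := ((Nat.Prime.coprime_iff_not_dvd hp).2 hpm).pow_left n
  rw [Nat.divisors_mul, Finset.mul_def, Finset.sum_image hc.mul_injOn_divisors,
    Finset.sum_product, Nat.sum_divisors_prime_pow hp]

lemma recipDivisorTail_prime_pow_mul {p m : ℕ} (n : ℕ) (hp : p.Prime) (hpm : ¬ p ∣ m) (K : ℝ) :
    recipDivisorTail (p ^ n * m) K =
      ∑ a ∈ Finset.range (n + 1), ((p : ℝ)⁻¹) ^ a * recipDivisorTail m (K / (p : ℝ) ^ a) := by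
  unfold recipDivisorTail
  rw [sum_divisors_prime_pow_mul n hp hpm]
  refine Finset.sum_congr rfl fun a _ => ?_
  rw [Finset.mul_sum]
  refine Finset.sum_congr rfl fun e _ => ?_
  have hpa : (0 : ℝ) < (p : ℝ) ^ a := pow_pos (by exact_mod_cast hp.pos) a
  have hiff : K < ((p ^ a * e : ℕ) : ℝ) ↔ K / (p : ℝ) ^ a < (e : ℝ) := by
    rw [div_lt_iff₀ hpa]
    push_cast
    rw [mul_comm]
  simp only [hiff]
  split_ifs
  · push_cast
    rw [mul_inv, inv_pow]
  · simp

lemma inv_one_sub_inv_eq {p : ℕ} (hp : p.Prime) :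
    (1 - (p : ℝ)⁻¹)⁻¹ = (p : ℝ) / ((p : ℝ) - 1) := by
  have h : (1 : ℝ) < p := by exact_mod_cast hp.one_lt
  have h' : (p : ℝ) - 1 ≠ 0 := by linarith
  have h0 : (p : ℝ) ≠ 0 := by linarith
  field_simp

lemma one_le_div_sub_one {p : ℕ} (hp : p.Prime) : (1 : ℝ) ≤ (p : ℝ) / ((p : ℝ) - 1) := by
  have h : (1 : ℝ) < p := by exact_mod_cast hp.one_lt
  rw [le_div_iff₀ (by linarith)]
  linarith

lemma sum_geometric_tail_le {p : ℕ} (hp : p.Prime) (n : ℕ) {K : ℝ} (hK : 0 < K) :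
    ∑ a ∈ (Finset.range n).filter (fun a => K < (p : ℝ) ^ a), ((p : ℝ)⁻¹) ^ a ≤
      1 / K * ((p : ℝ) / ((p : ℝ) - 1)) := by
  have h1 : (1 : ℝ) < p := by exact_mod_cast hp.one_lt
  have hex : ∃ a : ℕ, K < (p : ℝ) ^ a := pow_unbounded_of_one_lt K h1
  classical
  set b := Nat.find hex
  have hlt : K < (p : ℝ) ^ b := Nat.find_spec hex
  calc _ ≤ ∑ a ∈ Finset.Ico b n, ((p : ℝ)⁻¹) ^ a := by
        refine Finset.sum_le_sum_of_subset_of_nonneg (fun a ha => ?_) fun _ _ _ => by positivity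
        rw [Finset.mem_filter, Finset.mem_range] at ha
        exact Finset.mem_Ico.2 ⟨Nat.find_min' hex ha.2, ha.1⟩
    _ ≤ ((p : ℝ)⁻¹) ^ b / (1 - (p : ℝ)⁻¹) :=
        geom_sum_Ico_le_of_lt_one (by positivity) (inv_lt_one_of_one_lt₀ h1)
    _ = 1 / (p : ℝ) ^ b * ((p : ℝ) / ((p : ℝ) - 1)) := by
        rw [div_eq_mul_inv, inv_one_sub_inv_eq hp, inv_pow, one_div]
    _ ≤ _ := by
        have := one_le_div_sub_one hp
        gcongr

lemma card_pow_le_le_logb {p : ℕ} (hp : p.Prime) (n : ℕ) {K : ℝ} (hK : 1 ≤ K) :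
    (((Finset.range n).filter (fun a => ¬ K < (p : ℝ) ^ a)).card : ℝ) ≤ Real.logb 2 K + 1 := by
  have hL : 0 ≤ Real.logb 2 K := Real.logb_nonneg (by norm_num) hK
  have hsub : (Finset.range n).filter (fun a => ¬ K < (p : ℝ) ^ a) ⊆
      Finset.range (⌊Real.logb 2 K⌋₊ + 1) := by
    intro a ha
    rw [Finset.mem_filter, not_lt] at ha
    rw [Finset.mem_range, Nat.lt_succ_iff, Nat.le_floor_iff hL,
      Real.le_logb_iff_rpow_le (by norm_num) (by linarith), Real.rpow_natCast]
    refine le_trans ?_ ha.2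
    have : (2 : ℝ) ≤ p := by exact_mod_cast hp.two_le
    gcongr
  have hcard := Finset.card_le_card hsub
  rw [Finset.card_range] at hcard
  calc _ ≤ ((⌊Real.logb 2 K⌋₊ + 1 : ℕ) : ℝ) := by exact_mod_cast hcard
    _ ≤ _ := by
      push_cast
      linarith [Nat.floor_le hL]

lemma exists_prime_pow_mul_of_primeFactors_subset_cons {p q : ℕ} {S : Finset ℕ} (hpS : p ∉ S)
    (hp : p.Prime) (hq : q ≠ 0) (hqS : q.primeFactors ⊆ Finset.cons p S hpS) :
    ∃ n m : ℕ, q = p ^ n * m ∧ ¬ p ∣ m ∧ m ≠ 0 ∧ m.primeFactors ⊆ S := by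
  obtain ⟨n, m, hpm, rfl⟩ := Nat.exists_eq_pow_mul_and_not_dvd hq p hp.ne_one
  have hm : m ≠ 0 := right_ne_zero_of_mul hq
  refine ⟨n, m, rfl, hpm, hm, fun r hr => ?_⟩
  have hr' := hqS (Nat.primeFactors_mono (Dvd.intro_left _ rfl) hq hr)
  rcases Finset.mem_cons.1 hr' with rfl | h
  · exact absurd (Nat.dvd_of_mem_primeFactors hr) hpm
  · exact h

lemma sum_inv_divisors_le {S : Finset ℕ} (hS : ∀ p ∈ S, p.Prime) :
    ∀ q : ℕ, q ≠ 0 → q.primeFactors ⊆ S →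
      ∑ e ∈ q.divisors, (e : ℝ)⁻¹ ≤ ∏ p ∈ S, (p : ℝ) / ((p : ℝ) - 1) := by
  induction S using Finset.cons_induction with
  | empty =>
    intro q hq hqS
    have : q = 1 := by
      have := Nat.primeFactors_eq_empty.1 (Finset.subset_empty.1 hqS)
      tauto
    simp [this]
  | cons p S hpS ih =>
    intro q hq hqS
    have hp : p.Prime := hS p (Finset.mem_cons_self p S)
    obtain ⟨n, m, rfl, hpm, hm, hmS⟩ :=
      exists_prime_pow_mul_of_primeFactors_subset_cons hpS hp hq hqS
    have h1 : (1 : ℝ) < p := by exact_mod_cast hp.one_lt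
    have hgeom : ∑ a ∈ Finset.range (n + 1), ((p : ℝ)⁻¹) ^ a ≤ (p : ℝ) / ((p : ℝ) - 1) := by
      have := geom_sum_Ico_le_of_lt_one (m := 0) (n := n + 1) (x := (p : ℝ)⁻¹) (by positivity)
        (inv_lt_one_of_one_lt₀ h1)
      rwa [pow_zero, one_div, inv_one_sub_inv_eq hp, ← Finset.range_eq_Ico] at this
    rw [sum_divisors_prime_pow_mul n hp hpm, Finset.prod_cons]
    have := one_le_div_sub_one hp
    calc _ = (∑ a ∈ Finset.range (n + 1), ((p : ℝ)⁻¹) ^ a) * ∑ e ∈ m.divisors, (e : ℝ)⁻¹ := by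
          rw [Finset.sum_mul_sum]
          simp [mul_comm]
      _ ≤ _ := mul_le_mul hgeom (ih (fun r hr => hS r (Finset.mem_cons_of_mem hr)) m hm hmS)
          (Finset.sum_nonneg fun _ _ => by positivity) (by linarith)

lemma recipDivisorTail_prime_pow_mul_le {p m : ℕ} (n : ℕ) (hp : p.Prime) (hpm : ¬ p ∣ m)
    {K P B : ℝ} (hK : 1 ≤ K) (hP : 0 ≤ P) (hB : 0 ≤ B)
    (hmP : ∑ e ∈ m.divisors, (e : ℝ)⁻¹ ≤ P)
    (hmB : ∀ x : ℝ, 1 ≤ x → x ≤ K → recipDivisorTail m x ≤ B / x * P) :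
    recipDivisorTail (p ^ n * m) K ≤
      (B * (Real.logb 2 K + 1) + 1) / K * ((p : ℝ) / ((p : ℝ) - 1) * P) := by
  have hK0 : 0 < K := by linarith
  have hp1 : (1 : ℝ) < p := by exact_mod_cast hp.one_lt
  have hratio := one_le_div_sub_one hp
  have hL : 0 ≤ Real.logb 2 K := Real.logb_nonneg (by norm_num) hK
  rw [recipDivisorTail_prime_pow_mul n hp hpm,
    ← Finset.sum_filter_add_sum_filter_not _ (fun a => K < (p : ℝ) ^ a)]
  have hlarge : ∑ a ∈ (Finset.range (n + 1)).filter (fun a => K < (p : ℝ) ^ a),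
      ((p : ℝ)⁻¹) ^ a * recipDivisorTail m (K / (p : ℝ) ^ a) ≤
      1 / K * ((p : ℝ) / ((p : ℝ) - 1)) * P := by
    refine le_trans ?_ (mul_le_mul_of_nonneg_right (sum_geometric_tail_le hp (n + 1) hK0) hP)
    rw [Finset.sum_mul]
    exact Finset.sum_le_sum fun a _ =>
      mul_le_mul_of_nonneg_left ((recipDivisorTail_le_sum _ _).trans hmP) (by positivity)
  have hsmall : ∑ a ∈ (Finset.range (n + 1)).filter (fun a => ¬ K < (p : ℝ) ^ a),
      ((p : ℝ)⁻¹) ^ a * recipDivisorTail m (K / (p : ℝ) ^ a) ≤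
      (Real.logb 2 K + 1) * (B / K * P) := by
    refine le_trans (Finset.sum_le_card_nsmul _ _ (B / K * P) fun a ha => ?_) ?_
    · have hpa : (p : ℝ) ^ a ≤ K := not_lt.1 (Finset.mem_filter.1 ha).2
      have hpa1 : 1 ≤ (p : ℝ) ^ a := one_le_pow₀ hp1.le
      have hpa0 : 0 < (p : ℝ) ^ a := by linarith
      calc _ ≤ ((p : ℝ)⁻¹) ^ a * (B / (K / (p : ℝ) ^ a) * P) := by
            have := hmB (K / (p : ℝ) ^ a) ((one_le_div hpa0).2 hpa) (div_le_self hK0.le hpa1)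
            gcongr
        _ = B / K * P := by
            rw [inv_pow]
            field_simp
    · rw [nsmul_eq_mul]
      have := card_pow_le_le_logb hp (n + 1) hK
      gcongr
  calc _ ≤ 1 / K * ((p : ℝ) / ((p : ℝ) - 1)) * P + (Real.logb 2 K + 1) * (B / K * P) * 1 := by
        linarith
    _ ≤ 1 / K * ((p : ℝ) / ((p : ℝ) - 1)) * P +
          (Real.logb 2 K + 1) * (B / K * P) * ((p : ℝ) / ((p : ℝ) - 1)) := by
        gcongr
    _ = _ := by ring

lemma recipDivisorTail_one {K : ℝ} (hK : 1 ≤ K) : recipDivisorTail 1 K = 0 := by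
  simp [recipDivisorTail, not_lt.2 hK]

lemma recipDivisorTail_le {S : Finset ℕ} (hne : S.Nonempty) (hS : ∀ p ∈ S, p.Prime) :
    ∀ q : ℕ, q ≠ 0 → q.primeFactors ⊆ S → ∀ K : ℝ, 1 ≤ K →
      recipDivisorTail q K ≤
        (Real.logb 2 K + 2) ^ (S.card - 1) / K * ∏ p ∈ S, (p : ℝ) / ((p : ℝ) - 1) := by
  induction hne using Finset.Nonempty.cons_induction with
  | singleton p =>
    intro q hq hqS K hK
    have hp : p.Prime := hS p (Finset.mem_singleton_self p)
    obtain ⟨n, m, rfl, hpm, hm, hmS⟩ :=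
      exists_prime_pow_mul_of_primeFactors_subset_cons (Finset.notMem_empty p) hp hq hqS
    have hm1 : m = 1 := by
      have := Nat.primeFactors_eq_empty.1 (Finset.subset_empty.1 hmS)
      tauto
    subst hm1
    simpa using recipDivisorTail_prime_pow_mul_le n hp hpm (P := 1) (B := 0) hK zero_le_one le_rfl
      (by simp) (fun x hx _ => by simp [recipDivisorTail_one hx])
  | cons p S hpS hne ih =>
    intro q hq hqS K hK
    have hp : p.Prime := hS p (Finset.mem_cons_self p S)
    have hS' : ∀ r ∈ S, r.Prime := fun r hr => hS r (Finset.mem_cons_of_mem hr)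
    obtain ⟨n, m, rfl, hpm, hm, hmS⟩ :=
      exists_prime_pow_mul_of_primeFactors_subset_cons hpS hp hq hqS
    have hL : 0 ≤ Real.logb 2 K := Real.logb_nonneg (by norm_num) hK
    have hP : 0 ≤ ∏ r ∈ S, (r : ℝ) / ((r : ℝ) - 1) :=
      Finset.prod_nonneg fun r hr => zero_le_one.trans (one_le_div_sub_one (hS' r hr))
    have hratio := one_le_div_sub_one hp
    obtain ⟨c, hc⟩ : ∃ c, S.card = c + 1 := Nat.exists_eq_succ_of_ne_zero hne.card_ne_zero
    have hstep := recipDivisorTail_prime_pow_mul_le n hp hpm (B := (Real.logb 2 K + 2) ^ c)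
      hK hP (by positivity) (sum_inv_divisors_le hS' m hm hmS) fun x hx hxK => by
        have hLx : 0 ≤ Real.logb 2 x := Real.logb_nonneg (by norm_num) hx
        have hlog : Real.logb 2 x ≤ Real.logb 2 K :=
          Real.logb_le_logb_of_le (by norm_num) (by linarith) hxK
        refine (ih hS' m hm hmS x hx).trans ?_
        rw [hc, Nat.add_sub_cancel]
        gcongr
    refine hstep.trans ?_
    rw [Finset.prod_cons, Finset.card_cons, Nat.add_sub_cancel, hc, pow_succ]
    have hone : 1 ≤ (Real.logb 2 K + 2) ^ c := one_le_pow₀ (by linarith)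
    gcongr
    linarith

lemma sum_filter_divisors_div_eq (q : ℕ) (K : ℝ)
    [DecidablePred fun d : ℕ => (d : ℝ) * K < (q : ℝ)] :
    ∑ d ∈ q.divisors.filter (fun d : ℕ => (d : ℝ) * K < (q : ℝ)), (d : ℝ) / (q : ℝ) =
      recipDivisorTail q K := by
  rw [Finset.sum_filter, recipDivisorTail,
    ← Nat.sum_div_divisors q fun e : ℕ => if K < (e : ℝ) then (e : ℝ)⁻¹ else 0]
  refine Finset.sum_congr rfl fun d hd => ?_
  have hdq := Nat.dvd_of_mem_divisors hd
  have hd0 : (0 : ℝ) < d := by exact_mod_cast Nat.pos_of_mem_divisors hd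
  simp only [Nat.cast_div hdq hd0.ne', inv_div, lt_div_iff₀ hd0, mul_comm K]

open scoped Classical in
theorem statement15
    (k : ℕ) (hk : 1 ≤ k)
    (S : Finset ℕ) (hS : ∀ p ∈ S, p.Prime) (hcard : S.card = k)
    (q : ℕ) (hq : 0 < q) (hqS : ∀ p : ℕ, p.Prime → p ∣ q → p ∈ S)
    (K : ℝ) (hK : 1 ≤ K) :
    ∑ d ∈ q.divisors.filter (fun d : ℕ => (d : ℝ) * K < (q : ℝ)), (d : ℝ) / (q : ℝ) ≤
      (Real.logb 2 K + 2) ^ (k - 1) / K * ∏ p ∈ S, (p : ℝ) / ((p : ℝ) - 1) := by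
  subst hcard
  rw [sum_filter_divisors_div_eq]
  exact recipDivisorTail_le (Finset.card_pos.1 hk) hS q hq.ne'
    (fun p hp => hqS p (Nat.prime_of_mem_primeFactors hp) (Nat.dvd_of_mem_primeFactors hp)) K hK
end

section
/- Let (s_n)_{n≥1} be a sequence of real numbers with 0 ≤ s_n ≤ 1 for all n, and set S_n := ∑_{k=1}^n s_k. Let a, b ∈ ℕ with 2 ≤ a < b, let γ > 0, and suppose S_{a−1} ≥ γ. Then (γ/(γ+1))·(log S_b − log S_{a−1}) ≤ ∑_{k=a}^b s_k/S_k ≤ (1/(γ·log((γ+1)/γ)))·(log S_b − log S_{a−1}). -/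
/-- Partial sum `S_n = ∑_{k=1}^n s_k`. -/
noncomputable def partialSum (s : ℕ → ℝ) (n : ℕ) : ℝ := ∑ k ∈ Finset.Icc 1 n, s k

theorem partialSum_succ (s : ℕ → ℝ) (n : ℕ) :
    partialSum s (n + 1) = partialSum s n + s (n + 1) :=
  Finset.sum_Icc_succ_top (by omega) s

theorem partialSum_mono {s : ℕ → ℝ} (hs : ∀ n, 0 ≤ s n) : Monotone (partialSum s) :=
  monotone_nat_of_le_succ fun n => by
    rw [partialSum_succ]
    linarith [hs (n + 1)]

theorem mul_log_add_sub_log_le_div {γ T x : ℝ} (hγ : 0 < γ) (hT : γ ≤ T) (hx : 0 ≤ x)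
    (hx1 : x ≤ 1) : γ / (γ + 1) * (Real.log (T + x) - Real.log T) ≤ x / (T + x) := by
  have hT0 : 0 < T := hγ.trans_le hT
  have hlog : Real.log (T + x) - Real.log T ≤ x / T := by
    rw [← Real.log_div (by positivity) hT0.ne']
    refine (Real.log_le_sub_one_of_pos (by positivity)).trans_eq ?_
    field_simp
    ring
  calc γ / (γ + 1) * (Real.log (T + x) - Real.log T)
      ≤ γ / (γ + 1) * (x / T) := by gcongr
    _ ≤ x / (T + x) := by
      rw [div_mul_div_comm, div_le_div_iff₀ (by positivity) (by positivity)]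
      have hγx : γ * x ≤ T := by nlinarith
      nlinarith [mul_le_mul_of_nonneg_left hγx hx]

theorem div_le_log_add_sub_log {T x : ℝ} (hT : 0 < T) (hx : 0 ≤ x) :
    x / (T + x) ≤ Real.log (T + x) - Real.log T := by
  rw [← Real.log_div (by positivity) hT.ne']
  refine Eq.trans_le ?_ (Real.one_sub_inv_le_log_of_pos (by positivity))
  field_simp
  ring

theorem one_le_one_div_mul_log {γ : ℝ} (hγ : 0 < γ) :
    1 ≤ 1 / (γ * Real.log ((γ + 1) / γ)) := by
  have hpos : 0 < Real.log ((γ + 1) / γ) :=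
    Real.log_pos ((one_lt_div hγ).2 (by linarith))
  rw [one_le_div (by positivity)]
  calc γ * Real.log ((γ + 1) / γ) ≤ γ * ((γ + 1) / γ - 1) := by
        gcongr
        exact Real.log_le_sub_one_of_pos (by positivity)
    _ = 1 := by
        field_simp
        ring

theorem log_partialSum_sub_log_partialSum {m n : ℕ} (hmn : m ≤ n) (s : ℕ → ℝ) :
    Real.log (partialSum s n) - Real.log (partialSum s m) =
      ∑ k ∈ Finset.Ico m n, (Real.log (partialSum s (k + 1)) - Real.log (partialSum s k)) :=
  (Finset.sum_Ico_sub (fun k => Real.log (partialSum s k)) hmn).symm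

theorem statement18
    (s : ℕ → ℝ) (hs : ∀ n, 0 ≤ s n ∧ s n ≤ 1)
    (a b : ℕ) (ha : 2 ≤ a) (hab : a < b)
    (γ : ℝ) (hγ : 0 < γ) (hSa : γ ≤ partialSum s (a - 1)) :
    γ / (γ + 1) * (Real.log (partialSum s b) - Real.log (partialSum s (a - 1))) ≤
        ∑ k ∈ Finset.Icc a b, s k / partialSum s k ∧
      ∑ k ∈ Finset.Icc a b, s k / partialSum s k ≤
        1 / (γ * Real.log ((γ + 1) / γ)) *
          (Real.log (partialSum s b) - Real.log (partialSum s (a - 1))) := by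
  obtain ⟨m, rfl⟩ : ∃ m, a = m + 1 := ⟨a - 1, by omega⟩
  rw [Nat.add_sub_cancel] at hSa ⊢
  have hsum : ∑ k ∈ Finset.Icc (m + 1) b, s k / partialSum s k =
      ∑ k ∈ Finset.Ico m b, s (k + 1) / partialSum s (k + 1) := by
    rw [Finset.sum_Ico_add' (fun k => s k / partialSum s k) m b 1]
    rfl
  have hS : ∀ k ∈ Finset.Ico m b, γ ≤ partialSum s k := fun k hk =>
    hSa.trans (partialSum_mono (fun n => (hs n).1) (Finset.mem_Ico.1 hk).1)
  rw [hsum, log_partialSum_sub_log_partialSum (by omega)]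
  constructor
  · rw [Finset.mul_sum]
    refine Finset.sum_le_sum fun k hk => ?_
    rw [partialSum_succ]
    exact mul_log_add_sub_log_le_div hγ (hS k hk) (hs _).1 (hs _).2
  · have hterm : ∀ k ∈ Finset.Ico m b, s (k + 1) / partialSum s (k + 1) ≤
        Real.log (partialSum s (k + 1)) - Real.log (partialSum s k) := fun k hk => by
      rw [partialSum_succ]
      exact div_le_log_add_sub_log (hγ.trans_le (hS k hk)) (hs _).1
    have hnonneg : ∀ k ∈ Finset.Ico m b, 0 ≤ s (k + 1) / partialSum s (k + 1) := fun k hk =>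
      div_nonneg (hs _).1 ((hγ.le.trans (hS k hk)).trans
        (partialSum_mono (fun n => (hs n).1) k.le_succ))
    exact (Finset.sum_le_sum hterm).trans (le_mul_of_one_le_left
      (Finset.sum_nonneg fun k hk => (hnonneg k hk).trans (hterm k hk))
      (one_le_one_div_mul_log hγ))
end

section
/- Let (s_n)_{n≥1} be a sequence of real numbers with 0 ≤ s_n ≤ 1 for all n, set S_n := ∑_{k=1}^n s_k, let γ > 0, and set S̃_n := max(γ, S_n). Then ∑_{k=1}^∞ s_k/S̃_k² < (2γ+1)/γ². -/
/-- An antiderivative of `x ↦ 1 / max γ x ^ 2`. -/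
noncomputable def invSqPrimitive (γ x : ℝ) : ℝ := min γ x / γ ^ 2 + (1 / γ - 1 / max γ x)

lemma invSqPrimitive_zero {γ : ℝ} (hγ : 0 < γ) : invSqPrimitive γ 0 = 0 := by
  simp [invSqPrimitive, hγ.le]

lemma invSqPrimitive_le {γ : ℝ} (hγ : 0 < γ) (x : ℝ) : invSqPrimitive γ x ≤ 2 / γ := by
  have hmin : min γ x / γ ^ 2 ≤ γ / γ ^ 2 := by gcongr; exact min_le_left _ _
  have hmax : 0 < 1 / max γ x := one_div_pos.2 (lt_max_of_lt_left hγ)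
  have hsum : γ / γ ^ 2 + 1 / γ = 2 / γ := by field_simp; norm_num
  unfold invSqPrimitive
  linarith

lemma sub_div_max_sq_le_invSqPrimitive_sub {γ x y : ℝ} (hγ : 0 < γ) (hxy : x ≤ y) :
    (y - x) / max γ y ^ 2 ≤ invSqPrimitive γ y - invSqPrimitive γ x := by
  have hx : 0 < max γ x := lt_max_of_lt_left hγ
  have hy : 0 < max γ y := lt_max_of_lt_left hγ
  have hmax : max γ x ≤ max γ y := max_le_max_left γ hxy
  have hmin : min γ x ≤ min γ y := min_le_min_left γ hxy
  have hsplit : y - x = (min γ y - min γ x) + (max γ y - max γ x) := by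
    linarith [min_add_max γ x, min_add_max γ y]
  have hlow : (min γ y - min γ x) / max γ y ^ 2 ≤ (min γ y - min γ x) / γ ^ 2 := by
    have : 0 ≤ min γ y - min γ x := sub_nonneg.2 hmin
    gcongr
    exact le_max_left _ _
  have hhigh : (max γ y - max γ x) / max γ y ^ 2 ≤ 1 / max γ x - 1 / max γ y := by
    rw [div_sub_div _ _ hx.ne' hy.ne', one_mul, mul_one, sq]
    have : 0 ≤ max γ y - max γ x := sub_nonneg.2 hmax
    gcongr
  rw [hsplit, add_div]
  unfold invSqPrimitive
  linarith [sub_div (min γ y) (min γ x) (γ ^ 2)]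

lemma sum_div_max_sq_le_invSqPrimitive {s : ℕ → ℝ} (hs : ∀ n, 0 ≤ s n) {γ : ℝ} (hγ : 0 < γ)
    (n : ℕ) :
    ∑ k ∈ Finset.range n, s (k + 1) / max γ (partialSum s (k + 1)) ^ 2 ≤
      invSqPrimitive γ (partialSum s n) := by
  induction n with
  | zero => simp [partialSum, invSqPrimitive_zero hγ]
  | succ n ih =>
    have hstep : partialSum s (n + 1) = partialSum s n + s (n + 1) :=
      Finset.sum_Icc_succ_top (by omega) s
    have hle := sub_div_max_sq_le_invSqPrimitive_sub hγ
      (show partialSum s n ≤ partialSum s (n + 1) by linarith [hs (n + 1)])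
    rw [show partialSum s (n + 1) - partialSum s n = s (n + 1) by linarith] at hle
    rw [Finset.sum_range_succ]
    linarith

theorem statement19
    (s : ℕ → ℝ) (hs : ∀ n, 0 ≤ s n ∧ s n ≤ 1)
    (γ : ℝ) (hγ : 0 < γ) :
    Summable (fun k : ℕ => s (k + 1) / max γ (partialSum s (k + 1)) ^ 2) ∧
      ∑' k : ℕ, s (k + 1) / max γ (partialSum s (k + 1)) ^ 2 <
        (2 * γ + 1) / γ ^ 2 := by
  have hbound (n : ℕ) :
      ∑ k ∈ Finset.range n, s (k + 1) / max γ (partialSum s (k + 1)) ^ 2 ≤ 2 / γ :=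
    (sum_div_max_sq_le_invSqPrimitive (fun k => (hs k).1) hγ n).trans (invSqPrimitive_le hγ _)
  have hnonneg (k : ℕ) : 0 ≤ s (k + 1) / max γ (partialSum s (k + 1)) ^ 2 :=
    div_nonneg (hs (k + 1)).1 (sq_nonneg _)
  refine ⟨summable_of_sum_range_le hnonneg hbound,
    (Real.tsum_le_of_sum_range_le hnonneg hbound).trans_lt ?_⟩
  rw [div_lt_div_iff₀ hγ (by positivity)]
  nlinarith
end
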